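/- (Basic Matching Theorem) Let W be a finitely generated Coxeter group with two sets of Coxeter generators S and S', and let B be a base of (W,S). Then there is a unique irreducible subset B' of S' such that [⟨B⟩,⟨B⟩] is conjugate in W to [⟨B'⟩,⟨B'⟩]. Moreover: (1) B' is a base of (W,S'); (2) if |⟨B⟩| = |⟨B'⟩|, then (⟨B⟩,B) and (⟨B'⟩,B') have the same type and there is an isomorphism φ: ⟨B⟩ → ⟨B'⟩ whose restriction to [⟨B⟩,⟨B⟩] is conjugation by an element of W; (3) if |⟨B⟩| < |⟨B'⟩|, then either B has type B_{2q+1} and B' has type C_{2q+1} for some q ≥ 1, or B has type D_2(2q+1) and B' has type D_2(4q+2) for some q ≥ 1, and there is a monomorphism φ: ⟨B⟩ → ⟨B'⟩ whose restriction to [⟨B⟩,⟨B⟩] is conjugation by an element of W. -/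

import Mathlib

/-!
The proof has a geometric part, which produces the matching base, and a combinatorial part, which compares
the types.

The geometric representation of a Coxeter group is faithful, and every root is positive or negative
(`rep_rt_nonneg`, `faithful`). Every finite subgroup is conjugate to a subgroup of a finite visual subgroup
(`tits`), so that a maximal finite visual subgroup of one system is conjugate to a visual subgroup of the
other (`match_maxSph`). A base lies in a maximal subset generating a finite subgroup and is a connected
component of it. This leaves the case of a finite group with two Coxeter systems. There the second system
splits the group into commuting factors, one component and the rest; for each component `C` of the first
system, one of the two factors acts by `±1` on the simple roots of `C` (`scal_dichotomy`, which uses positive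
definiteness of the form). Hence `C` picks out a component `C'` of the second system with the property that
the rest of the second system acts by `±1`, and it follows that the commutator subgroups of `C` and `C'`
are equal (`finMatch`). The centers of the two visual subgroups have order at most two, so the retraction
from one to the other leads to an isomorphism if the orders agree, and is an embedding of index two, whose
image misses a central element, if the first order is smaller.

If the commutator subgroup of a base `B` is conjugated into the visual subgroup of a subset `C`, then
`B ⊆ C` (`supp_subset`, `Base.subset_of_conj`). This yields that the subset which matches a base is itself
a base (`exists_base_matched`) and is unique (`Base.unique`).

The types are compared through the classification of positive definite diagrams (`classify`, by test vectors
on a maximal path) and through the orders of the groups, which are found by counting the orbit of a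
fundamental covector (`Orb.card`). Rank two is distinguished from higher rank by commutativity of the
commutator subgroup. In higher rank the order determines the type, except for `A₄` and `H₃`, which both have
order `120` but of which only the second has a nontrivial center (`type_eq`). If one order is twice the
other, the types are `Dₙ` and `Cₙ` in Bourbaki's naming of the first, with `D₃ = A₃`, or both are dihedral;
since every subgroup of index two in the group of type `Cₙ` with `n` even contains `-1`, and similarly for
dihedral groups, the existence of a missed central element gives the conditions on parity (`type_lt`).
-/

variable {W : Type*} [Group W]

/-- `S` is a set of Coxeter generators of the group `W`, with Coxeter matrix given by the
restriction of `m` to `S × S` (the value `0` of `m` encodes `∞`). -/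
def IsCoxeterSystemOn (m : W → W → ℕ) (S : Set W) : Prop :=
  ∃ (cm : CoxeterMatrix S) (cs : CoxeterSystem cm W),
    (∀ s : S, cs.simple s = (s : W)) ∧ ∀ s t : S, cm.M s t = m s t

/-- The subset `B` is irreducible: its Coxeter diagram (edges between distinct `x, y` with
`m x y > 2`, including `m x y = ∞`, i.e. `m x y = 0`) is nonempty and connected. -/
def IsIrreducibleOn (m : W → W → ℕ) (B : Set W) : Prop :=
  B.Nonempty ∧ ∀ u ∈ B, ∀ v ∈ B,
    Relation.ReflTransGen
      (fun x y => x ∈ B ∧ y ∈ B ∧ x ≠ y ∧ (m x y = 0 ∨ 2 < m x y)) u v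

/-- `B` is a base of the Coxeter system `(W, S)`: the visual subgroup `⟨B⟩` is a noncyclic,
maximal, finite, irreducible visual subgroup. -/
def IsBase (m : W → W → ℕ) (S B : Set W) : Prop :=
  B ⊆ S ∧ IsIrreducibleOn m B ∧ (Subgroup.closure B : Set W).Finite ∧
    ¬ IsCyclic ↥(Subgroup.closure B) ∧
    ∀ B' : Set W, B' ⊆ S → B ⊆ B' → IsIrreducibleOn m B' →
      (Subgroup.closure B' : Set W).Finite → B' = B

/-- The base `B` matches the base `B'`: the commutator subgroups of the visual subgroups
`⟨B⟩` and `⟨B'⟩` are conjugate in `W`. -/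
def Matches (B B' : Set W) : Prop :=
  ∃ w : W,
    Subgroup.map ((MulAut.conj w).toMonoidHom)
        (⁅Subgroup.closure B, Subgroup.closure B⁆ : Subgroup W)
      = ⁅Subgroup.closure B', Subgroup.closure B'⁆

/-- `(⟨B⟩, B)` has the isomorphism type of the Coxeter system of the Coxeter matrix `std`. -/
def HasType (m : W → W → ℕ) (B : Set W) {n : ℕ} (std : Fin n → Fin n → ℕ) : Prop :=
  ∃ e : ↥B ≃ Fin n, ∀ u v : ↥B, m u v = std (e u) (e v)

/-- The Coxeter matrix of type `Aₙ` (Coxeter's notation): linear diagram, all labels 3. -/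
def aMat (n : ℕ) : Fin n → Fin n → ℕ := fun i j =>
  if i = j then 1 else if i.val + 1 = j.val ∨ j.val + 1 = i.val then 3 else 2

/-- The Coxeter matrix of type `Cₙ` in Coxeter's notation (Bourbaki's `Bₙ`):
linear diagram with labels 3, …, 3, 4. -/
def cMat (n : ℕ) : Fin n → Fin n → ℕ := fun i j =>
  if i = j then 1
  else if i.val + 1 = j.val ∨ j.val + 1 = i.val then
    (if i.val + 1 = n ∨ j.val + 1 = n then 4 else 3)
  else 2

/-- The Coxeter matrix of type `Bₙ` in Coxeter's notation (Bourbaki's `Dₙ`), for `n ≥ 3`: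
a chain `0, …, n-2` with labels 3 together with the edge `{n-3, n-1}` labelled 3. -/
def bMat (n : ℕ) : Fin n → Fin n → ℕ := fun i j =>
  if i = j then 1
  else if ((i.val + 1 = j.val ∧ j.val + 2 ≤ n) ∨ (j.val + 1 = i.val ∧ i.val + 2 ≤ n))
      ∨ (i.val + 3 = n ∧ j.val + 1 = n) ∨ (j.val + 3 = n ∧ i.val + 1 = n) then 3
  else 2

/-- The dihedral Coxeter matrix `D₂(k)` (i.e. `I₂(k)`). -/
def d2Mat (k : ℕ) : Fin 2 → Fin 2 → ℕ := fun i j => if i = j then 1 else k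

/-- The Coxeter matrix of type `G₃` in Coxeter's notation (i.e. `H₃`). -/
def g3Mat : Fin 3 → Fin 3 → ℕ := ![![1,3,2], ![3,1,5], ![2,5,1]]

/-- The Coxeter matrix of type `G₄` in Coxeter's notation (i.e. `H₄`). -/
def g4Mat : Fin 4 → Fin 4 → ℕ := ![![1,3,2,2], ![3,1,3,2], ![2,3,1,5], ![2,2,5,1]]

/-- The Coxeter matrix of type `F₄`. -/
def f4Mat : Fin 4 → Fin 4 → ℕ := ![![1,3,2,2], ![3,1,4,2], ![2,4,1,3], ![2,2,3,1]]

/-- The 2-part of `k`: the largest power of 2 dividing `k` (with `0` encoding `∞`;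
the 2-part of `∞` is `∞`). -/
def twoPart (k : ℕ) : ℕ := if k = 0 then 0 else 2 ^ (k.factorization 2)

/-- The subgroup `N_b`: the normal closure in `W` of the elements `(st) ^ b(s,t)` for
`s, t ∈ S` with `m s t < ∞`, where `b(s,t)` is the 2-part of `m s t`. -/
def NbSubgroup (m : W → W → ℕ) (S : Set W) : Subgroup W :=
  Subgroup.normalClosure
    {x | ∃ s ∈ S, ∃ t ∈ S, m s t ≠ 0 ∧ x = (s * t) ^ twoPart (m s t)}

instance (m : W → W → ℕ) (S : Set W) : (NbSubgroup m S).Normal :=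
  Subgroup.normalClosure_normal

/-- `(a, b)` is a special pair of elements of `S`: `m a b ≡ 2 mod 4` and either `v = a` or
`v = b` has the property that `m s a = m s b = 2` for every `s ∈ S \ {a, b}` with
`m s v < ∞`. -/
def IsSpecialPair (m : W → W → ℕ) (S : Set W) (a b : W) : Prop :=
  a ∈ S ∧ b ∈ S ∧ a ≠ b ∧ m a b % 4 = 2 ∧
    ((∀ s ∈ S, s ≠ a → s ≠ b → m s a ≠ 0 → m s a = 2 ∧ m s b = 2) ∨
     (∀ s ∈ S, s ≠ a → s ≠ b → m s b ≠ 0 → m s a = 2 ∧ m s b = 2))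

open scoped Classical in
/-- `m̄ a b = 2` if `(a, b)` is a special pair and `m̄ a b = m a b` otherwise. -/
noncomputable def mbar (m : W → W → ℕ) (S : Set W) (a b : W) : ℕ :=
  if IsSpecialPair m S a b then 2 else m a b

/-- The subgroup `N_e`: the normal closure in `W` of the elements `st` with `m s t` odd
together with the elements `(ab)²` with `(a, b)` a special pair. -/
def NeSubgroup (m : W → W → ℕ) (S : Set W) : Subgroup W :=
  Subgroup.normalClosure
    ({x | ∃ s ∈ S, ∃ t ∈ S, Odd (m s t) ∧ x = s * t} ∪
     {x | ∃ a b : W, IsSpecialPair m S a b ∧ x = (a * b) ^ 2})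

instance (m : W → W → ℕ) (S : Set W) : (NeSubgroup m S).Normal :=
  Subgroup.normalClosure_normal

/-- The word length of `w` with respect to the generating set `B`. -/
noncomputable def wordLength (B : Set W) (w : W) : ℕ :=
  sInf {n | ∃ l : List W, (∀ x ∈ l, x ∈ B) ∧ l.length = n ∧ l.prod = w}

/-- `z` is a longest element of the visual subgroup `⟨B⟩`. -/
def IsLongestElement (B : Set W) (z : W) : Prop :=
  z ∈ Subgroup.closure B ∧
    ∀ w ∈ Subgroup.closure B, wordLength B w ≤ wordLength B z

/-- The basic subgroup `⟨B⟩` of `(W, S)` is reduced: for every set of Coxeter generators `S'`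
of `W`, any base of `(W, S')` matching `B` generates a subgroup of order at least `|⟨B⟩|`. -/
def IsReducedBase (m : W → W → ℕ) (S B : Set W) : Prop :=
  ∀ (S' : Set W) (m' : W → W → ℕ) (B' : Set W),
    IsCoxeterSystemOn m' S' → S'.Finite → IsBase m' S' B' → Matches B B' →
      Nat.card ↥(Subgroup.closure B) ≤ Nat.card ↥(Subgroup.closure B')

/-- The isomorphism type of `(⟨B⟩, B)` belongs to the family `F` of isomorphism types of
Coxeter systems (a family of Coxeter matrices). -/
def TypeIn (F : ∀ n : ℕ, (Fin n → Fin n → ℕ) → Prop) (m : W → W → ℕ) (B : Set W) : Prop :=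
  ∃ (n : ℕ) (Mt : Fin n → Fin n → ℕ), F n Mt ∧ HasType m B Mt

/-- The subgroup `N(F)`: the normal closure in `W` of the commutator subgroups of all
reduced basic subgroups of `(W, S)` of type in `F` together with the commutator subgroups of
all unreduced basic subgroups of `(W, S)` matching a reduced basic subgroup of type in `F`
of another system `(W, S')`. -/
def NFSubgroup (F : ∀ n : ℕ, (Fin n → Fin n → ℕ) → Prop)
    (m : W → W → ℕ) (S : Set W) : Subgroup W :=
  Subgroup.normalClosure
    {x | ∃ B : Set W, IsBase m S B ∧
      x ∈ (⁅Subgroup.closure B, Subgroup.closure B⁆ : Subgroup W) ∧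
      ((IsReducedBase m S B ∧ TypeIn F m B) ∨
       (¬ IsReducedBase m S B ∧ ∃ (S' : Set W) (m' : W → W → ℕ) (B' : Set W),
          IsCoxeterSystemOn m' S' ∧ S'.Finite ∧ IsBase m' S' B' ∧
          IsReducedBase m' S' B' ∧ TypeIn F m' B' ∧ Matches B B'))}

instance (F : ∀ n : ℕ, (Fin n → Fin n → ℕ) → Prop) (m : W → W → ℕ) (S : Set W) :
    (NFSubgroup F m S).Normal :=
  Subgroup.normalClosure_normal

/-- The normal closure, within the subgroup `H`, of the subset `X ⊆ H`,
as a subgroup of the ambient group. -/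
def nClosIn (H : Subgroup W) (X : Set W) : Subgroup W :=
  Subgroup.map H.subtype (Subgroup.normalClosure ((fun x : H => (x : W)) ⁻¹' X))

/-- The generating set for the subgroup `N(⟨B⟩)` of a basic subgroup `⟨B⟩` of rank at least 3:
the commutator subgroup of `⟨B⟩` if the rank is at least 5 or the type is `A₄`, `G₃` or `G₄`;
`a₁a₃` for type `A₃`; `b₁b₂, b₂b₃` (products of distinct commuting generators) for type `B₄`;
`(c₂c₃)²` for type `C₃`; `c₁c₃` for type `C₄`; and `(f₂f₃)²` for type `F₄`. -/
def genSetNB (m : W → W → ℕ) (B : Set W) : Set W :=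
  {x | ((5 ≤ B.ncard ∨ HasType m B (aMat 4) ∨ HasType m B g3Mat ∨ HasType m B g4Mat) ∧
          x ∈ (⁅Subgroup.closure B, Subgroup.closure B⁆ : Subgroup W)) ∨
       (HasType m B (aMat 3) ∧ ∃ u ∈ B, ∃ v ∈ B, u ≠ v ∧ m u v = 2 ∧ x = u * v) ∨
       (HasType m B (bMat 4) ∧ ∃ u ∈ B, ∃ v ∈ B, u ≠ v ∧ m u v = 2 ∧ x = u * v) ∨
       (HasType m B (cMat 3) ∧ ∃ u ∈ B, ∃ v ∈ B, m u v = 4 ∧ x = (u * v) ^ 2) ∨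
       (HasType m B (cMat 4) ∧ ∃ u ∈ B, ∃ p ∈ B, ∃ v ∈ B, ∃ q ∈ B,
          m u p = 3 ∧ m p v = 3 ∧ m v q = 4 ∧ m u v = 2 ∧ x = u * v) ∨
       (HasType m B f4Mat ∧ ∃ u ∈ B, ∃ v ∈ B, m u v = 4 ∧ x = (u * v) ^ 2)}

/-- The subgroup `N(⟨B⟩)` of the visual subgroup `⟨B⟩`, viewed as a subgroup of `W`. -/
def NBSubgroup (m : W → W → ℕ) (B : Set W) : Subgroup W :=
  nClosIn (Subgroup.closure B) (genSetNB m B)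

/-- The subgroup `N(W)`: the normal closure in `W` of the subgroups `N(⟨B⟩)` over all
bases `B` of `(W, S)` of rank greater than 2. -/
def NWSubgroup (m : W → W → ℕ) (S : Set W) : Subgroup W :=
  Subgroup.normalClosure
    {x | ∃ B : Set W, IsBase m S B ∧ 2 < B.ncard ∧ x ∈ NBSubgroup m B}

instance (m : W → W → ℕ) (S : Set W) : (NWSubgroup m S).Normal :=
  Subgroup.normalClosure_normal

set_option linter.unusedSectionVars false
set_option linter.unusedSimpArgs false
set_option linter.unusedVariables false

/-! ### The geometric representation -/

namespace BM
open CoxeterSystem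

section GeomRep
variable {I : Type*} [Fintype I] [DecidableEq I] (M : CoxeterMatrix I)

/-- The Gram matrix with entries `-cos (π / m)`. The label `∞`, encoded as `0`, gives `-cos 0 = -1`,
as division by zero yields zero. -/
noncomputable def gram : Matrix I I ℝ := fun i j => - Real.cos (Real.pi / M i j)

lemma gram_symm (i j : I) : gram M i j = gram M j i := by
  simp [gram, M.symmetric i j]

lemma gram_self (i : I) : gram M i i = 1 := by
  simp [gram]

lemma gram_le_zero {i j : I} (h : i ≠ j) : gram M i j ≤ 0 := by
  have h1 := M.off_diagonal i j h
  simp only [gram, neg_nonpos]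
  rcases Nat.eq_zero_or_pos (M i j) with h0 | h0
  · simp [h0]
  · have : (2:ℝ) ≤ M i j := by exact_mod_cast (by omega : 2 ≤ M i j)
    apply Real.cos_nonneg_of_mem_Icc
    constructor
    · have : 0 ≤ Real.pi / M i j := by positivity
      linarith [Real.pi_pos]
    · exact div_le_div_of_nonneg_left Real.pi_pos.le (by norm_num) this

/-- The symmetric bilinear form with Gram matrix `gram M` (the Tits form). -/
noncomputable def bil : LinearMap.BilinForm ℝ (I → ℝ) := Matrix.toBilin' (gram M)

/-- The simple root at the vertex `i`: a standard basis vector. -/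
def rt (i : I) : I → ℝ := Pi.single i 1

lemma rt_apply (i j : I) : rt i j = if j = i then 1 else 0 := by
  simp [rt, Pi.single_apply]

@[simp] lemma rt_self (i : I) : rt i i = 1 := by simp [rt_apply]

lemma bil_rt_rt (i j : I) : bil M (rt i) (rt j) = gram M i j := by
  simp [bil, rt, Matrix.toBilin'_single]

lemma bil_apply (v w : I → ℝ) : bil M v w = ∑ i, ∑ j, v i * gram M i j * w j := by
  simp [bil, Matrix.toBilin'_apply]

lemma bil_symm (v w : I → ℝ) : bil M v w = bil M w v := by
  rw [bil_apply, bil_apply, Finset.sum_comm]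
  refine Finset.sum_congr rfl fun i _ => Finset.sum_congr rfl fun j _ => ?_
  rw [gram_symm]; ring

/-- The map `v ↦ v - 2 B(a, v) a`, which is the orthogonal reflection in `a` when `B(a, a) = 1`. -/
noncomputable def refl (a : I → ℝ) : (I → ℝ) →ₗ[ℝ] (I → ℝ) :=
  LinearMap.id - ((2:ℝ) • bil M a).smulRight a

lemma refl_apply (a v : I → ℝ) : refl M a v = v - (2 * bil M a v) • a := by
  simp [refl]

lemma refl_refl {a : I → ℝ} (h : bil M a a = 1) (v : I → ℝ) : refl M a (refl M a v) = v := by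
  simp only [refl_apply, map_sub, map_smul, smul_eq_mul, h]
  module

lemma bil_refl {a : I → ℝ} (h : bil M a a = 1) (v w : I → ℝ) :
    bil M (refl M a v) (refl M a w) = bil M v w := by
  simp only [refl_apply, map_sub, map_smul, smul_eq_mul, LinearMap.sub_apply,
    LinearMap.smul_apply, h, bil_symm M v a]
  ring

/-- The Chebyshev polynomials of the second kind with shifted index: `cheb (cos θ) k = sin (k θ) /
sin θ`. -/
noncomputable def cheb (c : ℝ) : ℕ → ℝ
  | 0 => 0
  | 1 => 1
  | (k+2) => 2 * c * cheb c (k+1) - cheb c k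

lemma cheb_cos (θ : ℝ) (k : ℕ) : cheb (Real.cos θ) k * Real.sin θ = Real.sin (k * θ) := by
  induction k using Nat.strong_induction_on with
  | _ k ih =>
    match k with
    | 0 => simp [cheb]
    | 1 => simp [cheb]
    | (k+2) =>
      have h1 := ih (k+1) (by omega)
      have h2 := ih k (by omega)
      simp only [cheb]
      have e1 : ((k+2:ℕ):ℝ) * θ = ((k+1:ℕ):ℝ) * θ + θ := by push_cast; ring
      have e2 : (k:ℝ) * θ = ((k+1:ℕ):ℝ) * θ - θ := by push_cast; ring
      rw [e2, Real.sin_sub] at h2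
      rw [e1, Real.sin_add, sub_mul, h2, mul_assoc, h1]
      ring

lemma cheb_one (k : ℕ) : cheb 1 k = k := by
  induction k using Nat.strong_induction_on with
  | _ k ih =>
    match k with
    | 0 => simp [cheb]
    | 1 => simp [cheb]
    | (k+2) =>
      simp only [cheb, ih (k+1) (by omega), ih k (by omega)]
      push_cast; ring

lemma sin_pos_of {m : ℕ} (hm : 2 ≤ m) : 0 < Real.sin (Real.pi / m) := by
  have : (2:ℝ) ≤ m := by exact_mod_cast hm
  apply Real.sin_pos_of_pos_of_lt_pi
  · positivity
  · apply div_lt_self Real.pi_pos; linarith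

lemma cheb_nonneg {i j : I} (hij : i ≠ j) {k : ℕ} (hk : M i j = 0 ∨ k ≤ M i j) :
    0 ≤ cheb (-gram M i j) k := by
  simp only [gram, neg_neg]
  have h1 := M.off_diagonal i j hij
  rcases Nat.eq_zero_or_pos (M i j) with h0 | h0
  · simp [h0, cheb_one]
  · have hs := sin_pos_of (m := M i j) (by omega)
    have hc := cheb_cos (Real.pi / M i j) k
    have : 0 ≤ Real.sin (k * (Real.pi / M i j)) := by
      apply Real.sin_nonneg_of_nonneg_of_le_pi
      · positivity
      · have h3 : (k:ℝ) ≤ M i j := by exact_mod_cast (by omega : k ≤ M i j)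
        have h4 : (0:ℝ) < M i j := by exact_mod_cast h0
        rw [← mul_div_assoc, div_le_iff₀ h4, mul_comm]
        exact mul_le_mul_of_nonneg_left h3 Real.pi_pos.le
    rw [← hc] at this
    exact nonneg_of_mul_nonneg_left this hs

lemma refl_pow_rt (i j : I) (k : ℕ) :
    ((refl M (rt i) * refl M (rt j)) ^ k) (rt i) =
      cheb (-gram M i j) (2*k+1) • rt i + cheb (-gram M i j) (2*k) • rt j := by
  induction k with
  | zero => simp [cheb]
  | succ k ih =>
    rw [pow_succ', Module.End.mul_apply, ih]
    have e1 : 2 * (k+1) + 1 = 2*k+1+2 := by ring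
    have e2 : 2 * (k+1) = 2*k+2 := by ring
    rw [e1, e2]
    simp only [cheb, Module.End.mul_apply, refl_apply, map_add, map_sub, map_smul, bil_rt_rt, gram_self,
      gram_symm M j i, smul_eq_mul]
    module

lemma cheb_two_mul {m : ℕ} (hm : 2 ≤ m) : cheb (Real.cos (Real.pi / m)) (2*m) = 0 ∧
    cheb (Real.cos (Real.pi / m)) (2*m+1) = 1 := by
  have hs := sin_pos_of hm
  have h0 : (m:ℝ) ≠ 0 := by exact_mod_cast (by omega : m ≠ 0)
  constructor
  · have := cheb_cos (Real.pi / m) (2*m)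
    have e : ((2*m:ℕ):ℝ) * (Real.pi / m) = 2 * Real.pi := by push_cast; field_simp
    rw [e, Real.sin_two_pi] at this
    exact (mul_eq_zero.1 this).resolve_right hs.ne'
  · have := cheb_cos (Real.pi / m) (2*m+1)
    have e : ((2*m+1:ℕ):ℝ) * (Real.pi / m) = Real.pi / m + 2 * Real.pi := by push_cast; field_simp; ring
    rw [e, Real.sin_add_two_pi] at this
    exact mul_right_cancel₀ hs.ne' (this.trans (one_mul _).symm)

lemma sq_gram_lt_one {i j : I} (hij : i ≠ j) (h : M i j ≠ 0) : gram M i j ^ 2 < 1 := by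
  have h1 := M.off_diagonal i j hij
  have hs := sin_pos_of (m := M i j) (by omega)
  have := Real.sin_sq_add_cos_sq (Real.pi / M i j)
  simp only [gram, neg_sq]
  nlinarith

lemma bil_pow (i j : I) (k : ℕ) (v w : I → ℝ) :
    bil M (((refl M (rt i) * refl M (rt j)) ^ k) v) (((refl M (rt i) * refl M (rt j)) ^ k) w) = bil M v w := by
  induction k with
  | zero => simp
  | succ k ih =>
    simp only [pow_succ', Module.End.mul_apply]
    rw [bil_refl, bil_refl, ih] <;> rw [bil_rt_rt, gram_self]

lemma refl_pow_sub (i j : I) (k : ℕ) (v : I → ℝ) :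
    ∃ a b : ℝ, ((refl M (rt i) * refl M (rt j)) ^ k) v = v + a • rt i + b • rt j := by
  induction k with
  | zero => exact ⟨0, 0, by simp⟩
  | succ k ih =>
    obtain ⟨a, b, h⟩ := ih
    have key : ∀ x, ∃ p q : ℝ, refl M (rt i) (refl M (rt j) x) = x + p • rt i + q • rt j := by
      intro x
      refine ⟨-(2 * bil M (rt i) (refl M (rt j) x)), -(2 * bil M (rt j) x), ?_⟩
      rw [refl_apply M (rt i), refl_apply M (rt j)]
      module
    obtain ⟨p, q, hpq⟩ := key (((refl M (rt i) * refl M (rt j)) ^ k) v)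
    refine ⟨a + p, b + q, ?_⟩
    rw [pow_succ', Module.End.mul_apply, Module.End.mul_apply, hpq, h]
    module

/-- The reflections in the simple roots satisfy the Coxeter relations. -/
theorem liftable : M.IsLiftable (fun i => refl M (rt i) : I → Module.End ℝ (I → ℝ)) := by
  intro i j
  show (refl M (rt i) * refl M (rt j)) ^ M i j = 1
  by_cases hij : i = j
  · subst hij
    rw [M.diagonal, pow_one]
    refine LinearMap.ext fun v => ?_
    simp [refl_refl M (show bil M (rt i) (rt i) = 1 by rw [bil_rt_rt, gram_self])]
  by_cases h0 : M i j = 0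
  · rw [h0, pow_zero]
  have h1 := M.off_diagonal i j hij
  set g := (refl M (rt i) * refl M (rt j)) ^ M i j with hg
  have key : ∀ i j : I, M i j ≠ 0 → i ≠ j → ((refl M (rt i) * refl M (rt j)) ^ M i j) (rt i) = rt i := by
    intro i j h0 hij
    have h1 := M.off_diagonal i j hij
    rw [refl_pow_rt]
    have := cheb_two_mul (m := M i j) (by omega)
    simp [gram, this]
  have gi : g (rt i) = rt i := key i j h0 hij
  have hinv : (refl M (rt j) * refl M (rt i)) ^ M i j * g = 1 := by
    have h2 : ∀ k : ℕ, (refl M (rt j) * refl M (rt i)) ^ k * (refl M (rt i) * refl M (rt j)) ^ k = 1 := by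
      intro k
      induction k with
      | zero => simp
      | succ k ih =>
        rw [pow_succ, pow_succ']
        have : (refl M (rt j) * refl M (rt i)) * (refl M (rt i) * refl M (rt j)) = 1 := by
          refine LinearMap.ext fun v => ?_
          simp [Module.End.mul_apply, refl_refl, bil_rt_rt, gram_self]
        calc _ = (refl M (rt j) * refl M (rt i)) ^ k * ((refl M (rt j) * refl M (rt i)) * (refl M (rt i) * refl M (rt j))) * (refl M (rt i) * refl M (rt j)) ^ k := by
              simp only [mul_assoc]
          _ = 1 := by rw [this, mul_one, ih]
    exact h2 _
  have gj : g (rt j) = rt j := by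
    have := key j i (by rwa [M.symmetric]) (Ne.symm hij)
    have h3 : ((refl M (rt j) * refl M (rt i)) ^ M i j * g) (rt j) = rt j := by rw [hinv]; rfl
    rw [M.symmetric j i] at this
    have h4 : (g * (refl M (rt j) * refl M (rt i)) ^ M i j) = 1 := by
      exact mul_eq_one_comm.1 hinv
    calc g (rt j) = g (((refl M (rt j) * refl M (rt i)) ^ M i j) (rt j)) := by rw [this]
      _ = rt j := by rw [← Module.End.mul_apply, h4]; rfl
  refine LinearMap.ext fun v => ?_
  obtain ⟨a, b, hab⟩ := refl_pow_sub M i j (M i j) v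
  rw [← hg] at hab
  have o1 : bil M (rt i) (g v) = bil M (rt i) v := by
    conv_lhs => rw [← gi]
    exact bil_pow M i j _ _ _
  have o2 : bil M (rt j) (g v) = bil M (rt j) v := by
    conv_lhs => rw [← gj]
    exact bil_pow M i j _ _ _
  rw [hab] at o1 o2
  simp only [map_add, map_smul, bil_rt_rt, gram_self, smul_eq_mul, gram_symm M j i] at o1 o2
  have hlt := sq_gram_lt_one M hij h0
  have ha : a = 0 := by
    have : a * (1 - gram M i j ^ 2) = 0 := by linear_combination o1 - gram M i j * o2
    exact (mul_eq_zero.1 this).resolve_right (by linarith)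
  have hb : b = 0 := by
    have : b * (1 - gram M i j ^ 2) = 0 := by linear_combination o2 - gram M i j * o1
    exact (mul_eq_zero.1 this).resolve_right (by linarith)
  rw [hab, ha, hb]; simp

variable {M} {W : Type*} [Group W] (cs : CoxeterSystem M W)

/-- The geometric representation. -/
noncomputable def rep : W →* Module.End ℝ (I → ℝ) := cs.lift ⟨_, liftable M⟩

lemma rep_simple (i : I) : rep cs (cs.simple i) = refl M (rt i) := by
  simp [rep]

lemma rep_simple_apply (i : I) (v : I → ℝ) :
    rep cs (cs.simple i) v = v - (2 * bil M (rt i) v) • rt i := by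
  rw [rep_simple, refl_apply]

lemma rep_mul_apply (x y : W) (v : I → ℝ) : rep cs (x * y) v = rep cs x (rep cs y v) := by
  rw [map_mul]; rfl

@[simp] lemma rep_one_apply (v : I → ℝ) : rep cs 1 v = v := by
  rw [map_one]; rfl

@[simp] lemma rep_inv_rep (x : W) (v : I → ℝ) : rep cs x⁻¹ (rep cs x v) = v := by
  rw [← rep_mul_apply]; simp

@[simp] lemma rep_rep_inv (x : W) (v : I → ℝ) : rep cs x (rep cs x⁻¹ v) = v := by
  rw [← rep_mul_apply]; simp

lemma rep_injective (x : W) : Function.Injective (rep cs x) := fun v w h => by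
  rw [← rep_inv_rep cs x v, h, rep_inv_rep]

lemma bil_rep (w : W) (u v : I → ℝ) : bil M (rep cs w u) (rep cs w v) = bil M u v := by
  induction w using cs.simple_induction_left generalizing u v with
  | one => simp
  | mul_simple_left w i ih =>
    rw [rep_mul_apply, rep_mul_apply, rep_simple, bil_refl, ih]
    rw [bil_rt_rt, gram_self]

lemma rep_simple_rt_self (i : I) : rep cs (cs.simple i) (rt i) = - rt i := by
  rw [rep_simple_apply, bil_rt_rt, gram_self]; module

lemma rep_alt (s t : I) (k : ℕ) :
    rep cs (cs.wordProd (alternatingWord s t k)) (rt s) =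
      if Even k then cheb (-gram M s t) (k+1) • rt s + cheb (-gram M s t) k • rt t
      else cheb (-gram M s t) k • rt s + cheb (-gram M s t) (k+1) • rt t := by
  induction k with
  | zero => simp [alternatingWord, cheb]
  | succ k ih =>
    rw [alternatingWord_succ', wordProd_cons, rep_mul_apply, ih]
    by_cases hk : Even k
    · have : ¬ Even (k+1) := by simpa [Nat.even_add_one] using hk
      simp only [hk, this, if_true, if_false, rep_simple_apply, map_add, map_smul, bil_rt_rt,
        gram_self, gram_symm M t s, smul_eq_mul]
      simp only [cheb]; module
    · have : Even (k+1) := by simpa [Nat.even_add_one] using hk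
      simp only [hk, this, if_true, if_false, rep_simple_apply, map_add, map_smul, bil_rt_rt,
        gram_self, smul_eq_mul]
      simp only [cheb]; module

/-- If `s` is not a right descent of `w`, then `w αₛ` is a nonnegative combination of simple roots.
The proof is an induction on the length of `w`, which splits off a factor from a dihedral visual
subgroup. -/
theorem rep_rt_nonneg (w : W) (s : I) (h : ¬ cs.IsRightDescent w s) : 0 ≤ rep cs w (rt s) := by
  induction hn : cs.length w using Nat.strong_induction_on generalizing w s with
  | _ n ih =>
  by_cases hw : w = 1
  · subst hw
    intro j; simp [rt_apply]; split <;> norm_num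
  obtain ⟨t, ht⟩ := cs.exists_rightDescent_of_ne_one hw
  have hst : s ≠ t := by rintro rfl; exact h ht
  set x : ℕ → W := fun k => cs.wordProd (alternatingWord s t k) with hx
  let P : ℕ → Prop := fun k => cs.length (w * (x k)⁻¹) + k = cs.length w
  classical
  have hP1 : P 1 := by
    have : cs.length (w * cs.simple t) + 1 = cs.length w := (cs.isRightDescent_iff).1 ht
    simpa [P, hx, alternatingWord] using this
  have hn1 : 1 ≤ cs.length w := by have : _ + 1 = _ := hP1; omega
  set k := Nat.findGreatest P (cs.length w) with hk
  have hPk : P k := Nat.findGreatest_spec (m := 1) hn1 hP1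
  have hk1 : 1 ≤ k := Nat.le_findGreatest hn1 hP1
  have hmax : ¬ P (k+1) := by
    intro hp
    have : k + 1 ≤ cs.length w := by have : _ + (k+1) = _ := hp; omega
    have := Nat.le_findGreatest this hp
    omega
  set v := w * (x k)⁻¹ with hv
  have hwv : w = v * x k := by simp [hv]
  have hlv : cs.length v + k = cs.length w := hPk
  have hx1 : ∀ k, x (k+1) = cs.simple (if Even k then t else s) * x k := by
    intro k; simp only [hx]; rw [alternatingWord_succ', wordProd_cons]
  have asc1 : ¬ cs.IsRightDescent v (if Even k then t else s) := by
    intro hd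
    apply hmax
    have := (cs.isRightDescent_iff).1 hd
    show cs.length (w * (x (k+1))⁻¹) + (k+1) = _
    rw [hx1, mul_inv_rev, inv_simple, ← mul_assoc, ← hv]
    omega
  obtain ⟨k', hk'⟩ : ∃ k', k = k' + 1 := ⟨k - 1, by omega⟩
  have asc2 : ¬ cs.IsRightDescent v (if Even k' then t else s) := by
    intro hd
    have h2 := (cs.isRightDescent_iff).1 hd
    have h3 : v * cs.simple (if Even k' then t else s) = w * (x k')⁻¹ := by
      rw [hv, hk', hx1, mul_inv_rev, inv_simple, mul_assoc, mul_assoc, simple_mul_simple_self, mul_one]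
    rw [h3] at h2
    have h4 := cs.length_mul_le (w * (x k')⁻¹) (x k')
    rw [inv_mul_cancel_right] at h4
    have h5 : cs.length (x k') ≤ k' := (cs.length_wordProd_le _).trans (by simp)
    omega
  have ascs : ¬ cs.IsRightDescent v s ∧ ¬ cs.IsRightDescent v t := by
    by_cases he : Even k'
    · have : ¬ Even k := by rw [hk']; simpa [Nat.even_add_one] using he
      simp only [he, this, if_true, if_false] at asc1 asc2; exact ⟨asc1, asc2⟩
    · have : Even k := by rw [hk']; simpa [Nat.even_add_one] using he
      simp only [he, this, if_true, if_false] at asc1 asc2; exact ⟨asc2, asc1⟩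
  have hvs := ih (cs.length v) (by omega) v s ascs.1 rfl
  have hvt := ih (cs.length v) (by omega) v t ascs.2 rfl
  have hkm : M s t = 0 ∨ k + 1 ≤ M s t := by
    by_contra hcon
    push Not at hcon
    have hnr := cs.not_isReduced_alternatingWord t s (m := k+1) (by rw [M.symmetric]; exact hcon.1)
      (by rw [M.symmetric]; exact hcon.2)
    have hle := cs.length_wordProd_le (alternatingWord t s (k+1))
    rw [length_alternatingWord] at hle
    rw [CoxeterSystem.IsReduced, length_alternatingWord] at hnr
    have he : w * cs.simple s = v * cs.wordProd (alternatingWord t s (k+1)) := by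
      rw [alternatingWord_succ, wordProd_concat, ← mul_assoc, hwv]
    have h6 := cs.length_mul_le v (cs.wordProd (alternatingWord t s (k+1)))
    rw [← he] at h6
    have h7 := (cs.not_isRightDescent_iff).1 h
    omega
  have u1 := cheb_nonneg M hst (k := k) (hkm.imp id (by omega))
  have u2 := cheb_nonneg M hst (k := k+1) hkm
  rw [hwv, rep_mul_apply, rep_alt]
  split_ifs <;> simp only [map_add, map_smul] <;>
    exact add_nonneg (smul_nonneg (by assumption) (by assumption)) (smul_nonneg (by assumption) (by assumption))

end GeomRep
end BM

/-! ### Roots, visual subgroups and finite subgroups -/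

namespace BM
open CoxeterSystem

section Parabolic
variable {I : Type*} [Fintype I] [DecidableEq I] {M : CoxeterMatrix I} {W : Type*} [Group W]
  (cs : CoxeterSystem M W)

lemma rep_rt_nonpos (w : W) (s : I) (h : cs.IsRightDescent w s) : rep cs w (rt s) ≤ 0 := by
  have := rep_rt_nonneg cs (w * cs.simple s) s (by
    rwa [← isRightDescent_iff_not_isRightDescent_mul])
  rw [rep_mul_apply, rep_simple_rt_self, map_neg] at this
  exact neg_nonneg.1 this

lemma rep_rt_ne_zero (w : W) (s : I) : rep cs w (rt s) ≠ 0 := by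
  intro h
  have := congrArg (rep cs w⁻¹) h
  rw [rep_inv_rep, map_zero] at this
  have := congrFun this s
  simp at this

/-- The geometric representation is faithful, as a right descent `s` of `w` makes `w αₛ`
nonpositive. -/
lemma faithful {w : W} (h : ∀ s, rep cs w (rt s) = rt s) : w = 1 := by
  by_contra hw
  obtain ⟨s, hs⟩ := cs.exists_rightDescent_of_ne_one hw
  have := rep_rt_nonpos cs w s hs s
  rw [h] at this
  simp at this
  linarith

lemma rep_inj {x y : W} (h : ∀ s, rep cs x (rt s) = rep cs y (rt s)) : x = y := by
  have : x⁻¹ * y = 1 := faithful cs fun s => by rw [rep_mul_apply, ← h, rep_inv_rep]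
  rw [inv_mul_eq_one] at this; exact this

/-- Roots are the images of the simple roots under the group. -/
def IsRoot (v : I → ℝ) : Prop := ∃ (w : W) (i : I), v = rep cs w (rt i)

variable {cs}

lemma IsRoot.ne_zero {v : I → ℝ} (h : IsRoot cs v) : v ≠ 0 := by
  obtain ⟨w, i, rfl⟩ := h; exact rep_rt_ne_zero cs w i

lemma IsRoot.rep {v : I → ℝ} (h : IsRoot cs v) (w : W) : IsRoot cs (rep cs w v) := by
  obtain ⟨x, i, rfl⟩ := h
  exact ⟨w * x, i, by rw [rep_mul_apply]⟩

lemma isRoot_rt (i : I) : IsRoot cs (rt i) := ⟨1, i, by simp⟩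

lemma IsRoot.neg {v : I → ℝ} (h : IsRoot cs v) : IsRoot cs (-v) := by
  obtain ⟨x, i, rfl⟩ := h
  exact ⟨x * cs.simple i, i, by rw [rep_mul_apply, rep_simple_rt_self, map_neg]⟩

lemma IsRoot.bil_self {v : I → ℝ} (h : IsRoot cs v) : bil M v v = 1 := by
  obtain ⟨w, i, rfl⟩ := h; rw [bil_rep, bil_rt_rt, gram_self]

/-- Every root is positive or negative. -/
lemma IsRoot.pos_or_neg {v : I → ℝ} (h : IsRoot cs v) : 0 ≤ v ∨ v ≤ 0 := by
  obtain ⟨w, i, rfl⟩ := h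
  by_cases hd : cs.IsRightDescent w i
  · exact Or.inr (rep_rt_nonpos cs w i hd)
  · exact Or.inl (rep_rt_nonneg cs w i hd)

lemma IsRoot.nonneg_of_pos {v : I → ℝ} (h : IsRoot cs v) {j : I} (hj : 0 < v j) : 0 ≤ v := by
  rcases h.pos_or_neg with h | h
  · exact h
  · exact absurd (h j) (not_le.2 hj)

lemma IsRoot.exists_pos {v : I → ℝ} (h : IsRoot cs v) (h0 : 0 ≤ v) : ∃ j, 0 < v j := by
  by_contra hcon
  push Not at hcon
  exact h.ne_zero (le_antisymm hcon h0)

lemma rep_simple_coord (s j : I) (h : j ≠ s) (v : I → ℝ) : rep cs (cs.simple s) v j = v j := by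
  rw [rep_simple_apply]; simp [rt_apply, h]

lemma eq_rt_of_supp {v : I → ℝ} (h : IsRoot cs v) (h0 : 0 ≤ v) {s : I} (hs : ∀ j, j ≠ s → v j = 0) :
    v = rt s := by
  have hv : v = v s • rt s := by
    ext j
    by_cases hj : j = s
    · subst hj; simp
    · simp [hs j hj, rt_apply, hj]
  have hn := h.bil_self
  rw [hv] at hn
  simp only [map_smul, LinearMap.smul_apply, bil_rt_rt, gram_self, smul_eq_mul] at hn
  have h1 : 0 ≤ v s := h0 s
  have : v s = 1 := by nlinarith
  rw [hv, this, one_smul]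

/-- The simple reflection in `αₛ` permutes the positive roots other than `αₛ`. -/
lemma IsRoot.simple_nonneg {v : I → ℝ} (h : IsRoot cs v) (h0 : 0 ≤ v) {s : I} (hs : v ≠ rt s) :
    0 ≤ BM.rep cs (cs.simple s) v := by
  by_contra hcon
  apply hs
  refine eq_rt_of_supp h h0 fun j hj => ?_
  have h1 : BM.rep cs (cs.simple s) v ≤ 0 := (h.rep _).pos_or_neg.resolve_left hcon
  have h2 := h1 j
  rw [rep_simple_coord s j hj] at h2
  exact le_antisymm h2 (h0 j)

variable (cs)

/-- An element of the group makes only finitely many positive roots negative. -/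
lemma finite_inv (w : W) : {v | IsRoot cs v ∧ 0 ≤ v ∧ ¬ 0 ≤ rep cs w v}.Finite := by
  induction w using cs.simple_induction_left with
  | one => 
    convert Set.finite_empty using 1
    ext v; simp
  | mul_simple_left w i ih =>
    refine (ih.union (Set.finite_singleton (rep cs w⁻¹ (rt i)))).subset ?_
    rintro v ⟨h1, h2, h3⟩
    by_cases h : 0 ≤ rep cs w v
    · right
      by_contra hne
      apply h3
      rw [rep_mul_apply]
      refine (h1.rep w).simple_nonneg h fun he => hne ?_
      rw [Set.mem_singleton_iff, ← he, rep_inv_rep]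
    · exact Or.inl ⟨h1, h2, h⟩

/-- The visual subgroup generated by `J`. -/
def par (J : Set I) : Subgroup W := Subgroup.closure (cs.simple '' J)

lemma simple_mem_par {J : Set I} {s : I} (hs : s ∈ J) : cs.simple s ∈ par cs J :=
  Subgroup.subset_closure ⟨s, hs, rfl⟩

lemma par_mono {J K : Set I} (h : J ⊆ K) : par cs J ≤ par cs K :=
  Subgroup.closure_mono (Set.image_mono h)

lemma par_univ : par cs Set.univ = ⊤ := by
  rw [par, Set.image_univ, cs.subgroup_closure_range_simple]

/-- The stabilizer of a functional in the closed fundamental chamber is generated by the simple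
reflections which fix it. -/
lemma stab (z : (I → ℝ) →ₗ[ℝ] ℝ) (hz : ∀ s, 0 ≤ z (rt s)) (g : W)
    (hg : ∀ v, z (rep cs g v) = z v) : g ∈ par cs {s | z (rt s) = 0} := by
  induction hn : cs.length g using Nat.strong_induction_on generalizing g with
  | _ n ih =>
  by_cases h1 : g = 1
  · subst h1; exact one_mem _
  obtain ⟨s, hs⟩ := cs.exists_rightDescent_of_ne_one h1
  have hneg := rep_rt_nonpos cs g s hs
  have h0 : z (rt s) = 0 := by
    refine le_antisymm ?_ (hz s)
    rw [← hg]
    have : rep cs g (rt s) = ∑ i, rep cs g (rt s) i • rt i := by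
      ext j; simp [rt_apply, Finset.sum_apply]
    rw [this, map_sum]
    refine Finset.sum_nonpos fun i _ => ?_
    rw [map_smul, smul_eq_mul]
    exact mul_nonpos_of_nonpos_of_nonneg (hneg i) (hz i)
  have := ih (cs.length (g * cs.simple s)) (by rw [← hn]; exact hs) (g * cs.simple s) (fun v => by
    rw [rep_mul_apply, hg, rep_simple_apply]; simp [h0]) rfl
  have h2 := mul_mem this (simple_mem_par cs (J := {s | z (rt s) = 0}) h0)
  rwa [simple_mul_simple_cancel_right] at h2

lemma par_coord {J : Set I} {w : W} (hw : w ∈ par cs J) (v : I → ℝ) {i : I} (hi : i ∉ J) :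
    rep cs w v i = v i := by
  induction hw using Subgroup.closure_induction generalizing v with
  | mem x hx => 
    obtain ⟨s, hs, rfl⟩ := hx
    exact rep_simple_coord s i (fun h => hi (h ▸ hs)) v
  | one => simp
  | mul x y _ _ hx hy => rw [rep_mul_apply, hx, hy]
  | inv x _ hx => rw [← hx (rep cs x⁻¹ v), rep_rep_inv]

/-- The visual subgroup of `J` consists of all elements which preserve the coordinates outside `J`:
they stabilize the sum of these coordinates, which lies in the closed fundamental chamber. -/
lemma mem_par {J : Set I} {w : W} (h : ∀ v, ∀ i ∉ J, rep cs w v i = v i) : w ∈ par cs J := by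
  classical
  let z : (I → ℝ) →ₗ[ℝ] ℝ := ∑ i, (if i ∈ J then 0 else LinearMap.proj i)
  have hz : ∀ v, z v = ∑ i, (if i ∈ J then 0 else v i) := by
    intro v; simp only [z, LinearMap.sum_apply]
    refine Finset.sum_congr rfl fun i _ => ?_
    split <;> simp
  have hz1 : ∀ s, z (rt s) = if s ∈ J then 0 else 1 := by
    intro s
    rw [hz, Finset.sum_eq_single s]
    · simp
    · intro b _ hb; simp [rt_apply, hb]
    · simp
  have := stab cs z (fun s => by rw [hz1]; split <;> norm_num) w (fun v => by
    rw [hz, hz]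
    refine Finset.sum_congr rfl fun i _ => ?_
    split
    · rfl
    · exact h v i ‹_›)
  refine par_mono cs ?_ this
  intro s hs
  by_contra hcon
  simp [hz1, hcon] at hs

lemma par_descent {J : Set I} {w : W} (hw : w ∈ par cs J) {s : I} (hs : cs.IsRightDescent w s) :
    s ∈ J := by
  by_contra hJ
  have h1 := rep_rt_nonpos cs w s hs s
  rw [par_coord cs hw _ hJ] at h1
  simp at h1; linarith

/-- An element of a visual subgroup is determined by its action on the simple roots of that
subgroup. -/
lemma par_inj {J : Set I} {x y : W} (hx : x ∈ par cs J) (hy : y ∈ par cs J)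
    (h : ∀ i ∈ J, rep cs x (rt i) = rep cs y (rt i)) : x = y := by
  have h1 : x⁻¹ * y ∈ par cs J := mul_mem (inv_mem hx) hy
  have : x⁻¹ * y = 1 := by
    by_contra hne
    obtain ⟨s, hs⟩ := cs.exists_rightDescent_of_ne_one hne
    have h2 := par_descent cs h1 hs
    have h3 := rep_rt_nonpos cs _ s hs s
    rw [rep_mul_apply, ← h s h2, rep_inv_rep] at h3
    simp at h3; linarith
  rw [inv_mul_eq_one] at this; exact this

/-- A visual subgroup with finitely many roots is finite. -/
lemma finite_par {J : Set I} (h : {v | IsRoot cs v ∧ ∀ i ∉ J, v i = 0}.Finite) :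
    (par cs J : Set W).Finite := by
  have := h.to_subtype
  let f : par cs J → (J → {v | IsRoot cs v ∧ ∀ i ∉ J, v i = 0}) := fun w j =>
    ⟨rep cs w (rt j), (isRoot_rt _).rep _, fun i hi => by
      rw [par_coord cs w.2 _ hi, rt_apply, if_neg]; rintro rfl; exact hi j.2⟩
  have hf : Function.Injective f := by
    intro x y hxy
    refine Subtype.ext (par_inj cs x.2 y.2 fun i hi => ?_)
    exact congrArg Subtype.val (congrFun hxy ⟨i, hi⟩)
  exact Set.finite_coe_iff.1 (Finite.of_injective f hf)

lemma rep_conj (w : W) (i : I) (v : I → ℝ) :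
    rep cs (w * cs.simple i * w⁻¹) v = refl M (rep cs w (rt i)) v := by
  rw [rep_mul_apply, rep_mul_apply, rep_simple_apply, refl_apply, map_sub, map_smul, rep_rep_inv]
  congr 3
  rw [← bil_rep cs w (rt i), rep_rep_inv]

lemma exists_reflection {v : I → ℝ} (h : IsRoot cs v) : ∃ t : W, ∀ x, rep cs t x = refl M v x := by
  obtain ⟨w, i, rfl⟩ := h
  exact ⟨_, rep_conj cs w i⟩

lemma reflection_mem {J : Set I} {v : I → ℝ} (hJ : ∀ i ∉ J, v i = 0) {t : W}
    (ht : ∀ x, rep cs t x = refl M v x) : t ∈ par cs J :=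
  mem_par cs fun x i hi => by rw [ht, refl_apply]; simp [hJ i hi]

/-- A finite visual subgroup has finitely many roots, since the reflection in a root determines the
root up to sign. -/
lemma finite_roots {J : Set I} (h : (par cs J : Set W).Finite) :
    {v | IsRoot cs v ∧ ∀ i ∉ J, v i = 0}.Finite := by
  classical
  let f : (I → ℝ) → W := fun v => if h : IsRoot cs v then (exists_reflection cs h).choose else 1
  have hf : ∀ v, IsRoot cs v → ∀ x, rep cs (f v) x = refl M v x := by
    intro v hv; simp only [f, hv, dif_pos]; exact (exists_reflection cs hv).choose_spec
  have hfin : {v | IsRoot cs v ∧ 0 ≤ v ∧ ∀ i ∉ J, v i = 0}.Finite := by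
    refine Set.Finite.of_injOn (f := f) (t := par cs J) ?_ ?_ h
    · rintro v ⟨h1, h2, h3⟩
      exact reflection_mem cs h3 (hf v h1)
    · rintro v ⟨h1, h2, h3⟩ u ⟨h4, h5, h6⟩ he
      have e1 := hf v h1 v
      rw [he, hf u h4, refl_apply, refl_apply, h1.bil_self] at e1
      have e2 : v = bil M u v • u := by
        ext k
        have := congrFun e1 k
        simp only [Pi.sub_apply, Pi.smul_apply, smul_eq_mul] at this ⊢
        linarith
      have e3 := h1.bil_self
      generalize bil M u v = c at e2
      rw [e2] at e3
      simp only [map_smul, LinearMap.smul_apply, h4.bil_self, smul_eq_mul, mul_one] at e3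
      obtain ⟨j, hj⟩ := h1.exists_pos h2
      have e4 := congrFun e2 j
      simp only [Pi.smul_apply, smul_eq_mul] at e4
      have h5j : 0 ≤ u j := h5 j
      have hc : 0 < c := by
        by_contra hc
        rw [e4] at hj
        nlinarith
      have : c = 1 := by nlinarith
      rw [e2, this, one_smul]
  refine (hfin.union (hfin.image Neg.neg)).subset ?_
  rintro v ⟨h1, h2⟩
  rcases h1.pos_or_neg with h | h
  · exact Or.inl ⟨h1, h, h2⟩
  · exact Or.inr ⟨-v, ⟨h1.neg, neg_nonneg.2 h, fun i hi => by simp [h2 i hi]⟩, neg_neg v⟩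

/-- A functional which is negative on finitely many positive roots only can be moved into the closed
fundamental chamber. -/
lemma dominant (y : (I → ℝ) →ₗ[ℝ] ℝ) (hy : {v | IsRoot cs v ∧ 0 ≤ v ∧ y v < 0}.Finite) :
    ∃ w : W, ∀ s, 0 ≤ y (rep cs w (rt s)) := by
  induction hn : {v | IsRoot cs v ∧ 0 ≤ v ∧ y v < 0}.ncard using Nat.strong_induction_on generalizing y with
  | _ n ih =>
  by_cases h : ∀ s, 0 ≤ y (rt s)
  · exact ⟨1, fun s => by simpa using h s⟩
  push Not at h
  obtain ⟨s, hs⟩ := h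
  set y' := y ∘ₗ rep cs (cs.simple s) with hy'
  have hinj : Set.InjOn (rep cs (cs.simple s)) {v | IsRoot cs v ∧ 0 ≤ v ∧ y' v < 0} :=
    (rep_injective cs _).injOn
  have hmaps : rep cs (cs.simple s) '' {v | IsRoot cs v ∧ 0 ≤ v ∧ y' v < 0} ⊂
      {v | IsRoot cs v ∧ 0 ≤ v ∧ y v < 0} := by
    rw [Set.ssubset_iff_of_subset]
    · refine ⟨rt s, ⟨isRoot_rt s, fun j => ?_, hs⟩, ?_⟩
      · simp [rt_apply]; split <;> norm_num
      · rintro ⟨v, ⟨h1, h2, h3⟩, h4⟩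
        have : v = - rt s := by
          rw [← rep_simple_rt_self cs s, ← h4, ← rep_mul_apply]; simp
        have := h2 s
        simp_all
        linarith
    · rintro _ ⟨v, ⟨h1, h2, h3⟩, rfl⟩
      refine ⟨h1.rep _, h1.simple_nonneg h2 ?_, h3⟩
      rintro rfl
      rw [hy', LinearMap.comp_apply, rep_simple_rt_self, map_neg] at h3
      linarith
  have hfin' : {v | IsRoot cs v ∧ 0 ≤ v ∧ y' v < 0}.Finite :=
    Set.Finite.of_finite_image (hy.subset hmaps.1) hinj
  have hlt := Set.ncard_lt_ncard hmaps hy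
  rw [hinj.ncard_image] at hlt
  obtain ⟨w, hw⟩ := ih _ (hn ▸ hlt) y' hfin' rfl
  exact ⟨cs.simple s * w, fun i => by rw [rep_mul_apply]; exact hw i⟩

/-- Every finite subgroup is conjugate to a subgroup of a finite visual subgroup. The sum of the
coordinates, averaged over the finite subgroup, is an invariant functional which is nonpositive on
finitely many positive roots only; moved into the closed fundamental chamber it has a finite visual
stabilizer. -/
theorem tits (H : Subgroup W) (hH : (H : Set W).Finite) :
    ∃ (w : W) (J : Set I), (par cs J : Set W).Finite ∧ ∀ h ∈ H, w⁻¹ * h * w ∈ par cs J := by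
  classical
  have := hH.to_subtype
  have := Fintype.ofFinite H
  let σ : (I → ℝ) →ₗ[ℝ] ℝ := ∑ i, LinearMap.proj i
  have hσ : ∀ v, σ v = ∑ i, v i := fun v => by simp [σ]
  let y : (I → ℝ) →ₗ[ℝ] ℝ := ∑ h : H, σ ∘ₗ rep cs (h : W)
  have hy : ∀ v, y v = ∑ h : H, σ (rep cs (h : W) v) := fun v => by simp [y]
  have hyinv : ∀ h ∈ H, ∀ v, y (rep cs h v) = y v := by
    intro h hh v
    rw [hy, hy]
    refine Fintype.sum_equiv (Equiv.mulRight ⟨h, hh⟩) _ _ fun x => ?_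
    simp [rep_mul_apply]
  have hpos : ∀ v, IsRoot cs v → 0 ≤ v → 0 < σ v := by
    intro v h1 h2
    rw [hσ]
    obtain ⟨j, hj⟩ := h1.exists_pos h2
    exact Finset.sum_pos' (fun i _ => h2 i) ⟨j, Finset.mem_univ j, hj⟩
  have hfin : {v | IsRoot cs v ∧ 0 ≤ v ∧ y v ≤ 0}.Finite := by
    refine (Set.finite_iUnion (fun h : H => finite_inv cs (h : W))).subset ?_
    rintro v ⟨h1, h2, h3⟩
    by_contra hcon
    simp only [Set.mem_iUnion, not_exists, Set.mem_ofPred_eq, not_and, not_not] at hcon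
    have : 0 < y v := by
      rw [hy]
      exact Finset.sum_pos (fun h _ => hpos _ (h1.rep _) (hcon h h1 h2)) ⟨1, Finset.mem_univ _⟩
    linarith
  obtain ⟨w, hw⟩ := dominant cs y (hfin.subset fun v hv => ⟨hv.1, hv.2.1, hv.2.2.le⟩)
  have hzer : {v | IsRoot cs v ∧ y v = 0}.Finite := by
    refine (hfin.union (hfin.image Neg.neg)).subset ?_
    rintro v ⟨h1, h2⟩
    rcases h1.pos_or_neg with h | h
    · exact Or.inl ⟨h1, h, h2.le⟩
    · exact Or.inr ⟨-v, ⟨h1.neg, neg_nonneg.2 h, by rw [map_neg, h2, neg_zero]⟩, neg_neg v⟩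
  refine ⟨w, {s | (y ∘ₗ rep cs w) (rt s) = 0}, ?_, fun h hh => ?_⟩
  · refine finite_par cs ((hzer.image (rep cs w⁻¹)).subset ?_)
    rintro v ⟨h1, h2⟩
    refine ⟨rep cs w v, ⟨h1.rep w, ?_⟩, rep_inv_rep cs w v⟩
    have : v = ∑ i, v i • rt i := by
      ext j; simp [rt_apply, Finset.sum_apply]
    show (y ∘ₗ rep cs w) v = 0
    rw [this, map_sum]
    refine Finset.sum_eq_zero fun i _ => ?_
    by_cases hi : (y ∘ₗ rep cs w) (rt i) = 0
    · rw [map_smul, hi, smul_zero]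
    · rw [h2 i hi, zero_smul, map_zero]
  · refine stab cs _ hw _ fun v => ?_
    simp only [LinearMap.comp_apply, rep_mul_apply, rep_rep_inv]
    exact hyinv h hh _

/-- The labels within a finite visual subgroup are finite. -/
lemma order_ne_zero {J : Set I} (hJ : (par cs J : Set W).Finite) {s t : I} (hs : s ∈ J) (ht : t ∈ J) :
    M s t ≠ 0 := by
  intro h0
  have hmem : cs.simple s * cs.simple t ∈ par cs J :=
    mul_mem (simple_mem_par cs hs) (simple_mem_par cs ht)
  have := hJ.to_subtype
  have hst : s ≠ t := by rintro rfl; simp [M.diagonal] at h0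
  have hfo : IsOfFinOrder (⟨_, hmem⟩ : par cs J) := isOfFinOrder_of_finite _
  obtain ⟨n, hn, h1⟩ := isOfFinOrder_iff_pow_eq_one.1 hfo
  have h2 : (cs.simple s * cs.simple t) ^ n = 1 := by simpa using congrArg Subtype.val h1
  have h3 := congrArg (fun x => rep cs x (rt s)) h2
  simp only [map_pow, map_mul, rep_simple, refl_pow_rt] at h3
  have hg : -gram M s t = 1 := by simp [gram, h0]
  rw [hg] at h3
  have h4 := congrFun h3 t
  simp [cheb_one, rt_apply, hst.symm] at h4
  omega

variable (M) in
/-- The subset `J` is nonempty and its Coxeter diagram is connected; the label `0` stands for `∞`. -/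
def Irr (J : Set I) : Prop := J.Nonempty ∧ ∀ u ∈ J, ∀ v ∈ J,
    Relation.ReflTransGen (fun x y => x ∈ J ∧ y ∈ J ∧ x ≠ y ∧ (M x y = 0 ∨ 2 < M x y)) u v

lemma Irr.exists_adj {J : Set I} (h : Irr M J) (h2 : J.Nontrivial) {b : I} (hb : b ∈ J) :
    ∃ c ∈ J, b ≠ c ∧ (M b c = 0 ∨ 2 < M b c) := by
  obtain ⟨c, hc, hne⟩ := h2.exists_ne b
  rcases Relation.ReflTransGen.cases_head (h.2 b hb c hc) with h | ⟨d, hd, _⟩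
  · exact absurd h.symm hne
  · exact ⟨d, hd.2.1, hd.2.2⟩

/-- A functional which is invariant under `(st)²`, where `3 ≤ m(s,t) < ∞`, vanishes on the plane of
`αₛ` and `αₜ`, because this rotation is not the identity on the plane and so has no eigenvalue one
there. -/
lemma functional_zero (g : (I → ℝ) →ₗ[ℝ] ℝ) {s t : I} (h3 : 3 ≤ M s t)
    (hg : ∀ v, g (rep cs ((cs.simple s * cs.simple t) ^ 2) v) = g v) : g (rt s) = 0 := by
  have hst : s ≠ t := by rintro rfl; simp [M.diagonal] at h3
  have e1 := hg (rt s)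
  have e2 := hg (rt t)
  have hlt := sq_gram_lt_one M hst (by omega)
  have hne : gram M s t < 0 := by
    simp only [gram, neg_lt_zero]
    have : (3:ℝ) ≤ M s t := by exact_mod_cast h3
    apply Real.cos_pos_of_mem_Ioo
    constructor
    · have : 0 < Real.pi / M s t := by positivity
      linarith [Real.pi_pos]
    · exact div_lt_div_of_pos_left Real.pi_pos (by norm_num) (by linarith)
  simp only [pow_two, rep_mul_apply, rep_simple_apply, map_sub, map_smul, bil_rt_rt, gram_self,
    gram_symm M t s, smul_eq_mul] at e1 e2
  generalize gram M s t = c at *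
  generalize g (rt s) = a at *
  generalize g (rt t) = b at *
  have : 16 * c^2 * (c^2 - 1) * a = 0 := by
    linear_combination (4 * c^2) * e1 - (8*c^3 - 4*c) * e2
  have h16 : 16 * c^2 * (c^2 - 1) ≠ 0 := by
    have := hne.ne
    apply mul_ne_zero (by positivity) (by linarith)
  exact (mul_eq_zero.1 this).resolve_left h16

/-- If `w` conjugates the commutator subgroup of an irreducible finite visual subgroup on `B` into
the visual subgroup of `C`, then `w` maps the simple roots of `B` into the span of those of `C`. -/
lemma comm_supp {B : Set I} (hB : Irr M B) (hB2 : B.Nontrivial) (hf : (par cs B : Set W).Finite) {C : Set I} {w : W}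
    (h : ∀ x ∈ ⁅par cs B, par cs B⁆, w * x * w⁻¹ ∈ par cs C) :
    ∀ b ∈ B, ∀ i ∉ C, rep cs w (rt b) i = 0 := by
  intro b hb i hi
  obtain ⟨c, hc, hbc, h3⟩ := hB.exists_adj hB2 hb
  have h0 := order_ne_zero cs hf hb hc
  refine functional_zero cs (LinearMap.proj i ∘ₗ rep cs w) (s := b) (t := c) (by omega) fun v => ?_
  have hx : (cs.simple b * cs.simple c) ^ 2 ∈ ⁅par cs B, par cs B⁆ := by
    have := Subgroup.commutator_mem_commutator (simple_mem_par cs hb) (simple_mem_par cs hc)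
    simpa [commutatorElement_def, pow_two, mul_assoc] using this
  have := par_coord cs (h _ hx) (rep cs w v) hi
  simpa [rep_mul_apply] using this

/-- Suppose that each generator outside `B` commutes with `B` or generates an infinite subgroup
together with `B`. If `w` maps the simple roots of `B` into the span of those of `C`, then `B ⊆ C`.
The proof is an induction on the length of `w`: a left descent in `C`, or a right descent which
commutes with `B`, is removed from `w`; a right descent `s` of any other kind is impossible, because
`w` would make negative all the positive roots of `B ∪ {s}` involving `αₛ`, of which there are
infinitely many. -/
theorem supp_subset {B C : Set I} (hf : (par cs B : Set W).Finite)
    (hmax : ∀ s ∉ B, (∀ b ∈ B, M s b = 2) ∨ ¬ (par cs (insert s B) : Set W).Finite)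
    (w : W) (h : ∀ b ∈ B, ∀ i ∉ C, rep cs w (rt b) i = 0) : B ⊆ C := by
  induction hn : cs.length w using Nat.strong_induction_on generalizing w with
  | _ n ih =>
  by_cases hw : w = 1
  · subst hw
    intro b hb
    by_contra hbC
    have := h b hb b hbC
    simp at this
  by_cases hleft : ∃ c ∈ C, cs.IsLeftDescent w c
  · obtain ⟨c, hc, hl⟩ := hleft
    refine ih _ (hn ▸ hl) (cs.simple c * w) (fun b hb i hi => ?_) rfl
    rw [rep_mul_apply, rep_simple_coord c i (fun he => hi (he ▸ hc)), h b hb i hi]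
  push Not at hleft
  have hCpos : ∀ c ∈ C, 0 ≤ rep cs w⁻¹ (rt c) := fun c hc =>
    rep_rt_nonneg cs _ _ (by rw [isRightDescent_inv_iff]; exact hleft c hc)
  -- without left descents in `C`, no simple root is mapped to a negative root supported in `C`
  have hneg : ∀ s, (∀ i ∉ C, rep cs w (rt s) i = 0) → ¬ rep cs w (rt s) ≤ 0 := by
    intro s hs hle
    have e : rep cs w (rt s) = ∑ i, rep cs w (rt s) i • rt i := by
      ext j; simp [rt_apply, Finset.sum_apply]
    have e2 := congrArg (fun v => rep cs w⁻¹ v s) e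
    simp only [rep_inv_rep, rt_self, map_sum, Finset.sum_apply, map_smul, Pi.smul_apply, smul_eq_mul] at e2
    have : ∑ i, rep cs w (rt s) i * rep cs w⁻¹ (rt i) s ≤ 0 := by
      refine Finset.sum_nonpos fun i _ => ?_
      by_cases hi : i ∈ C
      · exact mul_nonpos_of_nonpos_of_nonneg (hle i) (hCpos i hi s)
      · rw [hs i hi, zero_mul]
    linarith
  obtain ⟨s, hs⟩ := cs.exists_rightDescent_of_ne_one hw
  have hsneg := rep_rt_nonpos cs w s hs
  have hsB : s ∉ B := fun hsB => hneg s (h s hsB) hsneg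
  rcases hmax s hsB with h2 | hinf
  · refine ih _ (hn ▸ hs) (w * cs.simple s) (fun b hb i hi => ?_) rfl
    have : gram M s b = 0 := by simp [gram, h2 b hb]
    rw [rep_mul_apply, rep_simple_apply, bil_rt_rt, this]
    simp [h b hb i hi]
  exfalso
  apply hinf
  obtain ⟨j, hjC, hj⟩ : ∃ j, j ∉ C ∧ rep cs w (rt s) j < 0 := by
    by_contra hcon
    push Not at hcon
    exact hneg s (fun i hi => le_antisymm (hsneg i) (hcon i hi)) hsneg
  apply finite_par
  have F := finite_inv cs w
  refine ((F.union (F.image Neg.neg)).union (finite_roots cs hf)).subset ?_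
  have hpos : ∀ v, IsRoot cs v → (∀ i ∉ insert s B, v i = 0) → 0 < v s → ¬ 0 ≤ rep cs w v := by
    intro v h1 h3 h4 h5
    have e : v = ∑ i, v i • rt i := by
      ext j; simp [rt_apply, Finset.sum_apply]
    have e2 := congrArg (fun v => rep cs w v j) e
    simp only [map_sum, Finset.sum_apply, map_smul, Pi.smul_apply, smul_eq_mul] at e2
    rw [Finset.sum_eq_single s] at e2
    · have := h5 j
      simp only [Pi.zero_apply] at this
      nlinarith
    · intro i _ his
      by_cases hi : i ∈ B
      · rw [h i hi j hjC, mul_zero]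
      · rw [h3 i (by simp [his, hi]), zero_mul]
    · simp
  rintro v ⟨h1, h3⟩
  rcases lt_trichotomy (v s) 0 with h4 | h4 | h4
  · left; right
    have h5 : 0 < (-v) s := by simpa using h4
    exact ⟨-v, ⟨h1.neg, h1.neg.nonneg_of_pos h5, hpos _ h1.neg (fun i hi => by simp [h3 i hi]) h5⟩, neg_neg v⟩
  · right
    refine ⟨h1, fun i hi => ?_⟩
    by_cases his : i = s
    · rw [his, h4]
    · exact h3 i (by simp [his, hi])
  · left; left
    exact ⟨h1, h1.nonneg_of_pos h4, hpos v h1 h3 h4⟩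

end Parabolic
end BM

/-! ### Restriction to visual subgroups, bases -/

namespace BM
open CoxeterSystem

/-- The restriction of a Coxeter matrix along an embedding of index types. -/
def comapM {I K : Type*} (M : CoxeterMatrix I) (f : K ↪ I) : CoxeterMatrix K where
  M := fun i j => M (f i) (f j)
  isSymm := by ext i j; exact M.symmetric _ _
  diagonal i := M.diagonal _
  off_diagonal i j h := M.off_diagonal _ _ (fun h' => h (f.injective h'))

@[simp] lemma comapM_apply {I K : Type*} (M : CoxeterMatrix I) (f : K ↪ I) (i j : K) :
  comapM M f i j = M (f i) (f j) := rfl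

section Emb
variable {I : Type*} [Fintype I] [DecidableEq I] {M : CoxeterMatrix I} {W : Type*} [Group W]
  (cs : CoxeterSystem M W) {K : Type*} [Fintype K] [DecidableEq K] (f : K ↪ I)

/-- The homomorphism from the abstract Coxeter group of the restricted matrix. -/
noncomputable def embHom : (comapM M f).Group →* W :=
  (comapM M f).toCoxeterSystem.lift ⟨fun k => cs.simple (f k), fun i j => cs.simple_mul_simple_pow _ _⟩

lemma embHom_simple (k : K) : embHom cs f ((comapM M f).toCoxeterSystem.simple k) = cs.simple (f k) := by
  exact lift_apply_simple _ _ _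

/-- The inclusion of the root space of the restricted matrix. -/
noncomputable def extv : (K → ℝ) →ₗ[ℝ] (I → ℝ) := Fintype.linearCombination ℝ (fun k => rt (f k))

lemma extv_rt (k : K) : extv f (rt k) = rt (f k) := by
  rw [extv, rt, Fintype.linearCombination_apply_single, one_smul]

lemma extv_apply (v : K → ℝ) (k : K) : extv f v (f k) = v k := by
  simp [extv, Fintype.linearCombination_apply, Finset.sum_apply, rt_apply]

lemma extv_bil (v w : K → ℝ) : bil M (extv f v) (extv f w) = bil (comapM M f) v w := by
  have : (bil M).compl₁₂ (extv f) (extv f) = bil (comapM M f) := by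
    refine LinearMap.ext_basis (Pi.basisFun ℝ K) (Pi.basisFun ℝ K) fun i j => ?_
    simp only [LinearMap.compl₁₂_apply, Pi.basisFun_apply]
    change bil M (extv f (rt i)) (extv f (rt j)) = bil _ (rt i) (rt j)
    rw [extv_rt, extv_rt, bil_rt_rt, bil_rt_rt]; rfl
  rw [← this]; rfl

lemma extv_rep (x : (comapM M f).Group) (v : K → ℝ) :
    rep cs (embHom cs f x) (extv f v) = extv f (rep (comapM M f).toCoxeterSystem x v) := by
  induction x using (comapM M f).toCoxeterSystem.simple_induction_left generalizing v with
  | one => simp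
  | mul_simple_left x i ih =>
    rw [map_mul, rep_mul_apply, ih, embHom_simple, rep_simple_apply, rep_mul_apply, rep_simple_apply,
      ← extv_rt, extv_bil, map_sub, map_smul]

/-- A visual subgroup is a Coxeter group with the restricted matrix, by faithfulness of the
geometric representation of the latter. -/
lemma embHom_injective : Function.Injective (embHom cs f) := by
  rw [injective_iff_map_eq_one]
  intro x hx
  refine faithful (comapM M f).toCoxeterSystem fun s => ?_
  have := extv_rep cs f x (rt s)
  rw [hx, rep_one_apply] at this
  ext k
  have := congrFun this (f k)
  rw [extv_apply, extv_apply] at this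
  exact this.symm

lemma embHom_range : (embHom cs f).range = par cs (Set.range f) := by
  rw [MonoidHom.range_eq_map, ← (comapM M f).toCoxeterSystem.subgroup_closure_range_simple,
    MonoidHom.map_closure, par]
  congr 1
  ext w; constructor
  · rintro ⟨_, ⟨k, rfl⟩, rfl⟩
    exact ⟨f k, ⟨k, rfl⟩, (embHom_simple cs f k).symm⟩
  · rintro ⟨_, ⟨k, rfl⟩, rfl⟩
    exact ⟨_, ⟨k, rfl⟩, embHom_simple cs f k⟩

lemma card_par_range : Nat.card (par cs (Set.range f)) = Nat.card (comapM M f).Group := by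
  rw [← embHom_range]
  exact (Nat.card_congr (MonoidHom.ofInjective (embHom_injective cs f)).toEquiv).symm

end Emb

section Restr
variable {I : Type*} [Fintype I] [DecidableEq I] {M : CoxeterMatrix I} {W : Type*} [Group W]
  (cs : CoxeterSystem M W)

/-- The Coxeter matrix restricted to a subset of the index type. -/
def restr (M : CoxeterMatrix I) (J : Set I) : CoxeterMatrix J := comapM M (Function.Embedding.subtype _)

open Classical in
/-- A visual subgroup as a Coxeter system. The subgroup is a variable `G`, so that one and the same group
can carry two such systems. -/
noncomputable def parSystem (J : Set I) {G : Subgroup W} (h : G = par cs J) :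
    CoxeterSystem (restr M J) G :=
  (restr M J).toCoxeterSystem.map
    ((MonoidHom.ofInjective (embHom_injective cs (Function.Embedding.subtype (· ∈ J)))).trans
      (MulEquiv.subgroupCongr (by rw [embHom_range, h]; simp)))

lemma parSystem_simple (J : Set I) {G : Subgroup W} (h : G = par cs J) (j : J) :
    ((parSystem cs J h).simple j : W) = cs.simple j := by
  classical
  have := embHom_simple cs (Function.Embedding.subtype (· ∈ J)) j
  exact this

lemma par_parSystem (J : Set I) {G : Subgroup W} (h : G = par cs J) (C : Set J) :
    (par (parSystem cs J h) C).map G.subtype = par cs (Subtype.val '' C) := by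
  rw [par, MonoidHom.map_closure, par]
  congr 1
  rw [Set.image_image, Set.image_image]
  refine Set.image_congr fun j _ => parSystem_simple cs J h j

end Restr

section Finite
variable {I : Type*} [Fintype I] [DecidableEq I] {M : CoxeterMatrix I} {W : Type*} [Group W]
  (cs : CoxeterSystem M W)

/-- A group generated by finitely many elements of order at most two is finite if its commutator
subgroup is, as its abelianization is a finitely generated group of exponent two. -/
lemma finite_of_commutator {G : Type*} [Group G] (S : Set G) (hS : S.Finite) (h2 : ∀ s ∈ S, s * s = 1)
    (H : Subgroup G) (hH : H = Subgroup.closure S) (hc : (⁅H, H⁆ : Subgroup G) |>.carrier.Finite) :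
    (H : Set G).Finite := by
  have hHfg : Group.FG H := by
    rw [Group.fg_iff_subgroup_fg, hH]
    exact ⟨hS.toFinset, by simp⟩
  have habs : ∀ x : Abelianization H, x * x = 1 := by
    intro x
    induction x using QuotientGroup.induction_on with
    | H x =>
    obtain ⟨x, hx⟩ := x
    subst hH
    change Abelianization.of _ * Abelianization.of _ = 1
    induction hx using Subgroup.closure_induction with
    | mem x h =>
      rw [← map_mul, ← map_one Abelianization.of]
      congr 1
      exact Subtype.ext (h2 x h)
    | one => exact (map_mul _ _ _).symm.trans ((congrArg _ (Subtype.ext (mul_one 1))).trans (map_one Abelianization.of))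
    | mul x y hx hy h1 h2 =>
      have : (⟨x * y, mul_mem hx hy⟩ : Subgroup.closure S) = ⟨x, hx⟩ * ⟨y, hy⟩ := rfl
      rw [this, map_mul, mul_mul_mul_comm, h1, h2, one_mul]
    | inv x hx h1 =>
      have : (⟨x⁻¹, inv_mem hx⟩ : Subgroup.closure S) = ⟨x, hx⟩⁻¹ := rfl
      rw [this, map_inv, ← mul_inv_rev, h1, inv_one]
  have hfg : Group.FG (Abelianization H) := by
    have := hHfg
    exact Group.fg_of_surjective (f := Abelianization.of) (QuotientGroup.mk_surjective)
  have hab : Finite (Abelianization H) := by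
    refine CommGroup.finite_of_fg_isMulTorsion _ ?_
    intro x
    rw [isOfFinOrder_iff_pow_eq_one]
    exact ⟨2, by norm_num, by rw [pow_two, habs]⟩
  have hker : Finite (Abelianization.of (G := H)).ker := by
    have e : ((commutator H).map H.subtype) = ⁅H, H⁆ := by
      rw [commutator_def, Subgroup.map_commutator, ← MonoidHom.range_eq_map, Subgroup.range_subtype]
    have : Finite ((commutator H).map H.subtype) := by
      rw [e]; exact hc.to_subtype
    have h3 : Finite (commutator H) := by
      have := (Subgroup.equivMapOfInjective (commutator H) H.subtype H.subtype_injective)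
      exact Finite.of_equiv _ this.symm.toEquiv
    rwa [Abelianization.ker_of]
  have : Finite H := (MonoidHom.finite_iff_finite_ker_range Abelianization.of).2 ⟨hker, inferInstance⟩
  exact Set.toFinite _

lemma par_finite_of_comm {J : Set I} (h : (⁅par cs J, par cs J⁆ : Subgroup W).carrier.Finite) :
    (par cs J : Set W).Finite :=
  finite_of_commutator (cs.simple '' J) (Set.toFinite _) (by rintro _ ⟨s, _, rfl⟩; simp) _ rfl h

/-- The subset `B` is a base: a maximal irreducible subset with more than one element which
generates a finite subgroup. Having more than one element is the same as generating a noncyclic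
group. -/
structure Base (B : Set I) : Prop where
  irr : Irr M B
  fin : (par cs B : Set W).Finite
  nt : B.Nontrivial
  max : ∀ B', B ⊆ B' → Irr M B' → (par cs B' : Set W).Finite → B' = B

variable (M) in
lemma irr_insert {B : Set I} (h : Irr M B) {s b : I} (hb : b ∈ B) (hs : s ∉ B) (hsb : M s b ≠ 2) :
    Irr M (insert s B) := by
  have hne : s ≠ b := fun h => hs (h ▸ hb)
  have h1 := M.off_diagonal s b hne
  have hadj : M s b = 0 ∨ 2 < M s b := by omega
  have mono : ∀ u ∈ B, ∀ v ∈ B, Relation.ReflTransGen (fun x y => x ∈ insert s B ∧ y ∈ insert s B ∧ x ≠ y ∧ (M x y = 0 ∨ 2 < M x y)) u v := by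
    intro u hu v hv
    refine Relation.ReflTransGen.mono (fun x y hxy => ?_) _ _ (h.2 u hu v hv)
    exact ⟨Or.inr hxy.1, Or.inr hxy.2.1, hxy.2.2⟩
  refine ⟨⟨s, by simp⟩, ?_⟩
  have e1 : Relation.ReflTransGen (fun x y => x ∈ insert s B ∧ y ∈ insert s B ∧ x ≠ y ∧ (M x y = 0 ∨ 2 < M x y)) s b :=
    .single ⟨by simp, by simp [hb], hne, hadj⟩
  have e2 : Relation.ReflTransGen (fun x y => x ∈ insert s B ∧ y ∈ insert s B ∧ x ≠ y ∧ (M x y = 0 ∨ 2 < M x y)) b s :=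
    .single ⟨by simp [hb], by simp, hne.symm, by rwa [M.symmetric]⟩
  rintro u (rfl | hu) v (rfl | hv)
  · exact .refl
  · exact e1.trans (mono _ hb _ hv)
  · exact (mono _ hu _ hb).trans e2
  · exact mono _ hu _ hv

variable {cs} in
/-- A base satisfies the maximality hypothesis of `supp_subset`. -/
lemma Base.cond {B : Set I} (h : Base cs B) (s : I) (hs : s ∉ B) :
    (∀ b ∈ B, M s b = 2) ∨ ¬ (par cs (insert s B) : Set W).Finite := by
  by_contra hcon
  push Not at hcon
  obtain ⟨⟨b, hb, hsb⟩, hf⟩ := hcon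
  have := h.max (insert s B) (Set.subset_insert s B) (irr_insert M h.irr hb hs hsb) hf
  exact hs (this ▸ Set.mem_insert s B)

variable {cs} in
/-- A base is contained in every subset into whose visual subgroup its commutator subgroup can be
conjugated. -/
lemma Base.subset_of_conj {B : Set I} (h : Base cs B) {C : Set I} (w : W)
    (hw : ∀ x ∈ ⁅par cs B, par cs B⁆, w * x * w⁻¹ ∈ par cs C) : B ⊆ C :=
  supp_subset cs h.fin h.cond w (comm_supp cs h.irr h.nt h.fin hw)

lemma conj_supp {C : Set I} (w : W) (b : I) (h : w * cs.simple b * w⁻¹ ∈ par cs C) :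
    ∀ i ∉ C, rep cs w (rt b) i = 0 := by
  intro i hi
  have h1 := par_coord cs h (rep cs w (rt b)) hi
  rw [rep_mul_apply, rep_mul_apply, rep_inv_rep, rep_simple_rt_self, map_neg, Pi.neg_apply] at h1
  linarith

/-- The subset `B` is maximal among those which generate a finite subgroup. -/
structure MaxSph (B : Set I) : Prop where
  fin : (par cs B : Set W).Finite
  max : ∀ B', B ⊆ B' → (par cs B' : Set W).Finite → B' = B

lemma exists_maxSph {B : Set I} (h : (par cs B : Set W).Finite) : ∃ J, B ⊆ J ∧ MaxSph cs J := by
  classical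
  obtain ⟨J, hJ1, hJ2⟩ := (Set.toFinite {J : Set I | (par cs J : Set W).Finite}).exists_le_maximal h
  exact ⟨J, hJ1, hJ2.1, fun B' h1 h2 => le_antisymm (hJ2.2 h2 h1) h1⟩

lemma exists_base {B : Set I} (hi : Irr M B) (hnt : B.Nontrivial) (h : (par cs B : Set W).Finite) :
    ∃ J, B ⊆ J ∧ Base cs J := by
  classical
  obtain ⟨J, hJ1, hJ2⟩ := (Set.toFinite {J : Set I | Irr M J ∧ (par cs J : Set W).Finite}).exists_le_maximal ⟨hi, h⟩
  exact ⟨J, hJ1, hJ2.1.1, hJ2.1.2, hnt.mono hJ1, fun B' h1 h2 h3 => le_antisymm (hJ2.2 ⟨h2, h3⟩ h1) h1⟩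

variable {cs} in
lemma MaxSph.subset_of_conj {B : Set I} (h : MaxSph cs B) {C : Set I} (w : W)
    (hw : ∀ x ∈ par cs B, w * x * w⁻¹ ∈ par cs C) : B ⊆ C := by
  refine supp_subset cs h.fin (fun s hs => Or.inr fun hf => ?_) w fun b hb =>
    conj_supp cs w b (hw _ (simple_mem_par cs hb))
  have := h.max _ (Set.subset_insert s B) hf
  exact hs (this ▸ Set.mem_insert s B)

variable {I' : Type*} [Fintype I'] [DecidableEq I'] {M' : CoxeterMatrix I'} (cs' : CoxeterSystem M' W)

/-- A maximal finite visual subgroup is conjugate to a visual subgroup of the other system: `tits`,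
applied to both systems in turn, conjugates it into a finite visual subgroup of each, and the
composite is an inclusion by maximality. -/
theorem match_maxSph {J : Set I} (hJ : MaxSph cs J) : ∃ (w : W) (J' : Set I'),
    (par cs J).map (MulAut.conj w).toMonoidHom = par cs' J' := by
  obtain ⟨u, J', hJ', hu⟩ := tits cs' (par cs J) hJ.fin
  obtain ⟨v, K, hK, hv⟩ := tits cs (par cs' J') hJ'
  have h1 : J ⊆ K := hJ.subset_of_conj (v⁻¹ * u⁻¹) fun x hx => by
    have := hv _ (hu x hx)
    simpa [mul_assoc] using this
  have h2 := hJ.max K h1 hK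
  subst h2
  refine ⟨u⁻¹, J', ?_⟩
  have := hJ'.to_subtype
  have := hK.to_subtype
  apply Subgroup.eq_of_le_of_card_ge
  · rintro _ ⟨x, hx, rfl⟩
    simpa using hu x hx
  · have e1 : Nat.card ((par cs K).map (MulAut.conj u⁻¹).toMonoidHom) = Nat.card (par cs K) :=
      Nat.card_congr (Subgroup.equivMapOfInjective _ _ (MulAut.conj u⁻¹).injective).symm.toEquiv
    have e2 : Nat.card ((par cs' J').map (MulAut.conj v⁻¹).toMonoidHom) = Nat.card (par cs' J') :=
      Nat.card_congr (Subgroup.equivMapOfInjective _ _ (MulAut.conj v⁻¹).injective).symm.toEquiv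
    rw [e1, ← e2]
    apply Subgroup.card_le_of_le
    rintro _ ⟨x, hx, rfl⟩
    simpa using hv x hx

end Finite
end BM

/-! ### Positive definiteness, and commuting factors of a finite Coxeter group -/

namespace BM
open CoxeterSystem

section PosDef
variable {I : Type*} [Fintype I] [DecidableEq I] {M : CoxeterMatrix I} {W : Type*} [Group W]

/-- The form of a finite Coxeter group is positive definite; this follows from the comparison with
an inner product which is made invariant by averaging. -/
theorem posDef (cs : CoxeterSystem M W) [Finite W] {v : I → ℝ} (hv : v ≠ 0) : 0 < bil M v v := by
  have := Fintype.ofFinite W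
  let E : (I → ℝ) →ₗ[ℝ] (I → ℝ) →ₗ[ℝ] ℝ := ∑ w : W, (dotProductBilin ℝ ℝ).compl₁₂ (rep cs w) (rep cs w)
  have hE : ∀ x y, E x y = ∑ w : W, rep cs w x ⬝ᵥ rep cs w y := by
    intro x y; simp [E, LinearMap.sum_apply]
  have hEinv : ∀ g x y, E (rep cs g x) (rep cs g y) = E x y := by
    intro g x y
    rw [hE, hE]
    refine Fintype.sum_equiv (Equiv.mulRight g) _ _ fun w => ?_
    simp [rep_mul_apply]
  have hEsymm : ∀ x y, E x y = E y x := by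
    intro x y; rw [hE, hE]
    exact Finset.sum_congr rfl fun w _ => dotProduct_comm _ _
  have hEpos : ∀ x, x ≠ 0 → 0 < E x x := by
    intro x hx
    rw [hE]
    refine Finset.sum_pos (fun w _ => ?_) ⟨1, Finset.mem_univ _⟩
    have hne : rep cs w x ≠ 0 := fun h => hx (rep_injective cs w (by rw [h, map_zero]))
    obtain ⟨j, hj⟩ := Function.ne_iff.1 hne
    exact Finset.sum_pos' (fun i _ => mul_self_nonneg _) ⟨j, Finset.mem_univ _, by
      exact mul_self_pos.2 hj⟩
  have hrt : ∀ i, (rt i : I → ℝ) ≠ 0 := fun i h => by simpa using congrFun h i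
  set d : I → ℝ := fun i => E (rt i) (rt i) with hd
  have hdpos : ∀ i, 0 < d i := fun i => hEpos _ (hrt i)
  have hEB : ∀ i j, E (rt j) (rt i) = gram M i j * d i := by
    intro i j
    have := hEinv (cs.simple i) (rt j) (rt i)
    rw [rep_simple_rt_self, rep_simple_apply, bil_rt_rt] at this
    simp only [map_sub, map_neg, map_smul, LinearMap.sub_apply, LinearMap.smul_apply, smul_eq_mul] at this
    simp only [hd]
    linarith
  have hdd : ∀ i j, gram M i j ≠ 0 → d i = d j := by
    intro i j h
    have h1 := hEB i j
    rw [hEsymm, hEB j i, gram_symm] at h1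
    exact (mul_left_cancel₀ h h1).symm
  have hexp : ∀ x : I → ℝ, x = ∑ i, x i • rt i := by
    intro x; ext j; simp [rt_apply, Finset.sum_apply]
  have hEE : ∀ x, E x x = ∑ i, ∑ j, x i * x j * (gram M i j * d i) := by
    intro x
    conv_lhs => rw [hexp x]
    simp only [map_sum, map_smul, LinearMap.sum_apply, LinearMap.smul_apply, smul_eq_mul, hEB, Finset.mul_sum]
    refine Finset.sum_congr rfl fun i _ => Finset.sum_congr rfl fun j _ => ?_
    ring
  have key : bil M v v = E (fun i => v i / √(d i)) (fun i => v i / √(d i)) := by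
    rw [hEE, bil_apply]
    refine Finset.sum_congr rfl fun i _ => Finset.sum_congr rfl fun j _ => ?_
    by_cases h : gram M i j = 0
    · simp [h]
    · rw [← hdd i j h]
      have := Real.mul_self_sqrt (hdpos i).le
      have h0 := (Real.sqrt_pos.2 (hdpos i)).ne'
      have e : v i / √(d i) * (v j / √(d i)) * (gram M i j * d i) =
        v i / √(d i) * (v j / √(d i)) * (gram M i j * (√(d i) * √(d i))) := by rw [this]
      rw [e]
      field_simp
  rw [key]
  refine hEpos _ fun h => hv ?_
  ext i
  have := congrFun h i
  have h0 := (Real.sqrt_pos.2 (hdpos i)).ne'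
  simpa [h0] using this

end PosDef

section Retr
variable {I : Type*} [Fintype I] [DecidableEq I] {M : CoxeterMatrix I} {G : Type*} [Group G]
  (cs : CoxeterSystem M G)

variable (M) in
/-- The subset `C` is a union of connected components of the diagram: the generators outside `C`
commute with those in `C`. -/
def Sep (C : Set I) : Prop := ∀ s ∉ C, ∀ c ∈ C, M s c = 2

lemma Sep.compl {C : Set I} (h : Sep M C) : Sep M Cᶜ := fun s hs c hc => by
  rw [M.symmetric]; exact h c hc s (by simpa using hs)

lemma simple_comm {s t : I} (h : M s t = 2) : Commute (cs.simple s) (cs.simple t) := by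
  have := cs.simple_mul_simple_pow s t
  rw [h, pow_two] at this
  have h2 : cs.simple s * cs.simple t = (cs.simple s * cs.simple t)⁻¹ := eq_inv_of_mul_eq_one_left this
  rw [mul_inv_rev, inv_simple, inv_simple] at h2
  exact h2

open Classical in
/-- The retraction onto the visual subgroup of a union `C` of components, which kills the other
generators. -/
noncomputable def retr {C : Set I} (hC : Sep M C) : G →* G :=
  cs.lift ⟨fun i => if i ∈ C then cs.simple i else 1, by
    intro i j
    by_cases hi : i ∈ C <;> by_cases hj : j ∈ C
    · simp [hi, hj]
    · have := hC j hj i hi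
      rw [M.symmetric] at this
      simp [hi, hj, this]
    · simp [hi, hj, hC i hi j hj]
    · simp [hi, hj]⟩

open Classical in
lemma retr_simple {C : Set I} (hC : Sep M C) (i : I) :
    retr cs hC (cs.simple i) = if i ∈ C then cs.simple i else 1 := lift_apply_simple _ _ _

lemma retr_mem {C : Set I} (hC : Sep M C) (x : G) : retr cs hC x ∈ par cs C := by
  classical
  induction x using cs.simple_induction_left with
  | one => simp
  | mul_simple_left x i ih =>
    rw [map_mul, retr_simple]
    split
    · exact mul_mem (simple_mem_par cs ‹_›) ih
    · simpa using ih

lemma retr_eq {C : Set I} (hC : Sep M C) {x : G} (hx : x ∈ par cs C) : retr cs hC x = x := by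
  classical
  induction hx using Subgroup.closure_induction with
  | mem x hx =>
    obtain ⟨s, hs, rfl⟩ := hx
    rw [retr_simple, if_pos hs]
  | one => simp
  | mul x y _ _ hx hy => rw [map_mul, hx, hy]
  | inv x _ hx => rw [map_inv, hx]

lemma retr_compl {C : Set I} (hC : Sep M C) {x : G} (hx : x ∈ par cs Cᶜ) : retr cs hC x = 1 := by
  classical
  induction hx using Subgroup.closure_induction with
  | mem x hx =>
    obtain ⟨s, hs, rfl⟩ := hx
    rw [retr_simple, if_neg hs]
  | one => simp
  | mul x y _ _ hx hy => rw [map_mul, hx, hy, mul_one]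
  | inv x _ hx => rw [map_inv, hx, inv_one]

lemma par_commute {C : Set I} (hC : Sep M C) {x y : G} (hx : x ∈ par cs C) (hy : y ∈ par cs Cᶜ) :
    Commute x y := by
  unfold par at hx hy
  induction hx using Subgroup.closure_induction with
  | mem x hx =>
    obtain ⟨s, hs, rfl⟩ := hx
    induction hy using Subgroup.closure_induction with
    | mem y hy =>
      obtain ⟨t, ht, rfl⟩ := hy
      exact (simple_comm cs (hC t ht s hs)).symm
    | one => exact Commute.one_right _
    | mul x y _ _ h1 h2 => exact h1.mul_right h2
    | inv x _ h => exact h.inv_right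
  | one => exact Commute.one_left _
  | mul x y _ _ h1 h2 => exact h1.mul_left h2
  | inv x _ h => exact h.inv_left

lemma retr_mul {C : Set I} (hC : Sep M C) (x : G) : retr cs hC x * retr cs hC.compl x = x := by
  classical
  induction x using cs.simple_induction_left with
  | one => simp
  | mul_simple_left x i ih =>
    rw [map_mul, map_mul, mul_assoc, ← mul_assoc (retr cs hC x),
      (par_commute cs hC (retr_mem cs hC x) (retr_mem cs hC.compl (cs.simple i))).eq, mul_assoc, ih,
      retr_simple, retr_simple, ← mul_assoc]
    by_cases hi : i ∈ C <;> simp [hi]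

lemma retr_comm {C : Set I} (hC : Sep M C) {x : G} (hx : x ∈ (⁅(⊤ : Subgroup G), (⊤ : Subgroup G)⁆ : Subgroup G)) :
    retr cs hC x ∈ ⁅par cs C, par cs C⁆ := by
  have h1 : retr cs hC x ∈ (⁅(⊤ : Subgroup G), (⊤ : Subgroup G)⁆ : Subgroup G).map (retr cs hC) := ⟨x, hx, rfl⟩
  rw [Subgroup.map_commutator] at h1
  refine Subgroup.commutator_mono ?_ ?_ h1 <;>
  · rintro _ ⟨y, _, rfl⟩
    exact retr_mem cs hC y

lemma simple_fix {C : Set I} (hC : Sep M C) {s : I} (hs : s ∉ C) {v : I → ℝ} (hv : ∀ i ∉ C, v i = 0) :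
    rep cs (cs.simple s) v = v := by
  have : bil M (rt s) v = 0 := by
    have e : v = ∑ i, v i • rt i := by ext j; simp [rt_apply, Finset.sum_apply]
    rw [e, map_sum]
    refine Finset.sum_eq_zero fun i _ => ?_
    by_cases hi : i ∈ C
    · rw [map_smul, bil_rt_rt]; simp [gram, hC s hs i hi]
    · simp [hv i hi]
  rw [rep_simple_apply, this]; simp

lemma retr_rep {C : Set I} (hC : Sep M C) (x : G) {v : I → ℝ} (hv : ∀ i ∉ C, v i = 0) :
    rep cs (retr cs hC x) v = rep cs x v := by
  classical
  induction x using cs.simple_induction_left with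
  | one => simp
  | mul_simple_left x i ih =>
    rw [map_mul, rep_mul_apply, rep_mul_apply, ← ih, retr_simple]
    split
    · rfl
    · rw [simple_fix cs hC ‹_›, rep_one_apply]
      intro j hj
      rw [par_coord cs (retr_mem cs hC x) v hj, hv j hj]

lemma rt_supp {C : Set I} {c : I} (hc : c ∈ C) : ∀ i ∉ C, (rt c : I → ℝ) i = 0 := by
  intro i hi
  rw [rt_apply, if_neg]; rintro rfl; exact hi hc

lemma gram_ne_zero {s t : I} (h : M s t = 0 ∨ 2 < M s t) : gram M s t ≠ 0 := by
  simp only [gram, neg_ne_zero]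
  rcases h with h | h
  · simp [h]
  · have h3 : (3:ℝ) ≤ M s t := by exact_mod_cast h
    apply (Real.cos_pos_of_mem_Ioo ?_).ne'
    constructor
    · have : 0 < Real.pi / M s t := by positivity
      linarith [Real.pi_pos]
    · exact div_lt_div_of_pos_left Real.pi_pos (by norm_num) (by linarith)

/-- The element `g` acts on the span of the simple roots of `C` as the scalar `1` or `-1`. -/
def Scal (C : Set I) (g : G) : Prop :=
  ∃ ε : ℝ, (ε = 1 ∨ ε = -1) ∧ ∀ c ∈ C, rep cs g (rt c) = ε • rt c

variable {cs}

/-- The lines on which a reflection acts as `-1` are spanned by its root. -/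
lemma line_of_neg {α v : I → ℝ} (hα : bil M α α = 1) (hv : bil M v v = 1) (h : refl M α v = - v) :
    ∃ ε : ℝ, (ε = 1 ∨ ε = -1) ∧ v = ε • α := by
  have e : v = bil M α v • α := by
    ext k
    have := congrFun h k
    simp only [refl_apply, Pi.sub_apply, Pi.smul_apply, Pi.neg_apply, smul_eq_mul] at this ⊢
    linarith
  generalize bil M α v = c at e
  rw [e] at hv
  simp only [map_smul, LinearMap.smul_apply, hα, smul_eq_mul, mul_one] at hv
  exact ⟨c, mul_self_eq_one_iff.1 hv, e⟩

lemma line_of_commute {g t : G} (h : Commute g t) {α : I → ℝ} (hα : bil M α α = 1)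
    (ht : ∀ v, rep cs t v = refl M α v) : ∃ ε : ℝ, (ε = 1 ∨ ε = -1) ∧ rep cs g α = ε • α := by
  refine line_of_neg hα (by rw [bil_rep, hα]) ?_
  rw [← ht, ← rep_mul_apply, ← h.eq, rep_mul_apply, ht, refl_apply, hα, ← map_neg]
  congr 1; module

lemma bil_rt_self (c : I) : bil M (rt c) (rt c) = 1 := by rw [bil_rt_rt, gram_self]

lemma refl_simple (c : I) (v : I → ℝ) : rep cs (cs.simple c) v = refl M (rt c) v := by rw [rep_simple]

/-- An element which preserves the lines of the simple roots of a connected `C` acts with the same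
sign on adjacent, and hence on all, simple roots of `C`. -/
lemma scal_of_lines {C : Set I} (hC : Irr M C) {g : G}
    (h : ∀ c ∈ C, ∃ ε : ℝ, (ε = 1 ∨ ε = -1) ∧ rep cs g (rt c) = ε • rt c) : Scal cs C g := by
  obtain ⟨c0, hc0⟩ := hC.1
  obtain ⟨ε, hε, h0⟩ := h c0 hc0
  refine ⟨ε, hε, fun c hc => ?_⟩
  have hp := hC.2 c0 hc0 c hc
  induction hp with
  | refl => exact h0
  | tail hab hbc ih =>
    rename_i b c
    obtain ⟨hb, hc, hne, hM⟩ := hbc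
    obtain ⟨η, hη, h1⟩ := h c hc
    have h2 := ih hb
    have h3 := bil_rep cs g (rt b) (rt c)
    rw [h1, h2] at h3
    simp only [map_smul, LinearMap.smul_apply, bil_rt_rt, smul_eq_mul] at h3
    have h4 : ε * η = 1 := by
      apply mul_right_cancel₀ (gram_ne_zero hM)
      linarith
    have : η = ε := by rcases hε with rfl | rfl <;> linarith
    rw [h1, this]

lemma scal_of_commute {C : Set I} (hC : Irr M C) {g : G}
    (h : ∀ c ∈ C, Commute g (cs.simple c)) : Scal cs C g :=
  scal_of_lines hC fun c hc => line_of_commute (h c hc) (bil_rt_self c) (refl_simple c)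

/-- Let a finite Coxeter group be the product of commuting subgroups `H` and `K`. Then one of the
two preserves the line of a given simple root `α`. Otherwise some `h'` and `k'` both move this line.
The reflection `r` in `α` is a product `h₁ k₁`, whose factors are `±1` on `α` and hence, as `k₁`
commutes with `h'`, `k₁` is `±1` on the plane of `α` and `γ = h' α`. The rotation `r (h' r h'⁻¹)` of
this plane is a commutator of elements of `H`, so that `k'` commutes with it and `k' α` lies in the
plane. There `r` agrees with `h₁` up to sign, whence `r` is `-1` on `k' α`, which forces `k' α =
±α`. -/
lemma stepC [Finite G] {H K : Subgroup G} (hHK : ∀ h ∈ H, ∀ k ∈ K, Commute h k)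
    (hgen : ∀ g : G, ∃ h ∈ H, ∃ k ∈ K, g = h * k) (c : I) :
    (∀ h ∈ H, ∃ ε : ℝ, (ε = 1 ∨ ε = -1) ∧ rep cs h (rt c) = ε • rt c) ∨
    (∀ k ∈ K, ∃ ε : ℝ, (ε = 1 ∨ ε = -1) ∧ rep cs k (rt c) = ε • rt c) := by
  by_contra hcon
  push Not at hcon
  obtain ⟨⟨h', hh', hh⟩, ⟨k', hk', hk⟩⟩ := hcon
  obtain ⟨h1, hh1, k1, hk1, hr⟩ := hgen (cs.simple c)
  set α : I → ℝ := rt c with hα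
  set r := cs.simple c with hrdef
  have hr' : ∀ v, rep cs r v = refl M α v := refl_simple c
  have hαα : bil M α α = 1 := bil_rt_self c
  set γ := rep cs h' α with hγ
  have hγγ : bil M γ γ = 1 := by rw [hγ, bil_rep, hαα]
  have c1 : Commute h1 r := by rw [hr]; exact (Commute.refl h1).mul_right (hHK _ hh1 _ hk1)
  obtain ⟨ε, hε, e1⟩ := line_of_commute c1 hαα hr'
  have hε2 : ε * ε = 1 := by rcases hε with rfl | rfl <;> norm_num
  have e2 : rep cs k1 α = (-ε) • α := by
    have : rep cs r α = - α := by rw [hr', refl_apply, hαα]; module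
    rw [hr, (hHK _ hh1 _ hk1).eq, rep_mul_apply, e1, map_smul] at this
    calc rep cs k1 α = (ε * ε) • rep cs k1 α := by rw [hε2, one_smul]
      _ = ε • ε • rep cs k1 α := by rw [mul_smul]
      _ = _ := by rw [this]; module
  have e3 : rep cs k1 γ = (-ε) • γ := by
    rw [hγ, ← rep_mul_apply, ← (hHK _ hh' _ hk1).eq, rep_mul_apply, e2, map_smul]
  -- on the plane of `α` and `γ` the element `h1` acts as `-ε r`
  have e4 : ∀ a b : ℝ, rep cs h1 (a • α + b • γ) = (-ε) • rep cs r (a • α + b • γ) := by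
    intro a b
    have : rep cs k1 (a • α + b • γ) = (-ε) • (a • α + b • γ) := by
      rw [map_add, map_smul, map_smul, e2, e3]; module
    rw [hr, rep_mul_apply, this, map_smul, smul_smul, neg_mul_neg, hε2, one_smul]
  set b := bil M α γ with hb
  have hb2 : b ^ 2 ≠ 1 := by
    intro hb2
    have hne : γ - b • α = 0 := by
      by_contra hne
      have := posDef cs hne
      simp only [map_sub, map_smul, LinearMap.sub_apply, LinearMap.smul_apply, smul_eq_mul, hαα, hγγ,
        bil_symm M γ α, ← hb] at this
      nlinarith
    exact hh b (mul_self_eq_one_iff.1 (by rwa [← pow_two])) (sub_eq_zero.1 hne)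
  have c2 : Commute (r * (h' * r * h'⁻¹)) k' := by
    have : r * (h' * r * h'⁻¹) = (h1 * h' * h1⁻¹ * h'⁻¹) := by
      have hri : r = r⁻¹ := (inv_simple cs c).symm
      have : r * (h' * r * h'⁻¹) = r * h' * r⁻¹ * h'⁻¹ := by rw [← hri]; group
      rw [this, hr]
      have h2 : k1 * h' * k1⁻¹ = h' := by rw [← (hHK _ hh' _ hk1).eq]; group
      calc _ = h1 * (k1 * h' * k1⁻¹) * h1⁻¹ * h'⁻¹ := by group
        _ = _ := by rw [h2]
    rw [this]
    exact hHK _ (mul_mem (mul_mem (mul_mem hh1 hh') (inv_mem hh1)) (inv_mem hh')) _ hk'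
  have hρ : ∀ v, rep cs (r * (h' * r * h'⁻¹)) v = refl M α (refl M γ v) := by
    intro v
    rw [rep_mul_apply, hrdef, rep_conj, refl_simple]
  have e5 : ∃ a d : ℝ, rep cs k' α = a • α + d • γ := by
    have f1 : refl M α (refl M γ (α - b • γ)) = (α - b • γ) + (-2 * (1 - b^2)) • α := by
      have g1 : refl M γ (α - b • γ) = α - b • γ := by
        rw [refl_apply, map_sub, map_smul, hγγ, bil_symm M γ α, ← hb]
        simp
      rw [g1, refl_apply, map_sub, map_smul, hαα, ← hb, smul_eq_mul]
      module
    have f2 : rep cs (r * (h' * r * h'⁻¹)) (rep cs k' (α - b • γ)) =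
        rep cs k' (rep cs (r * (h' * r * h'⁻¹)) (α - b • γ)) := by
      rw [← rep_mul_apply, ← rep_mul_apply, c2.eq]
    rw [hρ, hρ, f1] at f2
    set u := rep cs k' (α - b • γ) with hu
    rw [map_add, map_smul, ← hu] at f2
    obtain ⟨p, q, hpq⟩ : ∃ p q : ℝ, refl M α (refl M γ u) = u + p • α + q • γ :=
      ⟨- (2 * bil M α (refl M γ u)), -(2 * bil M γ u), by
        rw [refl_apply M α, refl_apply M γ]; module⟩
    rw [hpq] at f2
    have hne : -2 * (1 - b^2) ≠ 0 := by
      intro h; apply hb2; linarith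
    have f3 : p • α + q • γ = (-2 * (1 - b^2)) • rep cs k' α := by
      have := sub_eq_zero.2 f2
      rw [← sub_eq_zero, ← this]; module
    generalize -2 * (1 - b^2) = t at hne f3
    refine ⟨t⁻¹ * p, t⁻¹ * q, ?_⟩
    rw [mul_smul, mul_smul, ← smul_add, f3, smul_smul, inv_mul_cancel₀ hne, one_smul]
  obtain ⟨a, d, e6⟩ := e5
  have e7 : rep cs h1 (rep cs k' α) = ε • rep cs k' α := by
    rw [← rep_mul_apply, (hHK _ hh1 _ hk').eq, rep_mul_apply, e1, map_smul]
  have e8 : refl M α (rep cs k' α) = - rep cs k' α := by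
    rw [← hr']
    rw [e6, e4, ← e6] at e7
    have := congrArg (fun v => ε • v) e7
    simp only [smul_smul, hε2, mul_neg, one_smul] at this
    rw [neg_smul, one_smul] at this
    exact neg_eq_iff_eq_neg.1 this
  obtain ⟨η, hη, e9⟩ := line_of_neg hαα (by rw [bil_rep, hαα]) e8
  exact hk η hη e9

/-- For adjacent vertices `c` and `d` it is the same factor which preserves the lines of the two
simple roots: otherwise the two simple reflections, up to sign, belong on their plane to `H` and `K`
respectively, and would commute. -/
lemma step_adj {H K : Subgroup G} (hHK : ∀ h ∈ H, ∀ k ∈ K, Commute h k)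
    (hgen : ∀ g : G, ∃ h ∈ H, ∃ k ∈ K, g = h * k) {c d : I} (hne : c ≠ d) (hcd : gram M c d ≠ 0)
    (hc : ∀ h ∈ H, ∃ ε : ℝ, (ε = 1 ∨ ε = -1) ∧ rep cs h (rt c) = ε • rt c)
    (hd : ∀ k ∈ K, ∃ ε : ℝ, (ε = 1 ∨ ε = -1) ∧ rep cs k (rt d) = ε • rt d) : False := by
  obtain ⟨h1, hh1, k1, hk1, hr1⟩ := hgen (cs.simple c)
  obtain ⟨h2, hh2, k2, hk2, hr2⟩ := hgen (cs.simple d)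
  have aux : ∀ (g : G) (ε η : ℝ), (ε = 1 ∨ ε = -1) → (η = 1 ∨ η = -1) → rep cs g (rt c) = ε • rt c →
      rep cs g (rt d) = η • rt d → η = ε := by
    intro g ε η hε hη e1 e2
    have h3 := bil_rep cs g (rt c) (rt d)
    rw [e1, e2] at h3
    simp only [map_smul, LinearMap.smul_apply, bil_rt_rt, smul_eq_mul] at h3
    have h4 : ε * η = 1 := by
      apply mul_right_cancel₀ hcd
      linarith
    rcases hε with rfl | rfl <;> linarith
  -- on the plane of the two roots `h2` acts as the scalar `η` and `k1` as the scalar `ε`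
  have c2 : Commute h2 (cs.simple d) := by rw [hr2]; exact (Commute.refl h2).mul_right (hHK _ hh2 _ hk2)
  obtain ⟨η', hη', f1⟩ := line_of_commute c2 (bil_rt_self d) (refl_simple d)
  obtain ⟨η, hη, f2⟩ := hc h2 hh2
  rw [aux h2 η η' hη hη' f2 f1] at f1
  have c1 : Commute k1 (cs.simple c) := by rw [hr1]; exact ((hHK _ hh1 _ hk1).symm).mul_right (Commute.refl k1)
  obtain ⟨ε, hε, f3⟩ := line_of_commute c1 (bil_rt_self c) (refl_simple c)
  obtain ⟨ε', hε', f4⟩ := hd k1 hk1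
  rw [aux k1 ε ε' hε hε' f3 f4] at f4
  have ε2 : ε * ε = 1 := by rcases hε with rfl | rfl <;> norm_num
  have η2 : η * η = 1 := by rcases hη with rfl | rfl <;> norm_num
  have g1 : ∀ x y : ℝ, rep cs h1 (x • rt c + y • rt d) = ε • rep cs (cs.simple c) (x • rt c + y • rt d) := by
    intro x y
    rw [hr1, rep_mul_apply, map_add (rep cs k1), map_smul, map_smul, f3, f4]
    simp only [map_add, map_smul]
    rw [smul_comm x ε, smul_comm y ε, ← smul_add, smul_smul, ε2, one_smul]
  have g2 : ∀ x y : ℝ, rep cs k2 (x • rt c + y • rt d) = η • rep cs (cs.simple d) (x • rt c + y • rt d) := by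
    intro x y
    rw [hr2, (hHK _ hh2 _ hk2).eq, rep_mul_apply, map_add (rep cs h2), map_smul, map_smul, f2, f1]
    simp only [map_add, map_smul]
    rw [smul_comm x η, smul_comm y η, ← smul_add, smul_smul, η2, one_smul]
  have e : rep cs h1 (rep cs k2 (rt c)) = rep cs k2 (rep cs h1 (rt c)) := by
    rw [← rep_mul_apply, ← rep_mul_apply, (hHK _ hh1 _ hk2).eq]
  have rd : rep cs (cs.simple d) (rt c) = (1:ℝ) • rt c + (-2 * gram M c d) • rt d := by
    rw [rep_simple_apply, bil_rt_rt, gram_symm]; module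
  have rc : rep cs (cs.simple c) (rt c) = (-1 : ℝ) • rt c + (0:ℝ) • rt d := by
    rw [rep_simple_rt_self]; module
  have k2c := g2 1 0
  have h1c := g1 1 0
  rw [zero_smul, add_zero, one_smul] at k2c h1c
  rw [k2c, h1c, rd, rc, map_smul, map_smul, g1, g2] at e
  have := congrFun e d
  simp only [rep_simple_apply, map_add, map_smul, bil_rt_rt, gram_self, smul_eq_mul, Pi.add_apply, Pi.sub_apply,
    Pi.smul_apply, rt_self, rt_apply, if_neg hne, if_neg hne.symm, gram_symm M d c] at this
  have h0 : ε * η * gram M c d = 0 := by linear_combination (-1/4) * this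
  rcases hε with rfl | rfl <;> rcases hη with rfl | rfl <;> exact hcd (by linarith)

end Retr
end BM

/-! ### Matching of components in a finite Coxeter group -/

namespace BM
open CoxeterSystem
open scoped commutatorElement

section Abstract
variable {A B : Type*} [Group A] [Group B]

/-- A homomorphism which is injective on the commutator subgroup has a central kernel. -/
lemma ker_le_center (f : A →* B) (hf : ∀ x ∈ commutator A, f x = 1 → x = 1) : f.ker ≤ Subgroup.center A := by
  intro k hk
  rw [Subgroup.mem_center_iff]
  intro x
  have h : ⁅k, x⁆ = 1 := hf _ (Subgroup.commutator_mem_commutator (Subgroup.mem_top _) (Subgroup.mem_top _))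
    (by rw [map_commutatorElement, MonoidHom.mem_ker.1 hk]; simp)
  exact (commutatorElement_eq_one_iff_mul_comm.1 h).symm

lemma index_two_of_center (hB : ∀ x ∈ Subgroup.center B, ∀ y ∈ Subgroup.center B, x ≠ 1 → y ≠ 1 → x = y)
    (K : Subgroup B) (h : ∀ b, ∃ k ∈ K, ∃ ζ ∈ Subgroup.center B, b = k * ζ) (hK : K ≠ ⊤) :
    K.index = 2 ∧ ∃ ζ ∈ Subgroup.center B, ζ ∉ K := by
  obtain ⟨b, hb⟩ : ∃ b, b ∉ K := by
    by_contra hcon; push Not at hcon; exact hK (eq_top_iff.2 fun x _ => hcon x)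
  obtain ⟨k, hk, ζ, hζ, rfl⟩ := h b
  have hζK : ζ ∉ K := fun h => hb (mul_mem hk h)
  refine ⟨Subgroup.index_eq_two_iff.2 ⟨ζ⁻¹, fun b => ?_⟩, ζ, hζ, hζK⟩
  by_cases hb : b ∈ K
  · refine Or.inr ⟨hb, fun h2 => hζK ?_⟩
    have := mul_mem (inv_mem h2) hb
    simpa using this
  · refine Or.inl ⟨?_, hb⟩
    obtain ⟨k', hk', ξ, hξ, rfl⟩ := h b
    have : ξ = ζ := hB _ hξ _ hζ (by rintro rfl; exact hb (by simpa using hk')) (by rintro rfl; exact hζK (one_mem _))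
    rw [this]; simpa using hk'

variable [Finite A] [Finite B]

/-- Let the center of `B` have at most one nontrivial element. A homomorphism from a smaller group
`A` to `B` which is surjective up to the center of `B` is an embedding of index two which misses a
central element. -/
theorem abstract_lt
    (hB : ∀ x ∈ Subgroup.center B, ∀ y ∈ Subgroup.center B, x ≠ 1 → y ≠ 1 → x = y)
    (P' : A →* B) (hsB : ∀ b, ∃ k ∈ P'.range, ∃ ζ ∈ Subgroup.center B, b = k * ζ)
    (hlt : Nat.card A < Nat.card B) : Function.Injective P' ∧ Nat.card B = 2 * Nat.card A ∧
    P'.range.index = 2 ∧ ∃ ζ ∈ Subgroup.center B, ζ ∉ P'.range := by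
  have hr : Nat.card P'.ker * Nat.card P'.range = Nat.card A := by
    rw [← Subgroup.index_ker, Subgroup.card_mul_index]
  have hne : P'.range ≠ ⊤ := by
    intro h
    have h3 : Nat.card P'.range = Nat.card B := by rw [h]; exact Nat.card_congr Subgroup.topEquiv.toEquiv
    have : 0 < Nat.card P'.ker := Nat.card_pos
    rw [h3] at hr
    nlinarith
  obtain ⟨h3, h4⟩ := index_two_of_center hB _ hsB hne
  have h5 := P'.range.card_mul_index
  rw [h3] at h5
  have h6 : Nat.card P'.ker = 1 := by
    have h7 : 0 < Nat.card P'.ker := Nat.card_pos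
    have h8 : 0 < Nat.card P'.range := Nat.card_pos
    by_contra hc
    have h9 : 2 ≤ Nat.card P'.ker := by omega
    nlinarith
  refine ⟨(MonoidHom.ker_eq_bot_iff _).1 (Subgroup.card_eq_one.1 h6), ?_, h3, h4⟩
  rw [h6] at hr; omega

/-- Let the centers of `A` and `B` have at most one nontrivial element, and let `P` and `P'` be
homomorphisms between `A` and `B`, mutually inverse on the commutator subgroups, with `P` surjective
up to the center of `A`. If the orders agree, there is an isomorphism which extends the restriction
of `P'` to the commutator subgroup. -/
theorem abstract_eq (hA : ∀ x ∈ Subgroup.center A, ∀ y ∈ Subgroup.center A, x ≠ 1 → y ≠ 1 → x = y)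
    (hB : ∀ x ∈ Subgroup.center B, ∀ y ∈ Subgroup.center B, x ≠ 1 → y ≠ 1 → x = y)
    (P : B →* A) (P' : A →* B) (h1 : ∀ x ∈ commutator A, P (P' x) = x) (h2 : ∀ y ∈ commutator B, P' (P y) = y)
    (hsA : ∀ a, ∃ k ∈ P.range, ∃ ζ ∈ Subgroup.center A, a = k * ζ)
    (hc : Nat.card A = Nat.card B) : ∃ φ : A ≃* B, ∀ x ∈ commutator A, φ x = P' x := by
  by_cases i1 : Function.Injective P'
  · exact ⟨MulEquiv.ofBijective P' (Nat.bijective_iff_injective_and_card _ |>.2 ⟨i1, hc⟩), fun _ _ => rfl⟩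
  by_cases i2 : Function.Injective P
  · refine ⟨(MulEquiv.ofBijective P (Nat.bijective_iff_injective_and_card _ |>.2 ⟨i2, hc.symm⟩)).symm, fun x hx => ?_⟩
    rw [MulEquiv.symm_apply_eq]
    exact (h1 x hx).symm
  have j1 : ∀ x ∈ commutator A, P' x = 1 → x = 1 := fun x hx h => by rw [← h1 x hx, h, map_one]
  have j2 : ∀ x ∈ commutator B, P x = 1 → x = 1 := fun x hx h => by rw [← h2 x hx, h, map_one]
  obtain ⟨z, hz, hz1⟩ : ∃ z, P' z = 1 ∧ z ≠ 1 := by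
    by_contra hcon; push Not at hcon
    exact i1 ((injective_iff_map_eq_one _).2 hcon)
  obtain ⟨z', hz', hz1'⟩ : ∃ z, P z = 1 ∧ z ≠ 1 := by
    by_contra hcon; push Not at hcon
    exact i2 ((injective_iff_map_eq_one _).2 hcon)
  have zc := ker_le_center P' j1 hz
  have zc' := ker_le_center P j2 hz'
  have hne : P.range ≠ ⊤ := by
    intro h
    exact i2 ((Nat.bijective_iff_surjective_and_card _).2 ⟨MonoidHom.range_eq_top.1 h, hc.symm⟩).1
  obtain ⟨h3, ζ, hζ, hζK⟩ := index_two_of_center hA _ hsA hne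
  have hζz : ζ = z := hA _ hζ _ zc (by rintro rfl; exact hζK (one_mem _)) hz1
  subst hζz
  set K := P.range
  have z2 : z' * z' = 1 :=
    mul_eq_one_iff_eq_inv.2 (hB _ zc' _ (inv_mem zc') hz1' (inv_ne_one.2 hz1'))
  classical
  let χ : A →* B :=
    { toFun := fun a => if a ∈ K then 1 else z'
      map_one' := by simp [one_mem]
      map_mul' := fun a b => by
        have := Subgroup.mul_mem_iff_of_index_two h3 (a := a) (b := b)
        by_cases ha : a ∈ K <;> by_cases hb : b ∈ K <;> simp [this, ha, hb, z2] }
  have hχ : ∀ a, χ a ∈ Subgroup.center B := by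
    intro a
    change (if a ∈ K then 1 else z') ∈ _
    split
    · exact one_mem _
    · exact zc'
  let φ : A →* B :=
    { toFun := fun a => P' a * χ a
      map_one' := by simp
      map_mul' := fun a b => by
        rw [map_mul, map_mul, mul_assoc, ← mul_assoc (P' b), Subgroup.mem_center_iff.1 (hχ a) (P' b)]
        group }
  have hinj : Function.Injective φ := by
    refine (injective_iff_map_eq_one _).2 fun a ha => ?_
    have ha : P' a * (if a ∈ K then 1 else z') = 1 := ha
    split at ha
    · rw [mul_one] at ha
      by_contra hne
      have : a = ζ := hA _ (ker_le_center P' j1 ha) _ zc hne hz1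
      subst this; exact hζK ‹_›
    · rename_i haK
      exfalso
      obtain ⟨k, hk, ξ, hξ, rfl⟩ := hsA a
      have hξ1 : ξ = ζ := hA _ hξ _ zc (by rintro rfl; exact haK (by simpa using hk)) hz1
      subst hξ1
      rw [map_mul, hz, mul_one] at ha
      have hkc : k ∈ Subgroup.center A := by
        rw [Subgroup.mem_center_iff]
        intro x
        have h : ⁅k, x⁆ = 1 := j1 _ (Subgroup.commutator_mem_commutator (Subgroup.mem_top _) (Subgroup.mem_top _))
          (by
            rw [map_commutatorElement, mul_eq_one_iff_eq_inv.1 ha]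
            rw [commutatorElement_eq_one_iff_mul_comm]
            exact (Subgroup.mem_center_iff.1 (inv_mem zc') _).symm)
        exact (commutatorElement_eq_one_iff_mul_comm.1 h).symm
      have hk1 : k ≠ 1 := by
        rintro rfl
        rw [map_one, one_mul] at ha; exact hz1' ha
      exact hζK (hA _ hkc _ zc hk1 hz1 ▸ hk)
  refine ⟨MulEquiv.ofBijective φ (Nat.bijective_iff_injective_and_card _ |>.2 ⟨hinj, hc⟩), fun x hx => ?_⟩
  change P' x * (if x ∈ K then 1 else z') = _
  rw [if_pos ⟨P' x, h1 x hx⟩, mul_one]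

end Abstract

section Components
variable {I : Type*} [Fintype I] [DecidableEq I] {M : CoxeterMatrix I} {G : Type*} [Group G]
  {cs : CoxeterSystem M G}

variable (M) in
/-- The connected component of the vertex `i` in the Coxeter diagram. -/
def compOf (i : I) : Set I :=
  {j | Relation.ReflTransGen (fun x y => x ≠ y ∧ (M x y = 0 ∨ 2 < M x y)) i j}

lemma mem_compOf (i : I) : i ∈ compOf M i := Relation.ReflTransGen.refl

lemma irr_compOf (i : I) : Irr M (compOf M i) := by
  have sym : ∀ x y : I, (x ≠ y ∧ (M x y = 0 ∨ 2 < M x y)) → (y ≠ x ∧ (M y x = 0 ∨ 2 < M y x)) :=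
    fun x y h => ⟨h.1.symm, by rw [M.symmetric]; exact h.2⟩
  have key : ∀ u ∈ compOf M i, Relation.ReflTransGen
      (fun x y => x ∈ compOf M i ∧ y ∈ compOf M i ∧ x ≠ y ∧ (M x y = 0 ∨ 2 < M x y)) i u := by
    intro u hu
    induction hu with
    | refl => exact .refl
    | tail hab hbc ih => exact ih.tail ⟨hab, hab.tail hbc, hbc⟩
  refine ⟨⟨i, mem_compOf i⟩, fun u hu v hv => ?_⟩
  refine Relation.ReflTransGen.trans ?_ (key v hv)
  have := key u hu
  rw [← Relation.reflTransGen_swap] at this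
  refine Relation.ReflTransGen.mono (fun x y hxy => ?_) _ _ this
  exact ⟨hxy.2.1, hxy.1, sym _ _ hxy.2.2⟩

lemma sep_compOf (i : I) : Sep M (compOf M i) := by
  intro s hs c hc
  by_contra h
  refine hs (Relation.ReflTransGen.tail hc ⟨?_, ?_⟩)
  · rintro rfl; exact hs hc
  · rw [M.symmetric]
    have h1 : M s c ≠ 1 := by
      intro h1
      exact M.off_diagonal s c (by rintro rfl; exact hs hc) h1
    omega

lemma Irr.subset_of_sep {C L : Set I} (hC : Irr M C) (hL : Sep M L) {i : I} (hi : i ∈ C) (hi' : i ∈ L) : C ⊆ L := by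
  intro j hj
  have := hC.2 i hi j hj
  induction this with
  | refl => exact hi'
  | tail hab hbc ih =>
    obtain ⟨hb, hc, hne, hM⟩ := hbc
    by_contra hn
    have := hL _ hn _ (ih hb)
    rw [M.symmetric] at this
    omega

/-- The subgroup which fixes the simple roots of `C`. -/
def fixer (cs : CoxeterSystem M G) (C : Set I) : Subgroup G where
  carrier := {g | ∀ c ∈ C, rep cs g (rt c) = rt c}
  one_mem' := fun c _ => by simp
  mul_mem' := fun {a b} ha hb c hc => by rw [rep_mul_apply, hb c hc, ha c hc]
  inv_mem' := fun {a} ha c hc => by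
    conv_lhs => rw [← ha c hc]
    simp

lemma Scal.inv_apply {C : Set I} {g : G} {ε : ℝ} (hε : ε = 1 ∨ ε = -1) {v : I → ℝ}
    (h : rep cs g v = ε • v) : rep cs g⁻¹ v = ε • v := by
  have e2 : ε * ε = 1 := by rcases hε with rfl | rfl <;> norm_num
  have : rep cs g⁻¹ (rep cs g v) = ε • rep cs g⁻¹ v := by rw [h, map_smul]
  rw [rep_inv_rep] at this
  conv_rhs => rw [this]
  rw [smul_smul, e2, one_smul]

lemma Scal.mul {C : Set I} {g h : G} (hg : Scal cs C g) (hh : Scal cs C h) : Scal cs C (g * h) := by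
  obtain ⟨ε, hε, h1⟩ := hg
  obtain ⟨η, hη, h2⟩ := hh
  refine ⟨η * ε, ?_, fun c hc => ?_⟩
  · rcases hε with rfl | rfl <;> rcases hη with rfl | rfl <;> norm_num
  · rw [rep_mul_apply, h2 c hc, map_smul, h1 c hc, smul_smul]

lemma scal_one {C : Set I} : Scal cs C (1 : G) := ⟨1, Or.inl rfl, fun c _ => by simp⟩

lemma comm_le_fixer {C : Set I} {H : Subgroup G} (h : ∀ g ∈ H, Scal cs C g) : ⁅H, H⁆ ≤ fixer cs C := by
  rw [Subgroup.commutator_le]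
  intro a ha b hb c hc
  obtain ⟨ε, hε, h1⟩ := h a ha
  obtain ⟨η, hη, h2⟩ := h b hb
  have h3 := Scal.inv_apply (C := C) hε (h1 c hc)
  have h4 := Scal.inv_apply (C := C) hη (h2 c hc)
  have ε2 : ε * ε = 1 := by rcases hε with rfl | rfl <;> norm_num
  have η2 : η * η = 1 := by rcases hη with rfl | rfl <;> norm_num
  rw [commutatorElement_def, rep_mul_apply, rep_mul_apply, rep_mul_apply, h4]
  simp only [map_smul, h3, h2 c hc, h1 c hc, smul_smul]
  rw [show η * ε * η * ε = 1 by linear_combination η * η * ε2 + η2, one_smul]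

lemma not_scal_simple {C : Set I} (hnt : C.Nontrivial) {c : I} (hc : c ∈ C) : ¬ Scal cs C (cs.simple c) := by
  rintro ⟨ε, hε, h⟩
  obtain ⟨d, hd, hne⟩ := hnt.exists_ne c
  have h1 := congrFun (h c hc) c
  have h2 := congrFun (h d hd) d
  rw [rep_simple_rt_self] at h1
  rw [rep_simple_coord _ _ hne] at h2
  simp [rt_self] at h1 h2
  rw [← h1] at h2; norm_num at h2

/-- The commutator subgroup of an irreducible visual subgroup of rank at least two is nontrivial. -/
lemma comm_ne_one {C : Set I} (hC : Irr M C) (hnt : C.Nontrivial)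
    (h : ∀ x ∈ (⁅par cs C, par cs C⁆ : Subgroup G), x = 1) : False := by
  obtain ⟨c, hc⟩ := hC.1
  refine not_scal_simple (cs := cs) hnt hc (scal_of_commute hC fun d hd => ?_)
  exact commutatorElement_eq_one_iff_commute.1 (h _
    (Subgroup.commutator_mem_commutator (simple_mem_par cs hc) (simple_mem_par cs hd)))

/-- If a finite Coxeter group is the product of commuting subgroups, one of them acts as `±1` on the
simple roots of a given connected `C`. -/
lemma scal_dichotomy [Finite G] {C : Set I} (hC : Irr M C) {H K : Subgroup G} (hHK : ∀ h ∈ H, ∀ k ∈ K, Commute h k)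
    (hgen : ∀ g : G, ∃ h ∈ H, ∃ k ∈ K, g = h * k) :
    (∀ h ∈ H, Scal cs C h) ∨ (∀ k ∈ K, Scal cs C k) := by
  by_cases hex : ∃ c ∈ C, ∀ h ∈ H, ∃ ε : ℝ, (ε = 1 ∨ ε = -1) ∧ rep cs h (rt c) = ε • rt c
  · obtain ⟨c, hc, h⟩ := hex
    refine Or.inl fun g hg => scal_of_lines hC fun d hd => ?_
    have hp := hC.2 c hc d hd
    suffices ∀ h ∈ H, ∃ ε : ℝ, (ε = 1 ∨ ε = -1) ∧ rep cs h (rt d) = ε • rt d from this g hg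
    clear hg
    induction hp with
    | refl => exact h
    | tail hab hbc ih =>
      obtain ⟨hb, hc, hne, hM⟩ := hbc
      rcases stepC (cs := cs) hHK hgen _ with h1 | h1
      · exact h1
      · exact (step_adj hHK hgen hne (gram_ne_zero hM) (ih hb) h1).elim
  · push Not at hex
    refine Or.inr fun g hg => scal_of_lines hC fun d hd => ?_
    rcases stepC (cs := cs) hHK hgen d with h1 | h1
    · obtain ⟨h, hh, h2⟩ := hex d hd
      obtain ⟨ε, hε, h3⟩ := h1 h hh
      exact (h2 ε hε h3).elim
    · exact h1 g hg

lemma scal_center {C : Set I} (hC : Irr M C) {z : par cs C} (hz : z ∈ Subgroup.center (par cs C)) :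
    Scal cs C (z : G) :=
  scal_of_commute hC fun c hc => by
    have := Subgroup.mem_center_iff.1 hz ⟨_, simple_mem_par cs hc⟩
    exact (congrArg Subtype.val this).symm

/-- The center of an irreducible visual subgroup has at most one nontrivial element, since it acts
by `±1` on the simple roots. -/
lemma center_eq {C : Set I} (hC : Irr M C) : ∀ x ∈ Subgroup.center (par cs C), ∀ y ∈ Subgroup.center (par cs C),
    x ≠ 1 → y ≠ 1 → x = y := by
  have key : ∀ x ∈ Subgroup.center (par cs C), x ≠ 1 → ∀ c ∈ C, rep cs (x : G) (rt c) = (-1 : ℝ) • rt c := by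
    intro x hx hx1
    obtain ⟨ε, rfl | rfl, h⟩ := scal_center hC hx
    · exact (hx1 (Subtype.ext (par_inj cs x.2 (one_mem _) fun c hc => by rw [h c hc]; simp))).elim
    · exact h
  intro x hx y hy hx1 hy1
  exact Subtype.ext (par_inj cs x.2 y.2 fun c hc => by rw [key x hx hx1 c hc, key y hy hy1 c hc])

lemma center_of_scal {C : Set I} {z : par cs C} (hz : Scal cs C (z : G)) : z ∈ Subgroup.center (par cs C) := by
  obtain ⟨ε, hε, h⟩ := hz
  have h' : ∀ v : I → ℝ, (∀ i ∉ C, v i = 0) → rep cs (z : G) v = ε • v := by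
    intro v hv
    have e : v = ∑ i, v i • rt i := by ext j; simp [rt_apply, Finset.sum_apply]
    rw [e, map_sum, Finset.smul_sum]
    refine Finset.sum_congr rfl fun i _ => ?_
    by_cases hi : i ∈ C
    · rw [map_smul, h i hi, smul_comm]
    · simp [hv i hi]
  rw [Subgroup.mem_center_iff]
  intro g
  refine Subtype.ext (par_inj cs (mul_mem g.2 z.2) (mul_mem z.2 g.2) fun c hc => ?_)
  rw [Subgroup.coe_mul, Subgroup.coe_mul, rep_mul_apply, rep_mul_apply, h c hc, map_smul, h']
  intro i hi
  rw [par_coord cs g.2 _ hi, rt_supp hc i hi]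

end Components

section Match
variable {I : Type*} [Fintype I] [DecidableEq I] {M : CoxeterMatrix I} {G : Type*} [Group G]
  {I' : Type*} [Fintype I'] [DecidableEq I'] {M' : CoxeterMatrix I'}
  {cs : CoxeterSystem M G} {cs' : CoxeterSystem M' G}

/-- The components of the second system other than `C'` act as `±1` on the simple roots of `C`. -/
def Rel (cs : CoxeterSystem M G) (cs' : CoxeterSystem M' G) (C : Set I) (C' : Set I') : Prop :=
  ∀ g ∈ par cs' C'ᶜ, Scal cs C g

/-- The subset `C` is a connected component of the diagram with more than one vertex. -/
structure Comp (M : CoxeterMatrix I) (C : Set I) : Prop where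
  irr : Irr M C
  sep : Sep M C
  nt : C.Nontrivial

/-- Every component `C` is related to a component of the other system, namely to the component of a
generator which does not act as `±1` on the simple roots of `C`. -/
lemma exists_rel [Finite G] (cs : CoxeterSystem M G) (cs' : CoxeterSystem M' G) {C : Set I} (hC : Comp M C) :
    ∃ C', Comp M' C' ∧ Rel cs cs' C C' := by
  obtain ⟨i', hi'⟩ : ∃ i', ¬ Scal cs C (cs'.simple i') := by
    by_contra hcon; push Not at hcon
    obtain ⟨c, hc⟩ := hC.irr.1
    refine not_scal_simple (cs := cs) hC.nt hc ?_
    generalize cs.simple c = g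
    induction g using cs'.simple_induction_left with
    | one => exact scal_one
    | mul_simple_left x i ih => exact (hcon i).mul ih
  have hsep := sep_compOf (M := M') i'
  have hK : Rel cs cs' C (compOf M' i') := by
    refine (scal_dichotomy (cs := cs) hC.irr (H := par cs' (compOf M' i')) (K := par cs' (compOf M' i')ᶜ)
      (fun h hh k hk => par_commute cs' hsep hh hk) (fun g => ⟨_, retr_mem cs' hsep g, _,
        retr_mem cs' hsep.compl g, (retr_mul cs' hsep g).symm⟩)).resolve_left fun h => hi' ?_
    exact h _ (simple_mem_par cs' (mem_compOf i'))
  refine ⟨compOf M' i', ⟨irr_compOf i', hsep, ?_⟩, hK⟩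
  by_contra hnt
  rw [Set.not_nontrivial_iff] at hnt
  refine hi' (scal_of_commute hC.irr fun c _ => ?_)
  generalize cs.simple c = g
  induction g using cs'.simple_induction_left with
  | one => exact Commute.one_right _
  | mul_simple_left x i ih =>
    refine Commute.mul_right ?_ ih
    by_cases hi : i ∈ compOf M' i'
    · rw [hnt hi (mem_compOf i')]; exact Commute.refl _
    · exact (simple_comm cs' (hsep i hi i' (mem_compOf i'))).symm

lemma Comp.eq_or_subset {C L : Set I} (hC : Comp M C) (hL : Comp M L) : C = L ∨ C ⊆ Lᶜ := by
  by_cases h : ∃ i ∈ C, i ∈ L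
  · obtain ⟨i, h1, h2⟩ := h
    exact Or.inl ((hC.irr.subset_of_sep hL.sep h1 h2).antisymm (hL.irr.subset_of_sep hC.sep h2 h1))
  · push Not at h
    exact Or.inr h

lemma eq_one_of_fix {C : Set I} (hC : Sep M C) {x : G} (h : ∀ c ∈ C, rep cs x (rt c) = rt c) :
    retr cs hC x = 1 :=
  par_inj cs (retr_mem cs hC x) (one_mem _) fun c hc => by
    rw [retr_rep cs hC x (rt_supp hc), h c hc, rep_one_apply]

lemma comm_mono_top (H : Subgroup G) : ⁅H, H⁆ ≤ (⁅(⊤ : Subgroup G), (⊤ : Subgroup G)⁆ : Subgroup G) :=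
  Subgroup.commutator_mono le_top le_top

/-- The relation `Rel` composes to the identity. If `C` and `C''` were different, the commutator
subgroup of `C` would act trivially on the simple roots of `C'`, hence lie in the commutator
subgroup of the complement of `C'`, and so act trivially on the simple roots of `C`. -/
lemma rel_rel {C C'' : Set I} {C' : Set I'} (hC : Comp M C) (hC' : Comp M' C') (hC'' : Comp M C'')
    (h1 : Rel cs cs' C C') (h2 : Rel cs' cs C' C'') : C = C'' := by
  refine (hC.eq_or_subset hC'').resolve_right fun hsub => comm_ne_one (cs := cs) hC.irr hC.nt fun x hx => ?_
  have f1 : x ∈ fixer cs' C' := comm_le_fixer (H := par cs C) (fun g hg => h2 g (par_mono cs hsub hg)) hx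
  have f2 := eq_one_of_fix hC'.sep f1
  have f3 := retr_mul cs' hC'.sep x
  rw [f2, one_mul] at f3
  have f4 := retr_comm cs' hC'.sep.compl (comm_mono_top _ hx)
  rw [f3] at f4
  have f5 : x ∈ fixer cs C := comm_le_fixer (H := par cs' C'ᶜ) h1 f4
  refine par_inj cs (Subgroup.commutator_le_self _ hx) (one_mem _) fun c hc => ?_
  rw [f5 c hc, rep_one_apply]

/-- Related components have nested commutator subgroups: by `rel_rel`, a component of the second
system other than `C'` is related to a component other than `C`, so that the commutator subgroup of
`C` fixes its simple roots. -/
lemma comm_le_of_rel [Finite G] {C : Set I} {C' : Set I'} (hC : Comp M C) (hC' : Comp M' C')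
    (h1 : Rel cs cs' C C') : ⁅par cs C, par cs C⁆ ≤ ⁅par cs' C', par cs' C'⁆ := by
  intro x hx
  have f1 : ∀ i ∈ C'ᶜ, rep cs' x (rt i) = rt i := by
    intro i hi
    suffices hs : ∀ g ∈ par cs C, Scal cs' (compOf M' i) g from comm_le_fixer hs hx i (mem_compOf i)
    by_cases hnt : (compOf M' i).Nontrivial
    · have hL : Comp M' (compOf M' i) := ⟨irr_compOf i, sep_compOf i, hnt⟩
      obtain ⟨L, hLc, hL2⟩ := exists_rel cs' cs hL
      rcases hC.eq_or_subset hLc with rfl | hsub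
      · exact (hi (rel_rel hL hC hC' hL2 h1 ▸ mem_compOf i)).elim
      · exact fun g hg => hL2 g (par_mono cs hsub hg)
    · rw [Set.not_nontrivial_iff] at hnt
      have hcen : ∀ g : G, Commute g (cs'.simple i) := by
        intro g
        induction g using cs'.simple_induction_left with
        | one => exact Commute.one_left _
        | mul_simple_left x j ih =>
          refine Commute.mul_left ?_ ih
          by_cases hj : j ∈ compOf M' i
          · rw [hnt hj (mem_compOf i)]; exact Commute.refl _
          · exact simple_comm cs' (sep_compOf i j hj i (mem_compOf i))
      intro g _
      refine scal_of_commute (irr_compOf i) fun c hc => ?_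
      rw [hnt hc (mem_compOf i)]
      exact hcen g
  have f2 := eq_one_of_fix hC'.sep.compl f1
  have f3 := retr_mul cs' hC'.sep x
  rw [f2, mul_one] at f3
  rw [← f3]
  exact retr_comm cs' hC'.sep (comm_mono_top _ hx)

lemma mem_commutator_iff {H : Subgroup G} (x : H) : x ∈ commutator H ↔ (x : G) ∈ (⁅H, H⁆ : Subgroup G) := by
  rw [← Subgroup.map_subtype_commutator]
  simp [Subgroup.mem_map]

/-- The retraction `retr`, restricted to a subgroup `H`. -/
noncomputable def retrHom (cs : CoxeterSystem M G) {C : Set I} (hC : Sep M C) (H : Subgroup G) : H →* par cs C :=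
  ((retr cs hC).comp H.subtype).codRestrict _ fun x => retr_mem cs hC _

lemma retrHom_coe {C : Set I} (hC : Sep M C) (H : Subgroup G) (x : H) : (retrHom cs hC H x : G) = retr cs hC x := rfl

lemma retrHom_surj {C : Set I} {C' : Set I'} (hC : Comp M C) (hC' : Comp M' C') (h : Rel cs cs' C C')
    (a : par cs C) : ∃ k ∈ (retrHom cs hC.sep (par cs' C')).range, ∃ ζ ∈ Subgroup.center (par cs C), a = k * ζ := by
  refine ⟨_, ⟨⟨_, retr_mem cs' hC'.sep (a : G)⟩, rfl⟩,
    retrHom cs hC.sep (par cs' C'ᶜ) ⟨_, retr_mem cs' hC'.sep.compl (a : G)⟩, center_of_scal ?_, ?_⟩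
  · obtain ⟨ε, hε, h2⟩ := h _ (retr_mem cs' hC'.sep.compl (a : G))
    refine ⟨ε, hε, fun c hc => ?_⟩
    rw [retrHom_coe, retr_rep cs hC.sep _ (rt_supp hc), h2 c hc]
  · apply Subtype.ext
    rw [Subgroup.coe_mul, retrHom_coe, retrHom_coe, ← map_mul]
    change _ = retr cs hC.sep (retr cs' _ _ * retr cs' _ _)
    rw [retr_mul, retr_eq cs hC.sep a.2]

/-- The matching of components of two Coxeter systems of one finite group: every component `C` of
the first system has the same commutator subgroup as some component `C'` of the second. The
retractions between the two visual subgroups restrict to the identity on it and are surjective up to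
the centers, so that `abstract_eq` and `abstract_lt` apply. -/
theorem finMatch [Finite G] (cs : CoxeterSystem M G) (cs' : CoxeterSystem M' G) {C : Set I} (hC : Comp M C) :
    ∃ C', Comp M' C' ∧ ⁅par cs C, par cs C⁆ = ⁅par cs' C', par cs' C'⁆ ∧
    (Nat.card (par cs C) = Nat.card (par cs' C') → ∃ φ : par cs C ≃* par cs' C',
      ∀ x : par cs C, (x : G) ∈ (⁅par cs C, par cs C⁆ : Subgroup G) → (φ x : G) = x) ∧
    (Nat.card (par cs C) < Nat.card (par cs' C') → ∃ φ : par cs C →* par cs' C',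
      Function.Injective φ ∧ (∀ x : par cs C, (x : G) ∈ (⁅par cs C, par cs C⁆ : Subgroup G) → (φ x : G) = x) ∧
      Nat.card (par cs' C') = 2 * Nat.card (par cs C) ∧ φ.range.index = 2 ∧
      ∃ ζ ∈ Subgroup.center (par cs' C'), ζ ∉ φ.range) := by
  obtain ⟨C', hC', h1⟩ := exists_rel cs cs' hC
  obtain ⟨C'', hC'', h2⟩ := exists_rel cs' cs hC'
  obtain rfl := rel_rel hC hC' hC'' h1 h2
  have hD : ⁅par cs C, par cs C⁆ = ⁅par cs' C', par cs' C'⁆ :=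
    (comm_le_of_rel hC hC' h1).antisymm (comm_le_of_rel hC' hC h2)
  have e1 : ∀ x : par cs C, (x : G) ∈ (⁅par cs C, par cs C⁆ : Subgroup G) →
      (retrHom cs' hC'.sep (par cs C) x : G) = x := by
    intro x hx
    rw [retrHom_coe, retr_eq]
    rw [hD] at hx
    exact Subgroup.commutator_le_self _ hx
  have e2 : ∀ x : par cs' C', (x : G) ∈ (⁅par cs' C', par cs' C'⁆ : Subgroup G) →
      (retrHom cs hC.sep (par cs' C') x : G) = x := by
    intro x hx
    rw [retrHom_coe, retr_eq]
    rw [← hD] at hx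
    exact Subgroup.commutator_le_self _ hx
  refine ⟨C', hC', hD, fun hc => ?_, fun hc => ?_⟩
  · obtain ⟨φ, hφ⟩ := abstract_eq (center_eq hC.irr) (center_eq hC'.irr) (retrHom cs hC.sep (par cs' C'))
      (retrHom cs' hC'.sep (par cs C)) (fun x hx => by
        rw [mem_commutator_iff] at hx
        apply Subtype.ext
        rw [e2 _ (by rw [e1 _ hx, ← hD]; exact hx), e1 _ hx])
      (fun x hx => by
        rw [mem_commutator_iff] at hx
        apply Subtype.ext
        rw [e1 _ (by rw [e2 _ hx, hD]; exact hx), e2 _ hx]) (retrHom_surj hC hC' h1) hc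
    exact ⟨φ, fun x hx => by rw [hφ x ((mem_commutator_iff x).2 hx), e1 x hx]⟩
  · obtain ⟨a, b, c, d⟩ := abstract_lt (center_eq hC'.irr) (retrHom cs' hC'.sep (par cs C))
      (retrHom_surj hC' hC h2) hc
    exact ⟨_, a, e1, b, c, d⟩

end Match
end BM

/-! ### Matching of bases -/

namespace BM
open CoxeterSystem
open scoped commutatorElement

section Matched

/-- Conjugation by `w` carries the commutator subgroup of `A` onto that of `B`, and its restriction
extends to an isomorphism `A ≃* B` if the orders agree, and to an embedding of index two missing a
central element of `B` if the order of `A` is smaller. -/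
structure Matched {W : Type*} [Group W] (A B : Subgroup W) (w : W) : Prop where
  comm : (⁅A, A⁆ : Subgroup W).map (MulAut.conj w).toMonoidHom = ⁅B, B⁆
  eq : Nat.card A = Nat.card B → ∃ φ : A ≃* B,
    ∀ x : A, (x : W) ∈ (⁅A, A⁆ : Subgroup W) → (φ x : W) = w * x * w⁻¹
  lt : Nat.card A < Nat.card B → ∃ φ : A →* B, Function.Injective φ ∧
    (∀ x : A, (x : W) ∈ (⁅A, A⁆ : Subgroup W) → (φ x : W) = w * x * w⁻¹) ∧
    Nat.card B = 2 * Nat.card A ∧ φ.range.index = 2 ∧ ∃ ζ ∈ Subgroup.center B, ζ ∉ φ.range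

/-- A matching within a group `G` can be transported along isomorphisms to subgroups of `W`. -/
lemma Matched.transport {G W : Type*} [Group G] [Group W] {A B : Subgroup G} {A' B' : Subgroup W}
    (h : Matched A B 1) (eA : A' ≃* A) (eB : B ≃* B') (w : W)
    (hcomm : (⁅A', A'⁆ : Subgroup W).map (MulAut.conj w).toMonoidHom = ⁅B', B'⁆)
    (hc : ∀ (x : A') (y : B), (y : G) = eA x → (eB y : W) = w * x * w⁻¹) : Matched A' B' w := by
  have hA : Nat.card A' = Nat.card A := Nat.card_congr eA.toEquiv
  have hB : Nat.card B = Nat.card B' := Nat.card_congr eB.toEquiv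
  have hm : ∀ x : A', (x : W) ∈ (⁅A', A'⁆ : Subgroup W) → (eA x : G) ∈ (⁅A, A⁆ : Subgroup G) := by
    intro x hx
    rw [← mem_commutator_iff] at hx ⊢
    have : eA.toMonoidHom x ∈ (commutator A').map eA.toMonoidHom := ⟨x, hx, rfl⟩
    rw [commutator, Subgroup.map_commutator] at this
    exact Subgroup.commutator_mono le_top le_top this
  refine ⟨hcomm, fun hcard => ?_, fun hcard => ?_⟩
  · obtain ⟨φ, hφ⟩ := h.eq (by rw [← hA, hcard, hB])
    refine ⟨(eA.trans φ).trans eB, fun x hx => hc x _ ?_⟩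
    have := hφ _ (hm x hx)
    simpa using this
  · obtain ⟨φ, h1, h2, h3, h4, ζ, h5, h6⟩ := h.lt (by rw [← hA, hB]; exact hcard)
    have hr : (eB.toMonoidHom.comp (φ.comp eA.toMonoidHom)).range = φ.range.map eB.toMonoidHom := by
      ext y
      simp only [MonoidHom.mem_range, Subgroup.mem_map]
      constructor
      · rintro ⟨x, rfl⟩; exact ⟨_, ⟨_, rfl⟩, rfl⟩
      · rintro ⟨_, ⟨x, rfl⟩, rfl⟩; exact ⟨eA.symm x, by simp⟩
    refine ⟨eB.toMonoidHom.comp (φ.comp eA.toMonoidHom), ?_, fun x hx => hc x _ ?_, ?_, ?_, eB ζ, ?_, ?_⟩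
    · exact eB.injective.comp (h1.comp eA.injective)
    · have := h2 _ (hm x hx)
      simpa using this
    · rw [← hB, h3, hA]
    · rw [hr]; exact (Subgroup.index_map_equiv _ eB).trans h4
    · rw [Subgroup.mem_center_iff] at h5 ⊢
      intro y
      obtain ⟨y, rfl⟩ := eB.surjective y
      rw [← map_mul, ← map_mul, h5]
    · rw [hr]
      rintro ⟨y, hy, h7⟩
      exact h6 (eB.injective h7 ▸ hy)

variable {I : Type*} [Fintype I] [DecidableEq I] {M : CoxeterMatrix I} {W : Type*} [Group W]
  {I' : Type*} [Fintype I'] [DecidableEq I'] {M' : CoxeterMatrix I'}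
  (cs : CoxeterSystem M W) (cs' : CoxeterSystem M' W)

lemma irr_restr {J : Set I} {C : Set J} : Irr (restr M J) C ↔ Irr M (Subtype.val '' C) := by
  constructor
  · rintro ⟨h1, h2⟩
    refine ⟨h1.image _, ?_⟩
    rintro _ ⟨u, hu, rfl⟩ _ ⟨v, hv, rfl⟩
    refine Relation.ReflTransGen.lift Subtype.val (fun x y hxy => ?_) _ _ (h2 u hu v hv)
    exact ⟨⟨x, hxy.1, rfl⟩, ⟨y, hxy.2.1, rfl⟩, fun h => hxy.2.2.1 (Subtype.ext h), hxy.2.2.2⟩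
  · rintro ⟨h1, h2⟩
    refine ⟨by simpa using h1, fun u hu v hv => ?_⟩
    have h0 := h2 u ⟨u, hu, rfl⟩ v ⟨v, hv, rfl⟩
    suffices ∀ x, Relation.ReflTransGen (fun x y => x ∈ Subtype.val '' C ∧ y ∈ Subtype.val '' C ∧ x ≠ y ∧
        (M x y = 0 ∨ 2 < M x y)) u.1 x → ∀ hx : x ∈ J, Relation.ReflTransGen (fun x y => x ∈ C ∧ y ∈ C ∧ x ≠ y ∧
        ((restr M J) x y = 0 ∨ 2 < (restr M J) x y)) u ⟨x, hx⟩ from this v.1 h0 v.2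
    intro x hx
    induction hx with
    | refl => intro hx; exact .refl
    | tail hab hbc ih =>
      intro hx
      obtain ⟨⟨b, hb, rfl⟩, ⟨c, hc, rfl⟩, hne, hM⟩ := hbc
      exact (ih b.2).tail ⟨hb, hc, fun h => hne (congrArg _ h), hM⟩

/-- The matching of bases within a finite visual subgroup which is visual for both systems, where a
base of the first system is a component. -/
lemma matched_one {B J : Set I} (hB : Base cs B) (hBJ : B ⊆ J) (hJ : (par cs J : Set W).Finite) {J' : Set I'}
    (h : par cs J = par cs' J') : ∃ B' : Set I', Irr M' B' ∧ B'.Nontrivial ∧ Matched (par cs B) (par cs' B') 1 := by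
  classical
  set G := par cs J with hG
  have : Finite G := hJ
  set c1 := parSystem cs J hG
  set c2 := parSystem cs' J' h
  set C : Set J := Subtype.val ⁻¹' B with hC
  have hCB : Subtype.val '' C = B := by rw [hC, Subtype.image_preimage_coe, Set.inter_eq_right.2 hBJ]
  have hcomp : Comp (restr M J) C := by
    refine ⟨irr_restr.2 (hCB ▸ hB.irr), fun s hs c hc => ?_, ?_⟩
    · refine (hB.cond s.1 hs).resolve_right (fun hf => hf (hJ.subset ?_)) c.1 hc
      exact par_mono cs (Set.insert_subset s.2 hBJ)
    · obtain ⟨x, hx, y, hy, hne⟩ := hB.nt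
      exact ⟨⟨x, hBJ hx⟩, hx, ⟨y, hBJ hy⟩, hy, fun h => hne (congrArg Subtype.val h)⟩
  obtain ⟨C', hC', hD, h1, h2⟩ := finMatch c1 c2 hcomp
  have e1 : (par c1 C).map G.subtype = par cs B := by rw [par_parSystem, hCB]
  have e2 : (par c2 C').map G.subtype = par cs' (Subtype.val '' C') := by rw [par_parSystem]
  have hm : Matched (par c1 C) (par c2 C') 1 := by
    refine ⟨?_, fun hc => ?_, fun hc => ?_⟩
    · rw [← hD]; ext; simp
    · obtain ⟨φ, hφ⟩ := h1 hc
      exact ⟨φ, fun x hx => by rw [hφ x hx]; simp⟩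
    · obtain ⟨φ, a, b, c⟩ := h2 hc
      exact ⟨φ, a, fun x hx => by rw [b x hx]; simp, c⟩
  refine ⟨Subtype.val '' C', irr_restr.1 hC'.irr, hC'.nt.image Subtype.val_injective, ?_⟩
  rw [← e1, ← e2]
  refine hm.transport (Subgroup.equivMapOfInjective _ _ G.subtype_injective).symm
    (Subgroup.equivMapOfInjective _ _ G.subtype_injective) 1 ?_ ?_
  · rw [← Subgroup.map_commutator, ← Subgroup.map_commutator, hD]
    ext; simp
  · intro x y hxy
    obtain ⟨x, rfl⟩ := (Subgroup.equivMapOfInjective (par c1 C) _ G.subtype_injective).surjective x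
    rw [MulEquiv.symm_apply_apply] at hxy
    rw [Subgroup.coe_equivMapOfInjective_apply, Subgroup.coe_equivMapOfInjective_apply, hxy]
    simp

lemma par_map (e : W ≃* W) (J : Set I) : par (cs.map e) J = (par cs J).map e.toMonoidHom := by
  rw [par, par, MonoidHom.map_closure, Set.image_image]; rfl

lemma Base.conj {B : Set I} (h : Base cs B) (w : W) : Base (cs.map (MulAut.conj w)) B := by
  have hf : ∀ J, (par (cs.map (MulAut.conj w)) J : Set W).Finite ↔ (par cs J : Set W).Finite := by
    intro J
    rw [par_map, Subgroup.coe_map]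
    exact Set.finite_image_iff (MulAut.conj w).injective.injOn
  exact ⟨h.irr, (hf B).2 h.fin, h.nt, fun B' h1 h2 h3 => h.max B' h1 h2 ((hf B').1 h3)⟩

/-- Every base matches an irreducible subset of the other system. -/
theorem exists_matched {B : Set I} (hB : Base cs B) :
    ∃ (B' : Set I') (w : W), Irr M' B' ∧ B'.Nontrivial ∧ Matched (par cs B) (par cs' B') w := by
  obtain ⟨J, hBJ, hJ⟩ := exists_maxSph cs hB.fin
  obtain ⟨w, J', hw⟩ := match_maxSph cs cs' hJ
  obtain ⟨B', h1, h2, h3⟩ := matched_one (cs.map (MulAut.conj w)) cs' (hB.conj cs w) hBJ (J' := J')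
    (by rw [par_map, Subgroup.coe_map]; exact hJ.fin.image _) (by rw [par_map, ← hw])
  refine ⟨B', w, h1, h2, ?_⟩
  refine h3.transport ((Subgroup.equivMapOfInjective (par cs B) (MulAut.conj w).toMonoidHom
    (MulAut.conj w).injective).trans (MulEquiv.subgroupCongr (par_map cs _ B).symm)) (MulEquiv.refl _) w ?_ ?_
  · rw [← h3.comm, par_map, ← Subgroup.map_commutator, Subgroup.map_map]
    congr 1
    ext; simp
  · intro x y hxy
    simp only [MulEquiv.refl_apply, hxy]
    change (MulAut.conj w) x.1 = _
    simp

lemma finite_of_matched {A B : Subgroup W} {w : W}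
    (h : (⁅A, A⁆ : Subgroup W).map (MulAut.conj w).toMonoidHom = ⁅B, B⁆) (hA : (A : Set W).Finite) :
    ((⁅B, B⁆ : Subgroup W) : Set W).Finite := by
  rw [← h, Subgroup.coe_map]
  exact (hA.subset (Subgroup.commutator_le_self _)).image _

lemma Base.subset_of_matched {B C : Set I} (hB : Base cs B) {w : W}
    (h : (⁅par cs B, par cs B⁆ : Subgroup W).map (MulAut.conj w).toMonoidHom ≤ ⁅par cs C, par cs C⁆) : B ⊆ C :=
  hB.subset_of_conj w fun x hx => Subgroup.commutator_le_self _ (h ⟨x, hx, by simp⟩)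

/-- Every base `B` matches a base of the other system. Its match `C` lies in a base, whose match
back contains `B` and hence equals `B`; comparing the orders of the commutator subgroups, `C` is
that base. -/
theorem exists_base_matched {B : Set I} (hB : Base cs B) :
    ∃ (B' : Set I') (w : W), Base cs' B' ∧ Matched (par cs B) (par cs' B') w := by
  obtain ⟨C, w, hi, hnt, hm⟩ := exists_matched cs cs' hB
  have hCf : (par cs' C : Set W).Finite := par_finite_of_comm cs' (finite_of_matched hm.comm hB.fin)
  obtain ⟨C2, hC2, hb2⟩ := exists_base cs' hi hnt hCf
  obtain ⟨B2, w2, hi2, hnt2, hm2⟩ := exists_matched cs' cs hb2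
  have hB2f : (par cs B2 : Set W).Finite := par_finite_of_comm cs (finite_of_matched hm2.comm hb2.fin)
  have hle : (⁅par cs' C, par cs' C⁆ : Subgroup W) ≤ ⁅par cs' C2, par cs' C2⁆ :=
    Subgroup.commutator_mono (par_mono cs' hC2) (par_mono cs' hC2)
  have hsub : B ⊆ B2 := by
    refine hB.subset_of_matched cs (w := w2 * w) ?_
    rw [← hm2.comm, map_mul]
    refine le_trans (le_of_eq ?_) (Subgroup.map_mono hle)
    rw [← hm.comm, Subgroup.map_map]; rfl
  have h2 := hB.max B2 hsub hi2 hB2f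
  subst h2
  have hcard : ∀ {A B : Subgroup W} {w : W} (h : (⁅A, A⁆ : Subgroup W).map (MulAut.conj w).toMonoidHom = ⁅B, B⁆),
      Nat.card (⁅B, B⁆ : Subgroup W) = Nat.card (⁅A, A⁆ : Subgroup W) := by
    intro A B w h
    rw [← h]
    exact Nat.card_congr (Subgroup.equivMapOfInjective _ _ (MulAut.conj w).injective).symm.toEquiv
  have hfin2 : Finite (⁅par cs' C2, par cs' C2⁆ : Subgroup W) :=
    (hb2.fin.subset (Subgroup.commutator_le_self _))
  have heq := Subgroup.eq_of_le_of_card_ge hle (by rw [hcard hm.comm, hcard hm2.comm])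
  have h3 : C2 ⊆ C := hb2.subset_of_matched cs' (w := 1) (by rw [heq]; intro x; simp)
  obtain rfl : C2 = C := h3.antisymm hC2
  exact ⟨C2, w, hb2, hm⟩

/-- A base is the only irreducible subset whose commutator subgroup is conjugate to that of the
base. -/
lemma Base.unique {B C : Set I} (hB : Base cs B) (hC : Irr M C) {w : W}
    (h : (⁅par cs B, par cs B⁆ : Subgroup W).map (MulAut.conj w).toMonoidHom = ⁅par cs C, par cs C⁆) : C = B :=
  hB.max C (hB.subset_of_matched cs h.le) hC (par_finite_of_comm cs (finite_of_matched h hB.fin))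

end Matched
end BM

/-! ### Positive definite diagrams: test vectors -/

namespace BM
open CoxeterSystem

section Classify
variable {I : Type*} [Fintype I] [DecidableEq I] {M : CoxeterMatrix I}

/-- `f 0, …, f (n-1)` are the consecutive vertices of a subdiagram of type `Aₙ`. -/
def IsPath (M : CoxeterMatrix I) (f : ℕ → I) (n : ℕ) : Prop :=
  ∀ a b, a < n → b < n → M (f a) (f b) = if a = b then 1 else if a + 1 = b ∨ b + 1 = a then 3 else 2

lemma M_eq_one {i j : I} : M i j = 1 ↔ i = j :=
  ⟨fun h => by_contra fun hne => M.off_diagonal i j hne h, fun h => h ▸ M.diagonal i⟩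

lemma IsPath.inj {f : ℕ → I} {n : ℕ} (h : IsPath M f n) {a b : ℕ} (ha : a < n) (hb : b < n)
    (hab : f a = f b) : a = b := by
  have := h a b ha hb
  rw [M_eq_one.2 hab] at this
  split_ifs at this with h1 h2 <;> first | exact h1 | omega

lemma IsPath.gram {f : ℕ → I} {n : ℕ} (h : IsPath M f n) {a b : ℕ} (ha : a < n) (hb : b < n) :
    gram M (f a) (f b) = if a = b then 1 else if a + 1 = b ∨ b + 1 = a then -1 / 2 else 0 := by
  rw [BM.gram, h a b ha hb]
  split_ifs <;> simp [Real.cos_pi_div_three]; norm_num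

lemma IsPath.shift {f : ℕ → I} {n : ℕ} (h : IsPath M f n) (p k : ℕ) (hk : p + k ≤ n) :
    IsPath M (fun a => f (p + a)) k := by
  intro a b ha hb
  simp only
  rw [h _ _ (by omega) (by omega)]
  congr 1
  · simp
  · congr 1
    simp only [eq_iff_iff]; omega

lemma IsPath.rev {f : ℕ → I} {n : ℕ} (h : IsPath M f n) : IsPath M (fun a => f (n - 1 - a)) n := by
  intro a b ha hb
  simp only
  rw [h _ _ (by omega) (by omega)]
  have : (n - 1 - a = n - 1 - b) ↔ a = b := by omega
  have h2 : (n - 1 - a + 1 = n - 1 - b ∨ n - 1 - b + 1 = n - 1 - a) ↔ (a + 1 = b ∨ b + 1 = a) := by omega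
  simp only [this, h2]

lemma IsPath.append {f : ℕ → I} {n : ℕ} (h : IsPath M f n) (hn : 1 ≤ n) {s : I}
    (h3 : M (f (n - 1)) s = 3) (h2 : ∀ k < n - 1, M (f k) s = 2) :
    IsPath M (fun k => if k = n then s else f k) (n + 1) := by
  have key : ∀ a < n, M (f a) s = if a + 1 = n then 3 else 2 := by
    intro a ha
    split_ifs with h
    · rw [← h3, ← h]; rfl
    · exact h2 a (by omega)
  intro a b ha hb
  simp only
  rcases Nat.lt_succ_iff_lt_or_eq.1 ha with ha | rfl <;> rcases Nat.lt_succ_iff_lt_or_eq.1 hb with hb | rfl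
  · rw [if_neg (by omega), if_neg (by omega), h a b ha hb]
  · rw [if_neg (by omega), if_pos rfl, key a ha, if_neg (show a ≠ b by omega)]
    congr 1; simp only [eq_iff_iff]; omega
  · rw [if_neg (show b ≠ a by omega), if_pos rfl, M.symmetric, key b hb, if_neg (show a ≠ b by omega)]
    congr 1; simp only [eq_iff_iff]; omega
  · simp

/-- The vector `∑ xₖ₊₁ αₖ` supported on a path. -/
noncomputable def pv (f : ℕ → I) (x : ℕ → ℝ) (n : ℕ) : I → ℝ := ∑ k ∈ Finset.range n, x (k + 1) • rt (f k)

lemma bil_pv_rt (f : ℕ → I) (x : ℕ → ℝ) (n : ℕ) (t : I) :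
    bil M (pv f x n) (rt t) = ∑ k ∈ Finset.range n, x (k + 1) * gram M (f k) t := by
  simp [pv, map_sum, LinearMap.sum_apply, bil_rt_rt]

/-- Summation by parts: the form on a path is half the sum of the squared differences. -/
lemma IsPath.energy {f : ℕ → I} {n : ℕ} (h : IsPath M f n) {x : ℕ → ℝ} (h0 : x 0 = 0) :
    bil M (pv f x n) (pv f x n) = (∑ k ∈ Finset.range n, (x (k + 1) - x k) ^ 2) / 2 + x n ^ 2 / 2 := by
  have key : ∀ m ≤ n, bil M (pv f x m) (pv f x m)
      = (∑ k ∈ Finset.range m, (x (k + 1) - x k) ^ 2) / 2 + x m ^ 2 / 2 := by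
    intro m
    induction m with
    | zero => intro _; simp [pv, h0]
    | succ m ih =>
      intro hm
      have e : pv f x (m + 1) = pv f x m + x (m + 1) • rt (f m) := by simp [pv, Finset.sum_range_succ]
      have e2 : bil M (pv f x m) (rt (f m)) = - x m / 2 := by
        rw [bil_pv_rt]
        rcases m with _ | m
        · simp [h0]
        · rw [Finset.sum_range_succ, Finset.sum_eq_zero, h.gram (by omega) (by omega)]
          · simp; ring
          · intro k hk
            rw [Finset.mem_range] at hk
            rw [h.gram (by omega) (by omega), if_neg (by omega), if_neg (by omega), mul_zero]
      rw [e, Finset.sum_range_succ]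
      simp only [map_add, LinearMap.add_apply, map_smul, LinearMap.smul_apply, smul_eq_mul,
        bil_symm M (rt (f m)) (pv f x m), e2, bil_rt_rt, gram_self]
      rw [ih (by omega)]; ring
  exact key n le_rfl

lemma pv_nonneg {f : ℕ → I} {x : ℕ → ℝ} (hx : ∀ k, 0 ≤ x k) (n : ℕ) (i : I) : 0 ≤ pv f x n i := by
  rw [pv, Finset.sum_apply]
  refine Finset.sum_nonneg fun k _ => ?_
  simp only [Pi.smul_apply, smul_eq_mul, rt_apply]
  split_ifs <;> simp [hx]

lemma le_pv {f : ℕ → I} {x : ℕ → ℝ} (hx : ∀ k, 0 ≤ x k) {n k : ℕ} (hk : k < n) :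
    x (k + 1) ≤ pv f x n (f k) := by
  rw [pv, Finset.sum_apply]
  refine le_trans (by simp) (Finset.single_le_sum (f := fun j => (x (j + 1) • rt (f j)) (f k))
    (fun j _ => ?_) (Finset.mem_range.2 hk))
  simp only [Pi.smul_apply, smul_eq_mul, rt_apply]
  split_ifs <;> simp [hx]

/-- `t` does not lie on the path. -/
def Off (f : ℕ → I) (n : ℕ) (t : I) : Prop := ∀ k < n, f k ≠ t

lemma bil_pv_le {f : ℕ → I} {n : ℕ} {x : ℕ → ℝ} (hx : ∀ k, 0 ≤ x k) {t : I} (ht : Off f n t) {p : ℕ} (hp : p < n) :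
    bil M (pv f x n) (rt t) ≤ x (p + 1) * gram M (f p) t := by
  rw [bil_pv_rt, ← Finset.add_sum_erase _ _ (Finset.mem_range.2 hp)]
  have : ∑ k ∈ (Finset.range n).erase p, x (k + 1) * gram M (f k) t ≤ 0 :=
    Finset.sum_nonpos fun k hk => mul_nonpos_of_nonneg_of_nonpos (hx _)
      (gram_le_zero M (ht k (by simpa using Finset.mem_of_mem_erase hk)))
  linarith

lemma bil_pv_nonpos {f : ℕ → I} {n : ℕ} {x : ℕ → ℝ} (hx : ∀ k, 0 ≤ x k) {t : I} (ht : Off f n t) :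
    bil M (pv f x n) (rt t) ≤ 0 := by
  rw [bil_pv_rt]
  exact Finset.sum_nonpos fun k hk => mul_nonpos_of_nonneg_of_nonpos (hx _)
      (gram_le_zero M (ht k (by simpa using hk)))

variable (hpd : ∀ v : I → ℝ, v ≠ 0 → 0 < bil M v v)

/-- The form is positive on the sum of a vector on the path and a nonnegative vector `∑ yₜ αₜ`
off the path; the cross terms among the `αₜ` are nonpositive. -/
lemma star_pos (hpd : ∀ v : I → ℝ, v ≠ 0 → 0 < bil M v v) {f : ℕ → I} {n : ℕ} (hn : 1 ≤ n) {x : ℕ → ℝ} (hx : ∀ k, 0 ≤ x k) (hx1 : 0 < x 1)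
    (T : Finset I) (y : I → ℝ) (hy : ∀ t, 0 ≤ y t) :
    0 < bil M (pv f x n) (pv f x n) + ∑ t ∈ T, (2 * y t * bil M (pv f x n) (rt t) + y t ^ 2) := by
  set P := pv f x n with hP
  have hT : bil M (∑ t ∈ T, y t • rt t) (∑ t ∈ T, y t • rt t) ≤ ∑ t ∈ T, y t ^ 2 := by
    simp only [map_sum, LinearMap.sum_apply, map_smul, LinearMap.smul_apply, smul_eq_mul, bil_rt_rt]
    refine Finset.sum_le_sum fun s hs => ?_
    rw [← Finset.add_sum_erase _ _ hs, gram_self]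
    have : ∑ t ∈ T.erase s, y s * (y t * gram M t s) ≤ 0 :=
      Finset.sum_nonpos fun t ht => mul_nonpos_of_nonneg_of_nonpos (hy _)
        (mul_nonpos_of_nonneg_of_nonpos (hy _) (gram_le_zero M (Finset.ne_of_mem_erase ht)))
    rw [mul_add, Finset.mul_sum]
    nlinarith
  have h0 : 0 < bil M (P + ∑ t ∈ T, y t • rt t) (P + ∑ t ∈ T, y t • rt t) := by
    refine hpd _ fun h => ?_
    have h1 := congrFun h (f 0)
    have h2 : x 1 ≤ P (f 0) := le_pv hx (by omega)
    have h3 : 0 ≤ (∑ t ∈ T, y t • rt t : I → ℝ) (f 0) := by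
      rw [Finset.sum_apply]
      refine Finset.sum_nonneg fun k _ => ?_
      simp only [Pi.smul_apply, smul_eq_mul, rt_apply]
      split_ifs <;> simp [hy]
    simp only [Pi.add_apply, Pi.zero_apply] at h1
    linarith
  have h2 : bil M P (∑ t ∈ T, y t • rt t) = ∑ t ∈ T, y t * bil M P (rt t) := by simp [map_sum]
  simp only [map_add, LinearMap.add_apply, bil_symm M (∑ t ∈ T, y t • rt t) P] at h0
  rw [h2] at h0
  have h3 : ∑ t ∈ T, (2 * y t * bil M P (rt t) + y t ^ 2) = 2 * ∑ t ∈ T, y t * bil M P (rt t) + ∑ t ∈ T, y t ^ 2 := by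
    rw [Finset.sum_add_distrib, Finset.mul_sum]
    congr 1
    exact Finset.sum_congr rfl fun t _ => by ring
  linarith

/-- The all-ones vector on a path has norm one, so that the squares of the cosines of the edges
leaving the path add up to less than one. -/
lemma star_lt (hpd : ∀ v : I → ℝ, v ≠ 0 → 0 < bil M v v) {f : ℕ → I} {n : ℕ} (h : IsPath M f n) (hn : 1 ≤ n) (T : Finset I) (c : I → ℝ) (hc : ∀ t, 0 ≤ c t)
    (hT : ∀ t ∈ T, c t ≤ - ∑ k ∈ Finset.range n, gram M (f k) t) : ∑ t ∈ T, c t ^ 2 < 1 := by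
  set x : ℕ → ℝ := fun k => if k = 0 then 0 else 1
  have h1 := star_pos hpd (f := f) hn (x := x) (fun k => by simp only [x]; split_ifs <;> norm_num)
    (by simp [x]) T c hc
  have hE : bil M (pv f x n) (pv f x n) = 1 := by
    rw [h.energy (by simp [x])]
    obtain ⟨n, rfl⟩ : ∃ k, n = k + 1 := ⟨n - 1, by omega⟩
    rw [Finset.sum_range_succ']
    simp [x]; norm_num
  rw [hE] at h1
  have : ∑ t ∈ T, (2 * c t * bil M (pv f x n) (rt t) + c t ^ 2) ≤ ∑ t ∈ T, - c t ^ 2 := by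
    refine Finset.sum_le_sum fun t ht => ?_
    have h2 := hT t ht
    have h3 : bil M (pv f x n) (rt t) = ∑ k ∈ Finset.range n, gram M (f k) t := by
      rw [bil_pv_rt]; simp [x]
    rw [h3]
    nlinarith [hc t]
  rw [Finset.sum_neg_distrib] at this
  linarith

/-- The tent vector on a path with `i + j - 1` vertices, which increases linearly from `1 / i` to
`1` at the `i`-th vertex and decreases linearly to `1 / j`. -/
lemma tent (hpd : ∀ v : I → ℝ, v ≠ 0 → 0 < bil M v v) {f : ℕ → I} {n : ℕ} (h : IsPath M f n) {i j : ℕ} (hi : 1 ≤ i) (hj : 1 ≤ j) (hn : n = i + j - 1) :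
    ∃ x : ℕ → ℝ, (∀ k, 0 ≤ x k) ∧ 0 < x 1 ∧ x i = 1 ∧
      bil M (pv f x n) (pv f x n) = (1 / i + 1 / j) / 2 := by
  have hi' : (0:ℝ) < i := by exact_mod_cast hi
  have hj' : (0:ℝ) < j := by exact_mod_cast hj
  set x : ℕ → ℝ := fun k => if k ≤ i then k / i else ((i + j - k : ℕ) : ℝ) / j
  have hx1 : x 1 = 1 / i := by simp [x, hi]
  have hxi : x i = 1 := by simp [x, hi'.ne']
  have hx2 : ∀ k ≤ j, x (i + k) = 1 - k / j := by
    intro k hk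
    rcases Nat.eq_zero_or_pos k with rfl | hk0
    · simpa using hxi
    · simp only [x]; rw [if_neg (by omega), show i + j - (i + k) = j - k by omega, Nat.cast_sub hk]
      field_simp
  refine ⟨x, fun k => by simp only [x]; split_ifs <;> positivity, by rw [hx1]; positivity, hxi, ?_⟩
  rw [h.energy (by simp [x]), hn, show i + j - 1 = i + (j - 1) by omega, Finset.sum_range_add, hx2 _ (by omega)]
  have e1 : ∑ k ∈ Finset.range i, (x (k + 1) - x k) ^ 2 = ∑ k ∈ Finset.range i, (1 / i : ℝ) ^ 2 := by
    refine Finset.sum_congr rfl fun k hk => ?_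
    rw [Finset.mem_range] at hk
    simp only [x]
    rw [if_pos (by omega), if_pos (by omega)]
    push_cast; ring
  have e2 : ∑ k ∈ Finset.range (j - 1), (x (i + k + 1) - x (i + k)) ^ 2
      = ∑ k ∈ Finset.range (j - 1), (1 / j : ℝ) ^ 2 := by
    refine Finset.sum_congr rfl fun k hk => ?_
    rw [Finset.mem_range] at hk
    rw [show i + k + 1 = i + (k + 1) by ring, hx2 _ (by omega), hx2 _ (by omega)]
    push_cast; ring
  have e2' : ∑ k ∈ Finset.range (j - 1), (x (i + k + 1) - x (i + k)) ^ 2 = (j - 1) * (1 / j : ℝ) ^ 2 := by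
    rw [e2]; simp [Nat.cast_sub hj]
  rw [e1]
  simp only [add_assoc] at e2' ⊢
  rw [e2']
  simp only [Finset.sum_const, Finset.card_range, nsmul_eq_mul, Nat.cast_sub hj, Nat.cast_one]
  field_simp
  ring

/-- The bound on the label of an edge from a path to a further vertex, obtained from the tent vector
with its peak at the place of attachment. -/
lemma attach (hpd : ∀ v : I → ℝ, v ≠ 0 → 0 < bil M v v) {f : ℕ → I} {n : ℕ} (h : IsPath M f n) {i j : ℕ} (hi : 1 ≤ i) (hj : 1 ≤ j) (hn : n = i + j - 1)
    {s : I} (hs : Off f n s) : gram M (f (i - 1)) s ^ 2 < (1 / i + 1 / j) / 2 := by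
  obtain ⟨x, hx, hx1, hxi, hE⟩ := tent hpd h hi hj hn
  have hc := gram_le_zero M (hs (i - 1) (by omega))
  have h1 := star_pos hpd (f := f) (n := n) (by omega) hx hx1 {s} (fun _ => - gram M (f (i - 1)) s)
    (fun _ => by linarith)
  rw [Finset.sum_singleton, hE] at h1
  have h2 := bil_pv_le (M := M) hx hs (p := i - 1) (by omega)
  rw [show i - 1 + 1 = i by omega, hxi] at h2
  nlinarith

lemma gram_sq_lt (hpd : ∀ v : I → ℝ, v ≠ 0 → 0 < bil M v v) {s t : I} (h : s ≠ t) : gram M s t ^ 2 < 1 := by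
  have hp : IsPath M (fun _ => s) 1 := by
    intro a b ha hb
    rw [if_pos (by omega)]; simp
  have := attach hpd hp (i := 1) (j := 1) le_rfl le_rfl rfl (s := t) (fun _ _ => h)
  norm_num at this
  simpa using this

/-- The bound `attach` sharpened by a second vertex `t` outside the path which is adjacent to `s`.
-/
lemma attach2 (hpd : ∀ v : I → ℝ, v ≠ 0 → 0 < bil M v v) {f : ℕ → I} {n : ℕ} (h : IsPath M f n) {i j : ℕ} (hi : 1 ≤ i) (hj : 1 ≤ j) (hn : n = i + j - 1)
    {s t : I} (hs : Off f n s) (ht : Off f n t) (hst : s ≠ t) :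
    gram M (f (i - 1)) s ^ 2 < (1 / i + 1 / j) / 2 * (1 - gram M s t ^ 2) := by
  obtain ⟨x, hx, hx1, hxi, hE⟩ := tent hpd h hi hj hn
  have hc := gram_le_zero M (hs (i - 1) (by omega))
  have hd := gram_le_zero M hst
  have hd1 := gram_sq_lt hpd hst
  set c := gram M (f (i - 1)) s
  set d := gram M s t
  have h2 := bil_pv_le (M := M) hx hs (p := i - 1) (by omega)
  rw [show i - 1 + 1 = i by omega, hxi, one_mul] at h2
  have h3 := bil_pv_nonpos (M := M) hx ht
  obtain ⟨a, ha⟩ : ∃ a, a = - c / (1 - d ^ 2) := ⟨_, rfl⟩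
  have ha0 : 0 ≤ a := ha ▸ div_nonneg (by linarith) (by linarith)
  have hv : pv f x n + (a • rt s + (- d * a) • rt t) ≠ 0 := by
    intro h
    have h1 := congrFun h (f 0)
    have h2 : x 1 ≤ pv f x n (f 0) := le_pv hx (by omega)
    have h3 : rt s (f 0) = 0 := by rw [rt_apply, if_neg (hs 0 (by omega))]
    have h4 : rt t (f 0) = 0 := by rw [rt_apply, if_neg (ht 0 (by omega))]
    simp only [Pi.add_apply, Pi.smul_apply, Pi.zero_apply, h3, h4, smul_eq_mul] at h1
    linarith
  have h0 := hpd _ hv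
  simp only [map_add, LinearMap.add_apply, map_smul, LinearMap.smul_apply, smul_eq_mul, bil_rt_rt,
    gram_self, hE, bil_symm M (rt s) (pv f x n), bil_symm M (rt t) (pv f x n), gram_symm M t s] at h0
  have e1 : a * (1 - d ^ 2) = - c := by rw [ha]; field_simp [show (1 - d ^ 2) ≠ 0 by linarith]
  have e2 : a * bil M (pv f x n) (rt s) ≤ a * c := mul_le_mul_of_nonneg_left h2 ha0
  have e3 : (- d * a) * bil M (pv f x n) (rt t) ≤ 0 :=
    mul_nonpos_of_nonneg_of_nonpos (mul_nonneg (by linarith) ha0) h3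
  have e4 : 0 < (1 / (i:ℝ) + 1 / j) / 2 + a * c := by
    have : a * a * (1 - d ^ 2) = - a * c := by rw [mul_assoc, e1]; ring
    rw [show gram M s t = d from rfl] at h0
    nlinarith
  have : c ^ 2 = - (a * c) * (1 - d ^ 2) := by linear_combination c * e1
  rw [this]
  exact mul_lt_mul_of_pos_right (by linarith) (by linarith)

end Classify
end BM

/-! ### Maximal paths -/

namespace BM
open CoxeterSystem

section Classify
variable {I : Type*} [Fintype I] [DecidableEq I] {M : CoxeterMatrix I}

lemma cos_le_neg_gram {i j : I} {k : ℕ} (hk : 2 ≤ k) (h : M i j = 0 ∨ k ≤ M i j) :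
    Real.cos (Real.pi / k) ≤ - gram M i j := by
  rw [gram, neg_neg]
  rcases h with h | h
  · rw [h]; simpa using Real.cos_le_one _
  · have hk' : (2:ℝ) ≤ k := by exact_mod_cast hk
    have h' : (k:ℝ) ≤ M i j := by exact_mod_cast h
    refine Real.cos_le_cos_of_nonneg_of_le_pi (by positivity) ?_ ?_
    · exact div_le_self Real.pi_pos.le (by linarith)
    · exact div_le_div_of_nonneg_left Real.pi_pos.le (by linarith) h'

lemma gram_adj {i j : I} (h : M i j = 0 ∨ 2 < M i j) : gram M i j ≤ - 1 / 2 := by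
  have := cos_le_neg_gram (M := M) (i := i) (j := j) (k := 3) (by norm_num) (h.imp_right fun h => h)
  norm_num [Real.cos_pi_div_three] at this
  linarith

lemma gram_sq_three {i j : I} (h : M i j = 0 ∨ 2 < M i j) : 1 / 4 ≤ gram M i j ^ 2 := by
  nlinarith [gram_adj h]

lemma gram_sq_four {i j : I} (h : M i j = 0 ∨ 4 ≤ M i j) : 1 / 2 ≤ gram M i j ^ 2 := by
  have := cos_le_neg_gram (M := M) (i := i) (j := j) (k := 4) (by norm_num) h
  rw [show ((4:ℕ):ℝ) = 4 by norm_num, Real.cos_pi_div_four] at this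
  have h2 : (√2:ℝ) ^ 2 = 2 := Real.sq_sqrt (by norm_num)
  nlinarith [Real.sqrt_nonneg 2]

lemma gram_sq_five {i j : I} (h : M i j = 0 ∨ 5 ≤ M i j) : 13 / 20 ≤ gram M i j ^ 2 := by
  have := cos_le_neg_gram (M := M) (i := i) (j := j) (k := 5) (by norm_num) h
  rw [show ((5:ℕ):ℝ) = 5 by norm_num, Real.cos_pi_div_five] at this
  have h2 : (√5:ℝ) ^ 2 = 5 := Real.sq_sqrt (by norm_num)
  have h3 : (2.23:ℝ) ≤ √5 := Real.le_sqrt_of_sq_le (by norm_num)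
  nlinarith

lemma gram_sq_six {i j : I} (h : M i j = 0 ∨ 6 ≤ M i j) : 3 / 4 ≤ gram M i j ^ 2 := by
  have := cos_le_neg_gram (M := M) (i := i) (j := j) (k := 6) (by norm_num) h
  rw [show ((6:ℕ):ℝ) = 6 by norm_num, Real.cos_pi_div_six] at this
  have h2 : (√3:ℝ) ^ 2 = 3 := Real.sq_sqrt (by norm_num)
  nlinarith [Real.sqrt_nonneg 3]

lemma M_eq_two {i j : I} (hij : i ≠ j) (h : ¬ (M i j = 0 ∨ 2 < M i j)) : M i j = 2 := by
  have := M.off_diagonal i j hij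
  omega

lemma M_ne_zero (hpd : ∀ v : I → ℝ, v ≠ 0 → 0 < bil M v v) (i j : I) : M i j ≠ 0 := by
  intro h
  by_cases hij : i = j
  · subst hij; simp at h
  · have := gram_sq_lt hpd hij
    simp [gram, h] at this

/-- The squares of the cosines of the edges which leave a path from its two ends add up to less than
one. A path with a single vertex has two ends as well. -/
lemma star_lt' (hpd : ∀ v : I → ℝ, v ≠ 0 → 0 < bil M v v) {f : ℕ → I} {n : ℕ} (h : IsPath M f n) (hn : 1 ≤ n)
    (L R : Finset I) (hLR : Disjoint L R) (hL : ∀ t ∈ L, Off f n t) (hR : ∀ t ∈ R, Off f n t) :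
    ∑ t ∈ L, gram M (f 0) t ^ 2 + ∑ t ∈ R, gram M (f (n - 1)) t ^ 2 < 1 := by
  have key : ∀ t, Off f n t → ∀ k < n, ∑ k ∈ Finset.range n, gram M (f k) t ≤ gram M (f k) t := by
    intro t ht k hk
    have := bil_pv_le (M := M) (x := fun _ => 1) (fun _ => zero_le_one) ht hk
    rw [bil_pv_rt] at this
    simpa using this
  have h1 := star_lt hpd h hn (L ∪ R) (fun t => if t ∈ L then |gram M (f 0) t| else |gram M (f (n-1)) t|)
    (fun t => by split_ifs <;> exact abs_nonneg _) (fun t ht => by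
      split_ifs with h1
      · rw [abs_of_nonpos (gram_le_zero M (hL t h1 0 (by omega)))]
        linarith [key t (hL t h1) 0 (by omega)]
      · have h2 := (Finset.mem_union.1 ht).resolve_left h1
        rw [abs_of_nonpos (gram_le_zero M (hR t h2 (n-1) (by omega)))]
        linarith [key t (hR t h2) (n-1) (by omega)])
  rw [Finset.sum_union hLR] at h1
  convert h1 using 2
  · exact Finset.sum_congr rfl fun t ht => by simp [ht]
  · refine Finset.sum_congr rfl fun t ht => ?_
    rw [if_neg (fun h => Finset.disjoint_left.1 hLR h ht), sq_abs]

/-- A vertex outside a path is adjacent to at most one vertex of the path, since a positive definite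
diagram contains no cycle. -/
lemma one_nbr (hpd : ∀ v : I → ℝ, v ≠ 0 → 0 < bil M v v) {f : ℕ → I} {n : ℕ} (h : IsPath M f n) {s : I} (hs : Off f n s)
    {a b : ℕ} (hab : a < b) (hb : b < n) (ha1 : M (f a) s = 0 ∨ 2 < M (f a) s) (hb1 : M (f b) s = 0 ∨ 2 < M (f b) s) : False := by
  have hp := h.shift a (b - a + 1) (by omega)
  have := star_lt hpd hp (by omega) {s} (fun _ => 1) (fun _ => zero_le_one) (fun t ht => by
    rw [Finset.mem_singleton] at ht
    subst ht
    rw [Finset.sum_range_succ, show b - a = (b - a - 1) + 1 by omega, Finset.sum_range_succ']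
    have h3 : ∑ k ∈ Finset.range (b - a - 1), gram M (f (a + (k + 1))) t ≤ 0 :=
      Finset.sum_nonpos fun k hk => gram_le_zero M (hs _ (by rw [Finset.mem_range] at hk; omega))
    have h1 := gram_adj ha1
    have h2 := gram_adj hb1
    rw [show a + (b - a - 1 + 1) = b by omega, add_zero]
    linarith)
  simp at this

/-- A path of type `Aₙ` of maximal length. -/
structure MaxPath (M : CoxeterMatrix I) (f : ℕ → I) (n : ℕ) : Prop where
  path : IsPath M f n
  one : 1 ≤ n
  max : ∀ f' n', IsPath M f' n' → n' ≤ n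

lemma MaxPath.rev {f : ℕ → I} {n : ℕ} (h : MaxPath M f n) : MaxPath M (fun a => f (n - 1 - a)) n :=
  ⟨h.path.rev, h.one, h.max⟩

lemma exists_maxPath [Nonempty I] : ∃ f n, MaxPath M f n := by
  classical
  have hb : ∀ n, (∃ f, IsPath M f n) → n ≤ Fintype.card I := by
    rintro n ⟨f, hf⟩
    have := Fintype.card_le_of_injective (fun k : Fin n => f k) fun a b hab => Fin.ext (hf.inj a.2 b.2 hab)
    simpa using this
  have h1 : ∃ f, IsPath M f 1 := by
    refine ⟨fun _ => Classical.arbitrary I, fun a b ha hb => ?_⟩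
    rw [if_pos (by omega)]; simp
  have hc : 1 ≤ Fintype.card I := hb 1 h1
  obtain ⟨f, hf⟩ := Nat.findGreatest_spec (P := fun n => ∃ f, IsPath M f n) hc h1
  exact ⟨f, _, hf, Nat.le_findGreatest hc h1, fun f' n' h' => Nat.le_findGreatest (hb n' ⟨f', h'⟩) ⟨f', h'⟩⟩

/-- A maximal path cannot be extended at its end. -/
lemma MaxPath.last (hpd : ∀ v : I → ℝ, v ≠ 0 → 0 < bil M v v) {f : ℕ → I} {n : ℕ} (h : MaxPath M f n) {s : I}
    (hs : Off f n s) (h3 : M (f (n - 1)) s = 3) : False := by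
  have := h.max _ _ (h.path.append h.one h3 fun k hk => M_eq_two (hs k (by omega)) fun hk2 =>
    one_nbr hpd h.path hs hk (by have := h.one; omega) hk2 (by omega))
  omega

lemma MaxPath.first (hpd : ∀ v : I → ℝ, v ≠ 0 → 0 < bil M v v) {f : ℕ → I} {n : ℕ} (h : MaxPath M f n) {s : I}
    (hs : Off f n s) (h3 : M (f 0) s = 3) : False :=
  h.rev.last hpd (s := s) (fun k hk => hs _ (by omega)) (by simpa using h3)

/-- The vertex outside the path together with the next vertex of the path has a large total weight. -/
lemma MaxPath.left (hpd : ∀ v : I → ℝ, v ≠ 0 → 0 < bil M v v) {f : ℕ → I} {n : ℕ} (h : MaxPath M f n) {s : I}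
    (hs : Off f n s) {a : ℕ} (ha : a < n) (hadj : M (f a) s = 0 ∨ 2 < M (f a) s) :
    ∃ L : Finset I, (∀ t ∈ L, t = s ∨ ∃ k < a, t = f k) ∧ 1 / 2 ≤ ∑ t ∈ L, gram M (f a) t ^ 2 := by
  rcases Nat.eq_zero_or_pos a with rfl | h0
  · refine ⟨{s}, by simp, ?_⟩
    rw [Finset.sum_singleton]
    refine gram_sq_four (hadj.imp_right fun h4 => ?_)
    have : M (f 0) s ≠ 3 := fun h3 => h.first hpd hs h3
    omega
  · refine ⟨{s, f (a - 1)}, ?_, ?_⟩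
    · intro t ht
      rw [Finset.mem_insert, Finset.mem_singleton] at ht
      exact ht.imp_right fun h => ⟨a - 1, by omega, h⟩
    · rw [Finset.sum_pair (hs _ (by omega)).symm, h.path.gram ha (by omega), if_neg (by omega), if_pos (by omega)]
      have := gram_sq_three hadj
      linarith

lemma MaxPath.right (hpd : ∀ v : I → ℝ, v ≠ 0 → 0 < bil M v v) {f : ℕ → I} {n : ℕ} (h : MaxPath M f n) {s : I}
    (hs : Off f n s) {a : ℕ} (ha : a < n) (hadj : M (f a) s = 0 ∨ 2 < M (f a) s) :
    ∃ L : Finset I, (∀ t ∈ L, t = s ∨ ∃ k < n, a < k ∧ t = f k) ∧ 1 / 2 ≤ ∑ t ∈ L, gram M (f a) t ^ 2 := by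
  have e : n - 1 - (n - 1 - a) = a := by omega
  obtain ⟨L, h1, h2⟩ := h.rev.left hpd (s := s) (fun k hk => hs _ (by omega)) (a := n - 1 - a) (by omega) (by rw [e]; exact hadj)
  rw [e] at h2
  refine ⟨L, fun t ht => (h1 t ht).imp_right ?_, h2⟩
  rintro ⟨k, hk, rfl⟩
  exact ⟨n - 1 - k, by omega, by omega, rfl⟩

/-- At most one vertex outside a maximal path is adjacent to the path. -/
lemma MaxPath.two_out (hpd : ∀ v : I → ℝ, v ≠ 0 → 0 < bil M v v) {f : ℕ → I} {n : ℕ} (h : MaxPath M f n) {s t : I}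
    (hs : Off f n s) (ht : Off f n t) (hst : s ≠ t) {a b : ℕ} (ha : a < n) (hb : b < n)
    (hsa : M (f a) s = 0 ∨ 2 < M (f a) s) (htb : M (f b) t = 0 ∨ 2 < M (f b) t) : False := by
  wlog hab : a ≤ b generalizing s t a b
  · exact this ht hs hst.symm hb ha htb hsa (by omega)
  obtain ⟨L, hL, hL2⟩ := h.left hpd hs ha hsa
  obtain ⟨R, hR, hR2⟩ := h.right hpd ht hb htb
  have hd : Disjoint L R := by
    rw [Finset.disjoint_left]
    intro x hx hy
    rcases hL x hx with rfl | ⟨k, hk, rfl⟩ <;> rcases hR _ hy with h1 | ⟨l, hl, hl2, h1⟩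
    · exact hst h1
    · exact hs l hl h1.symm
    · exact ht k (by omega) h1
    · have := h.path.inj (by omega) hl h1
      omega
  have h1 := star_lt' hpd (h.path.shift a (b - a + 1) (by omega)) (by omega) L R hd
    (fun x hx k hk h1 => by
      rcases hL x hx with rfl | ⟨l, hl, rfl⟩
      · exact hs _ (by omega) h1
      · have := h.path.inj (by omega) (by omega) h1
        omega)
    (fun x hx k hk h1 => by
      rcases hR x hx with rfl | ⟨l, hl, hl2, rfl⟩
      · exact ht _ (by omega) h1
      · have := h.path.inj (by omega) (by omega) h1
        omega)
  rw [show a + (b - a + 1 - 1) = b by omega, add_zero] at h1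
  linarith

end Classify
end BM

/-! ### Classification of positive definite diagrams -/

namespace BM
open CoxeterSystem

/-- The Coxeter matrix on a path of `n` vertices `0, …, n-1` with labels `3` and one further vertex `n`,
joined by an edge with label `m` to the `j`-th vertex from the end of the path. -/
def tMat (n j m : ℕ) : Fin (n + 1) → Fin (n + 1) → ℕ := fun a b =>
  if a = b then 1
  else if a.val < n ∧ b.val < n then (if a.val + 1 = b.val ∨ b.val + 1 = a.val then 3 else 2)
  else if a.val + j = n ∨ b.val + j = n then m else 2

lemma tMat_eq_one {n j m : ℕ} (hm : m ≠ 1) {a b : Fin (n + 1)} (h : tMat n j m a b = 1) : a = b := by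
  by_contra hab
  unfold tMat at h
  rw [if_neg hab] at h
  split_ifs at h <;> omega

section Classify
variable {I : Type*} {M : CoxeterMatrix I}

/-- The Coxeter matrix `M` agrees with the matrix `A` up to a relabelling of the vertices. -/
def Typ (M : CoxeterMatrix I) {k : ℕ} (A : Fin k → Fin k → ℕ) : Prop :=
  ∃ e : I ≃ Fin k, ∀ u v, M u v = A (e u) (e v)

lemma typ_of {k : ℕ} {A : Fin k → Fin k → ℕ} (g : Fin k → I) (h : ∀ a b, M (g a) (g b) = A a b)
    (h1 : ∀ a b, A a b = 1 → a = b) (hs : ∀ i, ∃ a, g a = i) : Typ M A := by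
  have hg : Function.Bijective g :=
    ⟨fun a b hab => h1 a b (by rw [← h, hab, M.diagonal]), hs⟩
  refine ⟨(Equiv.ofBijective g hg).symm, fun u v => ?_⟩
  rw [← h]
  congr 1
  · exact ((Equiv.ofBijective g hg).apply_symm_apply u).symm
  · exact ((Equiv.ofBijective g hg).apply_symm_apply v).symm

/-- The possible shapes of the diagrams `tMat n j m`. -/
def Shape (n j m : ℕ) : Prop :=
  (n = 1 ∧ j = 1 ∧ 4 ≤ m) ∨ (j = 1 ∧ m = 4 ∧ 2 ≤ n) ∨ (j = 1 ∧ m = 5 ∧ (n = 2 ∨ n = 3)) ∨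
  (j = 2 ∧ m = 3 ∧ 3 ≤ n) ∨ (j = 3 ∧ m = 3 ∧ (n = 5 ∨ n = 6 ∨ n = 7))

variable [Fintype I] [DecidableEq I]

lemma attach_nat {i j : ℕ} {σ : ℝ} (hi : 1 ≤ i) (hj : 1 ≤ j) {τ : ℝ}
    (h : σ < (1 / i + 1 / j) / 2 * τ) : 2 * σ * i * j < (i + j) * τ := by
  have hi' : (0:ℝ) < i := by exact_mod_cast hi
  have hj' : (0:ℝ) < j := by exact_mod_cast hj
  have := mul_lt_mul_of_pos_right h (show (0:ℝ) < 2 * i * j by positivity)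
  have e : (1 / (i:ℝ) + 1 / j) / 2 * τ * (2 * i * j) = (i + j) * τ := by field_simp; ring
  linarith

/-- The possible places and labels of a vertex attached to a maximal path. -/
lemma shape_of (hpd : ∀ v : I → ℝ, v ≠ 0 → 0 < bil M v v) {f : ℕ → I} {i j : ℕ} (hi : 1 ≤ i) (hj : 1 ≤ j) (hji : j ≤ i)
    (h : MaxPath M f (i + j - 1)) {s : I} (hs : Off f (i + j - 1) s)
    (hadj : M (f (i - 1)) s = 0 ∨ 2 < M (f (i - 1)) s) : Shape (i + j - 1) j (M (f (i - 1)) s) := by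
  have h1 := attach_nat (τ := 1) hi hj (by rw [mul_one]; exact attach hpd h.path hi hj rfl hs)
  rw [mul_one] at h1
  have h0 := M_ne_zero hpd (f (i - 1)) s
  set m := M (f (i - 1)) s with hm
  set σ := gram M (f (i - 1)) s ^ 2
  have hij : (j:ℝ) ≤ i := by exact_mod_cast hji
  have hj1 : (1:ℝ) ≤ j := by exact_mod_cast hj
  have hpos : (0:ℝ) ≤ i * j := by positivity
  -- a lower bound for `σ` bounds `i` and `j`
  have hb : ∀ {q : ℝ}, q ≤ σ → 2 * q * i * j < i + j := fun {q} hq => by nlinarith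
  rcases (by omega : m = 3 ∨ m = 4 ∨ m = 5 ∨ 6 ≤ m) with h3 | h4 | h5 | h6
  · have h2 := hb (gram_sq_three hadj)
    have h2' : i * j < 2 * (i + j) := by
      have : (i * j : ℝ) < 2 * (i + j) := by linarith
      exact_mod_cast this
    have hj1 : j ≠ 1 := by
      rintro rfl
      exact h.last hpd hs (by rw [show i + 1 - 1 - 1 = i - 1 by omega]; exact h3)
    have hj4 : j < 4 := by nlinarith
    have : j = 2 ∨ j = 3 := by omega
    rcases this with rfl | rfl
    · exact .inr (.inr (.inr (.inl ⟨rfl, h3, by omega⟩)))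
    · exact .inr (.inr (.inr (.inr ⟨rfl, h3, by omega⟩)))
  · have h2 := hb (gram_sq_four (by omega : m = 0 ∨ 4 ≤ m))
    have h2' : i * j < i + j := by
      have : (i * j : ℝ) < i + j := by linarith
      exact_mod_cast this
    have hj2 : j < 2 := by nlinarith
    obtain rfl : j = 1 := by omega
    rcases Nat.lt_or_ge 1 i with hi1 | hi1
    · exact .inr (.inl ⟨rfl, h4, by omega⟩)
    · exact .inl ⟨by omega, rfl, by omega⟩
  · have h2 := hb (gram_sq_five (by omega : m = 0 ∨ 5 ≤ m))
    have h2' : 13 * (i * j) < 10 * (i + j) := by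
      have : (13 * (i * j) : ℝ) < 10 * (i + j) := by linarith
      exact_mod_cast this
    have hj2 : j < 2 := by nlinarith
    obtain rfl : j = 1 := by omega
    rcases Nat.lt_or_ge 1 i with hi1 | hi1
    · exact .inr (.inr (.inl ⟨rfl, h5, by omega⟩))
    · exact .inl ⟨by omega, rfl, by omega⟩
  · have h2 := hb (gram_sq_six (by omega : m = 0 ∨ 6 ≤ m))
    have h2' : 3 * (i * j) < 2 * (i + j) := by
      have : (3 * (i * j) : ℝ) < 2 * (i + j) := by linarith
      exact_mod_cast this
    have hj2 : j < 2 := by nlinarith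
    obtain rfl : j = 1 := by omega
    exact .inl ⟨by omega, rfl, by omega⟩

/-- A second vertex outside a maximal path forces a subdiagram of type `F₄`. -/
lemma f4_of (hpd : ∀ v : I → ℝ, v ≠ 0 → 0 < bil M v v) {f : ℕ → I} {i j : ℕ} (hi : 1 ≤ i) (hj : 1 ≤ j) (hji : j ≤ i)
    (h : MaxPath M f (i + j - 1)) {s t : I} (hs : Off f (i + j - 1) s) (ht : Off f (i + j - 1) t) (hst : s ≠ t)
    (hadj : M (f (i - 1)) s = 0 ∨ 2 < M (f (i - 1)) s) (hadj2 : M s t = 0 ∨ 2 < M s t) :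
    i = 2 ∧ j = 1 ∧ M (f 1) s = 4 ∧ M s t = 3 := by
  have h1 := attach_nat hi hj (attach2 hpd h.path hi hj rfl hs ht hst)
  have hsh := shape_of hpd hi hj hji h hs hadj
  have hs3 := gram_sq_three hadj2
  have h0 := M_ne_zero hpd s t
  have hi1 : (1:ℝ) ≤ i := by exact_mod_cast hi
  have htwo : ∀ k < i + j - 1, M (f k) t = 2 := fun k hk => M_eq_two (ht k hk) fun h2 =>
    h.two_out hpd hs ht hst (by omega) hk hadj h2
  have hstwo : ∀ k < i + j - 1, k ≠ i - 1 → M (f k) s = 2 := fun k hk hne => M_eq_two (hs k hk) fun h2 => by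
    rcases Nat.lt_or_gt_of_ne hne with h3 | h3
    · exact one_nbr hpd h.path hs h3 (by omega) h2 hadj
    · exact one_nbr hpd h.path hs h3 hk hadj h2
  rcases hsh with ⟨hn, rfl, hm⟩ | ⟨rfl, hm, hn⟩ | ⟨rfl, hm, hn⟩ | ⟨rfl, hm, hn⟩ | ⟨rfl, hm, hn⟩
  · -- no edge has label `3` here, and two edges with larger labels do not fit
    obtain rfl : i = 1 := by omega
    have h4 : M s t ≠ 3 := fun h3 => by
      have hp : IsPath M (fun k => if k = 0 then s else t) 2 := by
        intro a b ha hb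
        interval_cases a <;> interval_cases b <;> simp [h3, M.symmetric t s]
      have := h.max _ _ hp
      omega
    have := gram_sq_four (by omega : M s t = 0 ∨ 4 ≤ M s t)
    have := gram_sq_four (.inr hm)
    simp only [Nat.cast_one] at h1
    linarith
  · have h4 := gram_sq_four (Or.inr hm.ge)
    simp only [Nat.cast_one, mul_one] at h1
    have h5 : (i:ℝ) < 3 := by nlinarith
    have h6 : i < 3 := by exact_mod_cast h5
    obtain rfl : i = 2 := by omega
    refine ⟨rfl, rfl, hm, ?_⟩
    by_contra h7
    have := gram_sq_four (by omega : M s t = 0 ∨ 4 ≤ M s t)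
    norm_num at h1 h4
    linarith
  · exfalso
    have h4 := gram_sq_five (Or.inr hm.ge)
    have h6 : (2:ℝ) ≤ i := by exact_mod_cast (by omega : 2 ≤ i)
    simp only [Nat.cast_one, mul_one] at h1
    nlinarith
  · -- the path continues along the other branch
    exfalso
    have h3 : M s t = 3 := by
      by_contra h7
      have h4 := gram_sq_four (by omega : M s t = 0 ∨ 4 ≤ M s t)
      have h5 := gram_sq_three hadj
      have h6 : (2:ℝ) ≤ i := by exact_mod_cast (by omega : 2 ≤ i)
      norm_num at h1
      nlinarith
    have hp : IsPath M f i := by simpa using h.path.shift 0 i (by omega)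
    have hp1 := hp.append hi hm fun k hk => hstwo k (by omega) (by omega)
    have hp2 := hp1.append (s := t) (by omega) (by simpa using h3) (fun k hk => by
      rw [if_neg (by omega)]; exact htwo k (by omega))
    have := h.max _ _ hp2
    omega
  · exfalso
    have h5 := gram_sq_three hadj
    have h6 : (3:ℝ) ≤ i := by exact_mod_cast (by omega : 3 ≤ i)
    norm_num at h1
    nlinarith

set_option maxHeartbeats 800000 in
/-- The classification of the connected diagrams with positive definite form. A maximal path with
labels `3` is taken; at most one vertex outside is attached to it, with place and label restricted
by `shape_of`, and a further vertex occurs for the diagram `F₄` only. -/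
theorem classify (hpd : ∀ v : I → ℝ, v ≠ 0 → 0 < bil M v v) (hirr : Irr M Set.univ) :
    (∃ n, 1 ≤ n ∧ Typ M (aMat n)) ∨ (∃ n j m, Shape n j m ∧ Typ M (tMat n j m)) ∨ Typ M f4Mat := by
  have hadj : ∀ A : Set I, A.Nonempty → (∀ x ∈ A, ∀ y ∉ A, ¬ (M x y = 0 ∨ 2 < M x y)) → ∀ y, y ∈ A := by
    rintro A ⟨x, hx⟩ h y
    have := hirr.2 x trivial y trivial
    induction this with
    | refl => exact hx
    | tail _ hbc ih => by_contra hc; exact h _ ih _ hc hbc.2.2.2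
  have : Nonempty I := ⟨hirr.1.some⟩
  obtain ⟨f, n, hf⟩ := exists_maxPath (M := M)
  by_cases hall : ∀ y, ¬ Off f n y
  · refine .inl ⟨n, hf.one, typ_of (fun k => f k) (fun a b => ?_) (fun a b => ?_) fun y => ?_⟩
    · rw [hf.path a b a.2 b.2]; simp only [aMat, Fin.ext_iff]
    · unfold aMat; split_ifs <;> simp_all
    · have := hall y
      simp only [Off, not_forall, not_not] at this
      obtain ⟨k, hk, h⟩ := this
      exact ⟨⟨k, hk⟩, h⟩
  refine .inr ?_
  obtain ⟨p, hp, s, hs, hps⟩ : ∃ p < n, ∃ s, Off f n s ∧ (M (f p) s = 0 ∨ 2 < M (f p) s) := by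
    by_contra hcon
    push Not at hcon
    refine hall fun y hy => ?_
    obtain ⟨k, hk, h⟩ := hadj {y | ∃ k < n, f k = y} ⟨f 0, 0, by have := hf.one; omega, rfl⟩
      (by rintro _ ⟨k, hk, rfl⟩ z hz h; exact absurd h (by
            have := hcon k hk z fun l hl h => hz ⟨l, hl, h⟩
            omega)) y
    exact hy k hk h
  wlog hpn : n - p ≤ p + 1 generalizing f p
  · have e : n - 1 - (n - 1 - p) = p := by omega
    refine this _ hf.rev (fun h => hall fun y hy => h y fun k hk => hy _ (by omega)) (n - 1 - p) (by omega)
      (fun k hk => hs _ (by omega)) (by rw [e]; exact hps) (by omega)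
  obtain ⟨i, rfl, hi⟩ : ∃ i, p = i - 1 ∧ 1 ≤ i := ⟨p + 1, by omega, by omega⟩
  obtain ⟨j, rfl, hj⟩ : ∃ j, n = i + j - 1 ∧ 1 ≤ j := ⟨n + 1 - i, by omega, by omega⟩
  have hji : j ≤ i := by omega
  have hsh := shape_of hpd hi hj hji hf hs hps
  have hstwo : ∀ k < i + j - 1, k ≠ i - 1 → M (f k) s = 2 := fun k hk hne => M_eq_two (hs k hk) fun h2 => by
    rcases Nat.lt_or_gt_of_ne hne with h3 | h3
    · exact one_nbr hpd hf.path hs h3 (by omega) h2 hps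
    · exact one_nbr hpd hf.path hs h3 hk hps h2
  by_cases hall2 : ∀ y, Off f (i + j - 1) y → y = s
  · refine .inl ⟨i + j - 1, j, _, hsh, typ_of (fun k => if k.val < i + j - 1 then f k else s) (fun a b => ?_)
      (fun a b => ?_) fun y => ?_⟩
    · have ha := a.2
      have hb := b.2
      by_cases ha1 : a.val < i + j - 1 <;> by_cases hb1 : b.val < i + j - 1
      · simp only [ha1, hb1, if_true, tMat, Fin.ext_iff, and_self]
        exact hf.path a b ha1 hb1
      · simp only [ha1, hb1, if_true, if_false, tMat, Fin.ext_iff, and_false]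
        rw [if_neg (by omega)]
        by_cases h : a.val = i - 1
        · rw [if_pos (by omega), h]
        · rw [if_neg (by omega), hstwo _ ha1 h]
      · simp only [ha1, hb1, if_true, if_false, tMat, Fin.ext_iff, false_and]
        rw [if_neg (by omega), M.symmetric]
        by_cases h : b.val = i - 1
        · rw [if_pos (by omega), h]
        · rw [if_neg (by omega), hstwo _ hb1 h]
      · simp only [ha1, hb1, if_false, tMat, Fin.ext_iff]
        rw [if_pos (by omega)]; simp
    · have hm : M (f (i - 1)) s ≠ 1 := by omega
      exact tMat_eq_one hm
    · by_cases hy : Off f (i + j - 1) y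
      · exact ⟨⟨i + j - 1, by omega⟩, by simp [hall2 y hy]⟩
      · simp only [Off, not_forall, not_not] at hy
        obtain ⟨k, hk, h⟩ := hy
        exact ⟨⟨k, by omega⟩, by simp [hk, h]⟩
  refine .inr ?_
  obtain ⟨t, ht, hts, hst⟩ : ∃ t, Off f (i + j - 1) t ∧ t ≠ s ∧ (M s t = 0 ∨ 2 < M s t) := by
    by_contra hcon
    push Not at hcon
    refine hall2 fun y hy => ?_
    rcases hadj {y | y = s ∨ ∃ k < i + j - 1, f k = y} ⟨s, .inl rfl⟩ (by
      rintro x hx z hz h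
      simp only [Set.mem_ofPred_eq, not_or] at hz
      have hz' : Off f (i + j - 1) z := fun k hk h => hz.2 ⟨k, hk, h⟩
      rcases hx with rfl | ⟨k, hk, rfl⟩
      · have := hcon z hz' hz.1; omega
      · exact hf.two_out hpd hs hz' (Ne.symm hz.1) (by omega) hk hps h) y with h | ⟨k, hk, h⟩
    · exact h
    · exact absurd h (hy k hk)
  obtain ⟨rfl, rfl, hm4, hm3⟩ := f4_of hpd hi hj hji hf hs ht hts.symm hps hst
  have h01 : M (f 0) (f 1) = 3 := by rw [hf.path 0 1 (by omega) (by omega)]; simp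
  have h0s : M (f 0) s = 2 := hstwo 0 (by omega) (by omega)
  have htwo : ∀ k < 2, M (f k) t = 2 := fun k hk => M_eq_two (ht k hk) fun h2 =>
    hf.two_out hpd hs ht hts.symm (by omega) hk hps h2
  -- the other path of length two is maximal as well
  have hg : MaxPath M (fun k => if k = 0 then t else s) 2 := by
    refine ⟨fun a b ha hb => ?_, by omega, hf.max⟩
    interval_cases a <;> interval_cases b <;> simp [hm3, M.symmetric t s]
  refine typ_of ![f 0, f 1, s, t] (fun a b => ?_) (by unfold f4Mat; decide) fun y => ?_
  · fin_cases a <;> fin_cases b <;>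
      simp [f4Mat, h01, h0s, hm4, hm3, htwo, M.symmetric (f 1) (f 0), M.symmetric s, M.symmetric t]
  · have : ∀ y, y ∈ Set.range ![f 0, f 1, s, t] := hadj _ ⟨f 0, 0, rfl⟩ (by
      rintro _ ⟨a, rfl⟩ z hz h
      have hz0 : f 0 ≠ z := fun h => hz ⟨0, h⟩
      have hz1 : f 1 ≠ z := fun h => hz ⟨1, h⟩
      have hz2 : s ≠ z := fun h => hz ⟨2, h⟩
      have hz3 : t ≠ z := fun h => hz ⟨3, h⟩
      have hzf : Off f 2 z := fun k hk => by interval_cases k <;> assumption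
      have hzg : Off (fun k => if k = 0 then t else s) 2 z := fun k hk => by
        interval_cases k <;> simpa
      have h1g : Off (fun k => if k = 0 then t else s) 2 (f 1) := fun k hk => by
        interval_cases k
        · simpa using (ht 1 (by omega)).symm
        · simpa using (hs 1 (by omega)).symm
      have hf1 : M ((fun k => if k = 0 then t else s) 1) (f 1) = 0 ∨ 2 < M ((fun k => if k = 0 then t else s) 1) (f 1) := by
        simp [M.symmetric s, hm4]
      fin_cases a
      · exact hf.two_out hpd hs hzf hz2 (a := 1) (b := 0) (by omega) (by omega) hps (by simpa using h)
      · exact hf.two_out hpd hs hzf hz2 (a := 1) (b := 1) (by omega) (by omega) hps (by simpa using h)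
      · exact hg.two_out hpd h1g hzg hz1 (a := 1) (b := 1) (by omega) (by omega) hf1 (by simpa using h)
      · exact hg.two_out hpd h1g hzg hz1 (a := 1) (b := 0) (by omega) (by omega) hf1 (by simpa using h))
    exact this y

end Classify
end BM

/-! ### Orbit counting -/

namespace BM
open CoxeterSystem

section Orbit
variable {I : Type*} [Fintype I] [DecidableEq I] {M : CoxeterMatrix I} {W : Type*} [Group W]

/-- A family of covectors, given by their values on the simple roots, which is closed under the simple
reflections and contains a positive multiple of the fundamental covector at the vertex `s`. -/
structure Orb (M : CoxeterMatrix I) (s : I) where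
  X : Type
  act : I → X → X
  val : X → I → ℝ
  val_act : ∀ j x i, val (act j x) i = val x i - 2 * gram M j i * val x j
  x0 : X
  c : ℝ
  c_pos : 0 < c
  val_x0 : ∀ i, val x0 i = if i = s then c else 0

variable {s : I} (O : Orb M s) (cs : CoxeterSystem M W)

lemma Orb.dot_simple (j : I) (x : O.X) (v : I → ℝ) :
    O.val x ⬝ᵥ rep cs (cs.simple j) v = O.val (O.act j x) ⬝ᵥ v := by
  have h : bil M (rt j) v = ∑ i, gram M j i * v i := by
    rw [bil_apply, Finset.sum_eq_single j (fun k _ hk => by simp [rt_apply, hk]) (by simp)]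
    simp
  have h2 : O.val x ⬝ᵥ rt j = O.val x j := by simp [rt]
  rw [rep_simple_apply, dotProduct_sub, dotProduct_smul, h2, h]
  simp only [dotProduct, O.val_act, sub_mul, Finset.sum_sub_distrib, smul_eq_mul, Finset.mul_sum, Finset.sum_mul]
  congr 1
  exact Finset.sum_congr rfl fun i _ => by ring

/-- The family is closed under the whole group. -/
lemma Orb.word (w : W) (x : O.X) : ∃ y, ∀ v, O.val x ⬝ᵥ rep cs w v = O.val y ⬝ᵥ v := by
  induction w using cs.simple_induction_left generalizing x with
  | one => exact ⟨x, fun v => by simp⟩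
  | mul_simple_left w j ih =>
    obtain ⟨y, hy⟩ := ih (O.act j x)
    exact ⟨y, fun v => by rw [rep_mul_apply, O.dot_simple, hy]⟩

lemma Orb.val_ext (hinj : Function.Injective O.val) {x y : O.X} (h : ∀ v, O.val x ⬝ᵥ v = O.val y ⬝ᵥ v) : x = y :=
  hinj (by
    funext i
    have := h (rt i)
    simpa [rt] using this)

lemma Orb.dot_x0 (v : I → ℝ) : O.val O.x0 ⬝ᵥ v = O.c * v s := by
  simp [dotProduct, O.val_x0, ite_mul]

/-- Orbit counting: the stabilizer of a fundamental covector is a visual subgroup. -/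
theorem Orb.card [Finite W] (hinj : Function.Injective O.val)
    (hdom : ∀ x, (∀ i, 0 ≤ O.val x i) → x = O.x0) :
    Nat.card W = Nat.card O.X * Nat.card (par cs {i | i ≠ s}) := by
  choose F hF using fun w : W => O.word cs w⁻¹ O.x0
  have hfib : ∀ a b, F a = F b ↔ a⁻¹ * b ∈ par cs {i | i ≠ s} := by
    intro a b
    constructor
    · intro h
      have h1 : ∀ v, rep cs a⁻¹ v s = rep cs b⁻¹ v s := fun v => by
        have := (hF a v).trans ((congrArg (fun x => O.val x ⬝ᵥ v) h).trans (hF b v).symm)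
        rw [O.dot_x0, O.dot_x0] at this
        exact mul_left_cancel₀ O.c_pos.ne' this
      have := stab cs (LinearMap.proj s) (fun t => by simp only [LinearMap.proj_apply, rt_apply]; split_ifs <;> norm_num)
        (a⁻¹ * b) (fun v => by
          rw [LinearMap.proj_apply, LinearMap.proj_apply, rep_mul_apply, h1, rep_inv_rep])
      convert this using 3
      funext i
      simp only [LinearMap.proj_apply, rt_apply]
      by_cases h : s = i <;> simp [h, eq_comm]
    · intro h
      refine O.val_ext hinj fun v => ?_
      rw [← hF, ← hF, O.dot_x0, O.dot_x0, show a⁻¹ = (a⁻¹ * b) * b⁻¹ by group, rep_mul_apply,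
        par_coord cs h _ (by simp)]
  have hsurj : Function.Surjective F := by
    intro x
    have hfin : {v | IsRoot cs v ∧ 0 ≤ v ∧ (dotProductBilin ℝ ℝ (O.val x)) v < 0}.Finite := by
      refine (finite_roots cs (J := Set.univ) (Set.toFinite _)).subset ?_
      rintro v ⟨h, -, -⟩
      exact ⟨h, by simp⟩
    obtain ⟨w, hw⟩ := dominant cs _ hfin
    obtain ⟨y, hy⟩ := O.word cs w x
    have hy0 : y = O.x0 := hdom y fun i => by
      have h1 : O.val y ⬝ᵥ rt i = O.val y i := by simp [rt]
      rw [← h1, ← hy]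
      exact hw i
    refine ⟨w, O.val_ext hinj fun v => ?_⟩
    rw [← hF, ← hy0, ← hy, rep_rep_inv]
  let G : W ⧸ par cs {i | i ≠ s} → O.X := Quotient.lift F fun a b h => (hfib a b).2 (QuotientGroup.leftRel_apply.1 h)
  have hG : Function.Bijective G := by
    constructor
    · intro a b
      induction a using QuotientGroup.induction_on
      induction b using QuotientGroup.induction_on
      intro h
      exact QuotientGroup.eq.2 ((hfib _ _).1 h)
    · intro x
      obtain ⟨w, rfl⟩ := hsurj x
      exact ⟨QuotientGroup.mk w, rfl⟩
  rw [Subgroup.card_eq_card_quotient_mul_card_subgroup (par cs {i | i ≠ s}), Nat.card_congr (Equiv.ofBijective G hG)]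

/-- A vector killed by the whole orbit vanishes. -/
lemma Orb.sep (cs : CoxeterSystem M W) [Finite W] (hirr : Irr M Set.univ) {v : I → ℝ} (h : ∀ x, O.val x ⬝ᵥ v = 0) : v = 0 := by
  have hN : ∀ (w : W) u, (∀ x, O.val x ⬝ᵥ u = 0) → ∀ x, O.val x ⬝ᵥ rep cs w u = 0 := fun w u hu x => by
    obtain ⟨y, hy⟩ := O.word cs w x
    rw [hy, hu]
  have hstep : ∀ (j : I) u, (∀ x, O.val x ⬝ᵥ u = 0) → bil M (rt j) u ≠ 0 → ∀ x, O.val x ⬝ᵥ rt j = 0 := by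
    intro j u hu hj x
    have := hN (cs.simple j) u hu x
    rw [rep_simple_apply, dotProduct_sub, hu, dotProduct_smul, smul_eq_mul, zero_sub, neg_eq_zero] at this
    rcases mul_eq_zero.1 this with h | h
    · exact absurd h (mul_ne_zero two_ne_zero hj)
    · exact h
  by_contra hv
  obtain ⟨j, hj⟩ : ∃ j, bil M (rt j) v ≠ 0 := by
    by_contra hcon
    push Not at hcon
    have h0 : bil M v v = 0 := by
      have e : v = ∑ i, v i • rt i := by ext j; simp [rt_apply, Finset.sum_apply]
      conv_lhs => enter [1]; rw [e]
      rw [map_sum, LinearMap.sum_apply]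
      refine Finset.sum_eq_zero fun i _ => ?_
      rw [map_smul, LinearMap.smul_apply, hcon, smul_zero]
    exact (posDef cs hv).ne' h0
  have key : ∀ i, ∀ x, O.val x ⬝ᵥ rt i = 0 := by
    intro i
    have := hirr.2 j trivial i trivial
    induction this with
    | refl => exact hstep j v h hj
    | tail _ hbc ih =>
      refine hstep _ _ ih ?_
      rw [bil_rt_rt, gram_symm]
      exact ((gram_adj hbc.2.2.2).trans_lt (by norm_num)).ne
  have := key s O.x0
  rw [O.dot_x0, rt_self, mul_one] at this
  exact O.c_pos.ne' this

end Orbit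
end BM

/-! ### Orbit tables for the exceptional types -/

namespace BM
open CoxeterSystem

/-- The pair `(a, b)` stands for the number `a + b φ` with `φ` the golden ratio. -/
noncomputable def gold (p : ℤ × ℤ) : ℝ := p.1 + p.2 * Real.goldenRatio

/-- `a - c * d` for numbers `a + b φ`. -/
def goldRefl (a c d : ℤ × ℤ) : ℤ × ℤ :=
  (a.1 - (c.1 * d.1 + c.2 * d.2), a.2 - (c.1 * d.2 + c.2 * d.1 + c.2 * d.2))

lemma gold_refl (a c d : ℤ × ℤ) : gold (goldRefl a c d) = gold a - gold c * gold d := by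
  have h := Real.goldenRatio_sq
  simp only [gold, goldRefl]
  generalize Real.goldenRatio = φ at h
  push_cast
  linear_combination (c.2 * d.2 : ℝ) * h

lemma gold_inj {a b : ℤ × ℤ} (h : gold a = gold b) : a = b := by
  have hir := Real.goldenRatio_irrational
  by_cases h2 : a.2 = b.2
  · refine Prod.ext ?_ h2
    simp only [gold, h2] at h
    exact_mod_cast add_right_cancel h
  · exfalso
    apply hir
    have h3 : ((a.2 : ℝ) - b.2) ≠ 0 := by
      rw [sub_ne_zero]; exact_mod_cast h2
    refine ⟨((b.1 - a.1 : ℤ) : ℚ) / ((a.2 - b.2 : ℤ) : ℚ), ?_⟩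
    push_cast
    rw [div_eq_iff h3]
    simp only [gold] at h
    linarith

/-- A sufficient criterion for `a + b φ` to be negative. -/
def goldNeg (p : ℤ × ℤ) : Bool := decide (0 ≤ p.2 ∧ 10 * p.1 + 17 * p.2 < 0 ∨ p.2 < 0 ∧ 5 * p.1 + 8 * p.2 < 0)

lemma gold_neg {p : ℤ × ℤ} (h : goldNeg p = true) : gold p < 0 := by
  have h5 : (2.2:ℝ) < √5 := by rw [Real.lt_sqrt] <;> norm_num
  have h5' : √5 < (2.4:ℝ) := by rw [Real.sqrt_lt'] <;> norm_num
  have h1 : (1.6:ℝ) < Real.goldenRatio := by unfold Real.goldenRatio; linarith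
  have h2 : Real.goldenRatio < (1.7:ℝ) := by unfold Real.goldenRatio; linarith
  rw [goldNeg, decide_eq_true_iff] at h
  simp only [gold]
  rcases h with ⟨hb, ha⟩ | ⟨hb, ha⟩
  · have hb' : (0:ℝ) ≤ p.2 := by exact_mod_cast hb
    have ha' : (10 * p.1 + 17 * p.2 : ℝ) < 0 := by exact_mod_cast ha
    nlinarith
  · have hb' : (p.2:ℝ) < 0 := by exact_mod_cast hb
    have ha' : (5 * p.1 + 8 * p.2 : ℝ) < 0 := by exact_mod_cast ha
    nlinarith

/-- The vector of length `n` with code `c`: the digits of `c` in base `25` stand for the pairs `(a, b)`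
with `-2 ≤ a, b ≤ 2`. -/
def dec : ℕ → ℕ → List (ℤ × ℤ)
  | 0, _ => []
  | n + 1, c => (((c % 25 / 5 : ℕ) : ℤ) - 2, ((c % 5 : ℕ) : ℤ) - 2) :: dec n (c / 25)

lemma dec_length (n c : ℕ) : (dec n c).length = n := by
  induction n generalizing c with
  | zero => rfl
  | succ n ih => simp [dec, ih]

/-- The code of a vector. -/
def enc (x : List (ℤ × ℤ)) : ℕ := x.foldr (fun p r => ((p.1 + 2) * 5 + (p.2 + 2)).toNat + 25 * r) 0

/-- The reflection of the covector `x` in the `j`-th simple root, for the Cartan matrix with rows `C`. -/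
def move (C : List (List (ℤ × ℤ))) (j : ℕ) (x : List (ℤ × ℤ)) : List (ℤ × ℤ) :=
  List.zipWith (fun a c => goldRefl a c (x.getD j 0)) x (C.getD j [])

/-- Membership in a list of numbers, in a form suited to evaluation in the kernel. -/
def mem (c : ℕ) (L : List ℕ) : Bool := List.rec false (fun a _ r => (Nat.beq c a).rec r true) L

lemma mem_of {c : ℕ} {L : List ℕ} (h : mem c L = true) : c ∈ L := by
  induction L with
  | nil => exact absurd h (by simp [mem])
  | cons a L ih =>
    have e : mem c (a :: L) = (Nat.beq c a).rec (mem c L) true := rfl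
    rw [e] at h
    cases hb : Nat.beq c a
    · rw [hb] at h; exact List.mem_cons_of_mem _ (ih h)
    · rw [Nat.eq_of_beq_eq_true hb]; exact List.mem_cons_self

/-- The fundamental covector at the vertex `0`. -/
def fund (n : ℕ) : List (ℤ × ℤ) := (1, 0) :: List.replicate (n - 1) (0, 0)

/-- `L` is an increasing list of codes of covectors, closed under the simple reflections, in which the
fundamental covector is the only dominant one. -/
def orbCheck (n : ℕ) (C : List (List (ℤ × ℤ))) (L : List ℕ) : Bool :=
  decide (L.IsChain (· < ·)) && (dec n (enc (fund n)) == fund n && mem (enc (fund n)) L) &&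
  (List.range n).all (fun j => (C.getD j []).length == n) &&
  L.all fun x => enc (dec n x) == x && (dec n x == fund n || (dec n x).any goldNeg) &&
    (List.range n).all fun j => (dec n x).getD j 0 == 0 ||
      (dec n (enc (move C j (dec n x))) == move C j (dec n x) && mem (enc (move C j (dec n x))) L)

theorem orb_of_check {n : ℕ} {M : CoxeterMatrix (Fin (n + 1))} {C : List (List (ℤ × ℤ))} {L : List ℕ}
    (σ : Fin (n + 1) → ℝ) (hσ : ∀ i, 0 < σ i)
    (hC : ∀ j i : Fin (n + 1), 2 * gram M j i * σ j = gold ((C.getD j []).getD i 0) * σ i)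
    (h : orbCheck (n + 1) C L = true) :
    ∃ O : Orb M 0, Function.Injective O.val ∧ (∀ x, (∀ i, 0 ≤ O.val x i) → x = O.x0) ∧
      Nat.card O.X = L.length := by
  simp only [orbCheck, Bool.and_eq_true, List.all_eq_true, List.mem_range, beq_iff_eq, Bool.or_eq_true,
    decide_eq_true_eq] at h
  obtain ⟨⟨⟨hch, hf1, hf2⟩, hlen⟩, hL⟩ := h
  have hget : ∀ (x j i : ℕ), j < n + 1 → i < n + 1 → (move C j (dec (n + 1) x)).getD i 0 =
      goldRefl ((dec (n + 1) x).getD i 0) ((C.getD j []).getD i 0) ((dec (n + 1) x).getD j 0) := by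
    intro x j i hj hi
    have h1 : i < (dec (n + 1) x).length := by rwa [dec_length]
    have h2 : i < (C.getD j []).length := by rwa [hlen j hj]
    have h3 : i < (move C j (dec (n + 1) x)).length := by
      rw [move, List.length_zipWith]; exact lt_min h1 h2
    rw [List.getD_eq_getElem _ _ h3, List.getD_eq_getElem (dec (n + 1) x) _ h1, List.getD_eq_getElem _ _ h2]
    simp only [move, List.getElem_zipWith]
  have h0 : gold 0 = 0 := by simp [gold]
  let act : Fin (n + 1) → {x // x ∈ L} → {x // x ∈ L} := fun j x =>
    if hz : (dec (n + 1) x).getD j 0 = 0 then x else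
      ⟨enc (move C j (dec (n + 1) x)), mem_of (((hL x x.2).2 j j.2).resolve_left hz).2⟩
  let y : {x // x ∈ L} → Fin (n + 1) → ℝ := fun x i => gold ((dec (n + 1) x).getD i 0)
  have hact : ∀ j x i, y (act j x) i = y x i - gold ((C.getD j []).getD i 0) * y x j := by
    intro j x i
    simp only [act, y]
    by_cases hz : (dec (n + 1) x).getD j 0 = 0
    · rw [dif_pos hz, hz, h0]; ring
    · rw [dif_neg hz, (((hL x x.2).2 j j.2).resolve_left hz).1, hget _ _ _ j.2 i.2, gold_refl]
  have hf : ∀ i : Fin (n + 1), gold ((fund (n + 1)).getD i 0) = if i = 0 then 1 else 0 := by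
    intro i
    induction i using Fin.cases with
    | zero => simp [fund, gold]
    | succ i =>
      rw [if_neg (Fin.succ_ne_zero i)]
      simp [fund, gold, List.getElem?_replicate]
  have hdec : ∀ x : {x // x ∈ L}, dec (n + 1) x = fund (n + 1) → x.1 = enc (fund (n + 1)) := fun x hx => by
    rw [← hx, (hL x x.2).1.1]
  refine ⟨⟨{x // x ∈ L}, act, fun x i => σ i * y x i, fun j x i => ?_, ⟨_, mem_of hf2⟩, σ 0, hσ 0, fun i => ?_⟩,
    fun a b hab => ?_, fun x hx => ?_, ?_⟩
  · rw [hact]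
    linear_combination (y x j) * hC j i
  · simp only [y, hf1, hf]
    split_ifs with hi
    · rw [hi, mul_one]
    · rw [mul_zero]
  · have h1 : dec (n + 1) a = dec (n + 1) b := by
      refine List.ext_getElem (by simp [dec_length]) fun i h1 h2 => ?_
      rw [dec_length] at h1
      have := mul_left_cancel₀ (hσ ⟨i, h1⟩).ne' (congrFun hab ⟨i, h1⟩)
      have := gold_inj this
      rwa [List.getD_eq_getElem _ _ (by rwa [dec_length]), List.getD_eq_getElem _ _ (by rwa [dec_length])] at this
    apply Subtype.ext
    rw [← (hL a a.2).1.1, ← (hL b b.2).1.1, h1]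
  · rcases (hL x x.2).1.2 with h1 | h1
    · exact Subtype.ext (hdec x h1)
    · exfalso
      rw [List.any_eq_true] at h1
      obtain ⟨p, hp, hn⟩ := h1
      obtain ⟨i, hi, rfl⟩ := List.mem_iff_getElem.1 hp
      have h2 : i < n + 1 := by rwa [dec_length] at hi
      have h3 := hx ⟨i, h2⟩
      simp only [y] at h3
      rw [List.getD_eq_getElem _ _ hi] at h3
      have := mul_neg_of_pos_of_neg (hσ ⟨i, h2⟩) (gold_neg hn)
      linarith
  · have hnd : L.Nodup := by
      rw [List.isChain_iff_pairwise] at hch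
      exact hch.imp fun h => h.ne
    change Nat.card {x // x ∈ L} = _
    rw [← List.toFinset_card_of_nodup hnd, ← Fintype.card_coe, ← Nat.card_eq_fintype_card]
    exact Nat.card_congr (Equiv.subtypeEquivRight (by simp))

/-- The Cartan matrix of type `F₄`. -/
def f4Cartan : List (List (ℤ × ℤ)) := [
  [(2, 0), (-1, 0), (0, 0), (0, 0)],
  [(-1, 0), (2, 0), (-1, 0), (0, 0)],
  [(0, 0), (-2, 0), (2, 0), (-1, 0)],
  [(0, 0), (0, 0), (-1, 0), (2, 0)]]

/-- The orbit of the covector `(1, 0, …, 0)` of type `F₄`, encoded. -/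
def f4Orbit : List ℕ := [
  117192, 117307, 117312, 120187, 120192, 120307, 192312, 192317, 192432, 195192, 195197, 195307, 195317, 195427,
  195432, 198192, 198307, 198312, 270317, 270432, 270437, 273312, 273317, 273432]

lemma f4_check : orbCheck 4 f4Cartan f4Orbit = true := by decide +kernel

/-- The Cartan matrix of type `H₃`. -/
def h3Cartan : List (List (ℤ × ℤ)) := [
  [(2, 0), (-1, 0), (0, 0)],
  [(-1, 0), (2, 0), (0, -1)],
  [(0, 0), (0, -1), (2, 0)]]

/-- The orbit of the covector `(1, 0, …, 0)` of type `H₃`, encoded. -/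
def h3Orbit : List ℕ := [
  4688, 4711, 7212, 7312, 7692, 7807, 7817, 7932, 8312, 8412, 10913, 10936]

lemma h3_check : orbCheck 3 h3Cartan h3Orbit = true := by decide +kernel

/-- The Cartan matrix of type `H₄`. -/
def h4Cartan : List (List (ℤ × ℤ)) := [
  [(2, 0), (-1, 0), (0, 0), (0, 0)],
  [(-1, 0), (2, 0), (-1, 0), (0, 0)],
  [(0, 0), (-1, 0), (2, 0), (0, -1)],
  [(0, 0), (0, 0), (0, -1), (2, 0)]]

/-- The orbit of the covector `(1, 0, …, 0)` of type `H₄`, encoded. -/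
def h4Orbit : List ℕ := [
  102188, 102192, 102211, 102307, 102312, 102787, 104712, 105187, 105192, 105288, 105307, 105311, 114212, 117188,
  117193, 117211, 117212, 117331, 117668, 117787, 117788, 117806, 117811, 120787, 167812, 179712, 179717, 179813,
  179832, 179836, 180288, 180293, 180311, 180312, 180431, 182693, 182812, 182813, 182831, 182836, 183288, 183292,
  183311, 183407, 183412, 192193, 192312, 192313, 192331, 192336, 194713, 194717, 194736, 194832, 194837, 195192,
  195193, 195289, 195293, 195307, 195317, 195331, 195335, 195431, 195432, 195787, 195792, 195888, 195907, 195911,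
  198288, 198293, 198311, 198312, 198431, 207212, 207217, 207313, 207332, 207336, 207788, 207793, 207811, 207812,
  207931, 210193, 210312, 210313, 210331, 210336, 210788, 210792, 210811, 210907, 210912, 222812, 269837, 272813,
  272818, 272836, 272837, 272956, 273293, 273412, 273413, 273431, 273436, 276412, 285313, 285317, 285336, 285432,
  285437, 285912, 287837, 288312, 288317, 288413, 288432, 288436]

lemma h4_check : orbCheck 4 h4Cartan h4Orbit = true := by decide +kernel

/-- The Cartan matrix of type `E₆`. -/
def e6Cartan : List (List (ℤ × ℤ)) := [
  [(2, 0), (-1, 0), (0, 0), (0, 0), (0, 0), (0, 0)],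
  [(-1, 0), (2, 0), (-1, 0), (0, 0), (0, 0), (0, 0)],
  [(0, 0), (-1, 0), (2, 0), (-1, 0), (0, 0), (-1, 0)],
  [(0, 0), (0, 0), (-1, 0), (2, 0), (-1, 0), (0, 0)],
  [(0, 0), (0, 0), (0, 0), (-1, 0), (2, 0), (0, 0)],
  [(0, 0), (0, 0), (-1, 0), (0, 0), (0, 0), (2, 0)]]

/-- The orbit of the covector `(1, 0, …, 0)` of type `E₆`, encoded. -/
def e6Orbit : List ℕ := [
  71292187, 73242192, 73242307, 73245187, 73320312, 75120312, 120117187, 120192312, 120195192, 120195307,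
  121992312, 121995192, 121995307, 122070317, 122070432, 122073312, 122145312, 123945312, 124020437, 124023317,
  124023432, 168945312, 170895317, 170895432, 170898312, 170973437, 172773437]

lemma e6_check : orbCheck 6 e6Cartan e6Orbit = true := by decide +kernel

/-- The Cartan matrix of type `E₇`. -/
def e7Cartan : List (List (ℤ × ℤ)) := [
  [(2, 0), (-1, 0), (0, 0), (0, 0), (0, 0), (0, 0), (0, 0)],
  [(-1, 0), (2, 0), (-1, 0), (0, 0), (0, 0), (0, 0), (0, 0)],
  [(0, 0), (-1, 0), (2, 0), (-1, 0), (0, 0), (0, 0), (0, 0)],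
  [(0, 0), (0, 0), (-1, 0), (2, 0), (-1, 0), (0, 0), (-1, 0)],
  [(0, 0), (0, 0), (0, 0), (-1, 0), (2, 0), (-1, 0), (0, 0)],
  [(0, 0), (0, 0), (0, 0), (0, 0), (-1, 0), (2, 0), (0, 0)],
  [(0, 0), (0, 0), (0, 0), (-1, 0), (0, 0), (0, 0), (2, 0)]]

/-- The orbit of the covector `(1, 0, …, 0)` of type `E₇`, encoded. -/
def e7Orbit : List ℕ := [
  1782304687, 1784179687, 1829179687, 1831054812, 1831057692, 1831057807, 1831129692, 1831129807, 1831132687,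
  1833007812, 1878007812, 1879882812, 3002929692, 3002929807, 3002932687, 3003004687, 3004807812, 3004879812,
  3004882692, 3004882807, 3049807812, 3049879812, 3049882692, 3049882807, 3051682812, 3051754812, 3051757692,
  3051757807, 3051757817, 3051757932, 3051760812, 3051832812, 3053632817, 3053632932, 3053635812, 3053707812,
  3098632817, 3098632932, 3098635812, 3098707812, 3100510937, 3100582937, 3100585817, 3100585932, 4223632812,
  4225507812, 4270507812, 4272382937, 4272385817, 4272385932, 4272457817, 4272457932, 4272460812, 4274335937,
  4319335937, 4321210937]

lemma e7_check : orbCheck 7 e7Cartan e7Orbit = true := by decide +kernel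

/-- The Cartan matrix of type `E₈`. -/
def e8Cartan : List (List (ℤ × ℤ)) := [
  [(2, 0), (-1, 0), (0, 0), (0, 0), (0, 0), (0, 0), (0, 0), (0, 0)],
  [(-1, 0), (2, 0), (-1, 0), (0, 0), (0, 0), (0, 0), (0, 0), (0, 0)],
  [(0, 0), (-1, 0), (2, 0), (-1, 0), (0, 0), (0, 0), (0, 0), (0, 0)],
  [(0, 0), (0, 0), (-1, 0), (2, 0), (-1, 0), (0, 0), (0, 0), (0, 0)],
  [(0, 0), (0, 0), (0, 0), (-1, 0), (2, 0), (-1, 0), (0, 0), (-1, 0)],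
  [(0, 0), (0, 0), (0, 0), (0, 0), (-1, 0), (2, 0), (-1, 0), (0, 0)],
  [(0, 0), (0, 0), (0, 0), (0, 0), (0, 0), (-1, 0), (2, 0), (0, 0)],
  [(0, 0), (0, 0), (0, 0), (0, 0), (-1, 0), (0, 0), (0, 0), (2, 0)]]

/-- The orbit of the covector `(1, 0, …, 0)` of type `E₈`, encoded. -/
def e8Orbit : List ℕ := [
  15260742187, 44555742187, 44557542187, 44557614187, 44557617067, 44557617182, 44557617187, 44604492187,
  44604492192, 44604492307, 44604495187, 44604567187, 44606367187, 45729492187, 45729492192, 45729492307,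
  45729495187, 45729567187, 45731367187, 45776367312, 45776370192, 45776370307, 45776370312, 45776442192,
  45776442307, 45776442312, 45776445187, 45776445192, 45776445307, 45778242192, 45778242307, 45778242312,
  45778245187, 45778245192, 45778245307, 45778317187, 45778317192, 45778317307, 45778320187, 45823320312,
  45825120312, 45825192312, 45825195192, 45825195307, 45825195312, 46948320312, 46950120312, 46950192312,
  46950195192, 46950195307, 46950195312, 46997070312, 46997070317, 46997070432, 46997073312, 46997145312,
  46998945312, 73901367187, 75026367187, 75073242192, 75073242307, 75073242312, 75073245187, 75073245192,
  75073245307, 75073317187, 75073317192, 75073317307, 75073320187, 75075117187, 75075117192, 75075117307,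
  75075120187, 75075192187, 75120120312, 75120192312, 75120195192, 75120195307, 75120195312, 75121992312,
  75121995192, 75121995307, 75121995312, 75122067192, 75122067307, 75122067312, 75122070187, 75122070192,
  75122070307, 75168945312, 76245120312, 76245192312, 76245195192, 76245195307, 76245195312, 76246992312,
  76246995192, 76246995307, 76246995312, 76247067192, 76247067307, 76247067312, 76247070187, 76247070192,
  76247070307, 76292070312, 76292070317, 76292070432, 76292073312, 76292145312, 76293870312, 76293870317,
  76293870432, 76293873312, 76293942312, 76293942317, 76293942432, 76293945192, 76293945197, 76293945307,
  76293945317, 76293945427, 76293945432, 76293948192, 76293948307, 76293948312, 76294017312, 76294020192,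
  76294020307, 76294020312, 76295745312, 76295817312, 76295820192, 76295820307, 76295820312, 76340820317,
  76340820432, 76340820437, 76340823312, 76340823317, 76340823432, 76340895312, 76340895317, 76340895432,
  76340898312, 76342695312, 76342695317, 76342695432, 76342698312, 76342770312, 77418945312, 77465820317,
  77465820432, 77465820437, 77465823312, 77465823317, 77465823432, 77465895312, 77465895317, 77465895432,
  77465898312, 77467695312, 77467695317, 77467695432, 77467698312, 77467770312, 77512698437, 77512770437,
  77512773317, 77512773432, 77512773437, 77514570437, 77514573317, 77514573432, 77514573437, 77514645317,
  77514645432, 77514645437, 77514648312, 77514648317, 77514648432, 77561523437, 78686523437, 105588945312,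
  105590745312, 105590817312, 105590820192, 105590820307, 105590820312, 105637695312, 105637695317, 105637695432,
  105637698312, 105637770312, 105639570312, 106762695312, 106762695317, 106762695432, 106762698312, 106762770312,
  106764570312, 106809570437, 106809573317, 106809573432, 106809573437, 106809645317, 106809645432, 106809645437,
  106809648312, 106809648317, 106809648432, 106811445317, 106811445432, 106811445437, 106811448312, 106811448317,
  106811448432, 106811520312, 106811520317, 106811520432, 106811523312, 106856523437, 106858323437, 106858395437,
  106858398317, 106858398432, 106858398437, 107981523437, 107983323437, 107983395437, 107983398317, 107983398432,
  107983398437, 108030273437, 108030273442, 108030273557, 108030276437, 108030348437, 108032148437, 137327148437]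

lemma e8_check : orbCheck 8 e8Cartan e8Orbit = true := by decide +kernel

end BM

/-! ### Orders by removal of a vertex, and dihedral groups -/

namespace BM
open CoxeterSystem

section OrdDefs

/-- The finite Coxeter group with Coxeter matrix `A` has order `N`. -/
def Ord {k : ℕ} (A : Fin k → Fin k → ℕ) (N : ℕ) : Prop :=
  ∀ M : CoxeterMatrix (Fin k), (∀ i j, M i j = A i j) → Finite M.Group → Nat.card M.Group = N

lemma Ord.of_typ {I W : Type*} [Group W] {M : CoxeterMatrix I} (cs : CoxeterSystem M W) [Finite W] {k N : ℕ}
    {A : Fin k → Fin k → ℕ} (hA : Ord A N) (h : Typ M A) : Nat.card W = N := by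
  obtain ⟨e, he⟩ := h
  rw [Nat.card_congr (cs.reindex e).mulEquiv.toEquiv]
  have : Finite (M.reindex e).Group := Finite.of_equiv _ (cs.reindex e).mulEquiv.toEquiv
  refine hA _ (fun i j => ?_) this
  rw [CoxeterMatrix.reindex_apply, he, e.apply_symm_apply, e.apply_symm_apply]

lemma Ord.perm {k N : ℕ} {A B : Fin k → Fin k → ℕ} (hB : Ord B N) (e : Fin k ≃ Fin k)
    (h : ∀ i j, A i j = B (e i) (e j)) : Ord A N := fun M hM hf =>
  hB.of_typ M.toCoxeterSystem ⟨e, fun u v => by rw [hM, h]⟩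

lemma Ord.congr {k N : ℕ} {A B : Fin k → Fin k → ℕ} (hB : Ord B N) (h : ∀ i j, A i j = B i j) : Ord A N :=
  hB.perm (Equiv.refl _) h

lemma ord_zero (A : Fin 0 → Fin 0 → ℕ) : Ord A 1 := fun M _ _ => by
  have : Subsingleton M.Group := by
    refine ⟨fun a b => ?_⟩
    have h : ∀ w : M.Group, w = 1 := fun w => by
      induction w using M.toCoxeterSystem.simple_induction_left with
      | one => rfl
      | mul_simple_left w i ih => exact i.elim0
    rw [h a, h b]
  exact Nat.card_unique

/-- Orbit counting for the removal of the first vertex of a diagram. -/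
lemma Ord.peel {n N q : ℕ} {A : Fin (n + 1) → Fin (n + 1) → ℕ} {B : Fin n → Fin n → ℕ} (hB : Ord B N)
    (hAB : ∀ i j : Fin n, A i.succ j.succ = B i j)
    (hO : ∀ M : CoxeterMatrix (Fin (n + 1)), (∀ i j, M i j = A i j) →
      ∃ O : Orb M 0, Function.Injective O.val ∧ (∀ x, (∀ i, 0 ≤ O.val x i) → x = O.x0) ∧ Nat.card O.X = q) :
    Ord A (q * N) := fun M hM hf => by
  obtain ⟨O, h1, h2, h3⟩ := hO M hM
  rw [O.card M.toCoxeterSystem h1 h2, h3]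
  have e : {i : Fin (n + 1) | i ≠ 0} = Set.range (Fin.succEmb n) := by
    ext i; simp [Fin.exists_succ_eq]
  rw [e, card_par_range]
  congr 1
  have : Finite (comapM M (Fin.succEmb n)).Group :=
    Finite.of_injective _ (embHom_injective M.toCoxeterSystem (Fin.succEmb n))
  refine hB _ (fun i j => ?_) this
  rw [comapM_apply, hM]
  exact hAB i j

end OrdDefs

section Gram
variable {I : Type*} {M : CoxeterMatrix I} {i j : I}

lemma gram_one (h : M i j = 1) : 2 * gram M i j = 2 := by simp [gram, h]
lemma gram_two (h : M i j = 2) : 2 * gram M i j = 0 := by simp [gram, h]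
lemma gram_three (h : M i j = 3) : 2 * gram M i j = -1 := by
  simp only [gram, h]; push_cast; rw [Real.cos_pi_div_three]; ring
lemma gram_four (h : M i j = 4) : 2 * gram M i j = -√2 := by
  simp only [gram, h]; push_cast; rw [Real.cos_pi_div_four]; ring
lemma gram_five (h : M i j = 5) : 2 * gram M i j = -Real.goldenRatio := by
  simp only [gram, h]; push_cast; rw [Real.cos_pi_div_five, Real.goldenRatio]; ring

end Gram

section Dihedral
variable {I : Type*} [Fintype I] [DecidableEq I] {M : CoxeterMatrix I} {W : Type*} [Group W]

lemma orderOf_mul (cs : CoxeterSystem M W) {s t : I} (hst : s ≠ t) (h0 : M s t ≠ 0) :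
    orderOf (cs.simple s * cs.simple t) = M s t := by
  have hm : 2 ≤ M s t := by have := M.off_diagonal s t hst; omega
  have hd : orderOf (cs.simple s * cs.simple t) ∣ M s t := orderOf_dvd_of_pow_eq_one (cs.simple_mul_simple_pow s t)
  set k := orderOf (cs.simple s * cs.simple t) with hk
  have hkpos : 0 < k := Nat.pos_of_dvd_of_pos hd (by omega)
  by_contra hne
  have hlt : k < M s t := lt_of_le_of_ne (Nat.le_of_dvd (by omega) hd) hne
  have h3 := congrArg (fun g => rep cs g (rt s)) (pow_orderOf_eq_one (cs.simple s * cs.simple t))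
  simp only [← hk, map_pow, map_mul, rep_simple, refl_pow_rt, map_one, Module.End.one_apply] at h3
  have hg : -gram M s t = Real.cos (Real.pi / M s t) := by simp [gram]
  rw [hg] at h3
  have hs := sin_pos_of hm
  have e1 := cheb_cos (Real.pi / M s t) (2 * k)
  have e2 := cheb_cos (Real.pi / M s t) (2 * k + 1)
  have c1 := congrFun h3 t
  have c2 := congrFun h3 s
  simp [rt_apply, hst, hst.symm] at c1 c2
  rw [c1, zero_mul] at e1
  rw [c2, one_mul] at e2
  push_cast at e1 e2
  rw [add_mul, one_mul, Real.sin_add, ← e1, zero_mul, zero_add] at e2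
  have hcos : Real.cos (2 * k * (Real.pi / M s t)) = 1 := by
    have : (Real.cos (2 * k * (Real.pi / M s t)) - 1) * Real.sin (Real.pi / M s t) = 0 := by linarith
    have := (mul_eq_zero.1 this).resolve_right hs.ne'
    linarith
  have hM : (0:ℝ) < M s t := by exact_mod_cast (by omega : 0 < M s t)
  have hkM : (k:ℝ) < M s t := by exact_mod_cast hlt
  have hk0 : (0:ℝ) < k := by exact_mod_cast hkpos
  have p0 : 0 < 2 * k * (Real.pi / M s t) := by have := Real.pi_pos; positivity
  have p1 : 2 * k * (Real.pi / M s t) < 2 * Real.pi := by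
    rw [mul_div_assoc', div_lt_iff₀ hM]
    have := Real.pi_pos
    nlinarith
  have := (Real.cos_eq_one_iff_of_lt_of_lt (by linarith) p1).1 hcos
  exact p0.ne' this

/-- In rank two the products of an even number of generators form the cyclic subgroup generated by the
product of the two generators. -/
lemma zpowers_iff (cs : CoxeterSystem M W) {s t : I} (hI : ∀ i, i = s ∨ i = t) (w : W) :
    w ∈ Subgroup.zpowers (cs.simple s * cs.simple t) ∨
      w * cs.simple s ∈ Subgroup.zpowers (cs.simple s * cs.simple t) := by
  set H := Subgroup.zpowers (cs.simple s * cs.simple t) with hH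
  have hst : cs.simple s * cs.simple t ∈ H := Subgroup.mem_zpowers _
  have hts : cs.simple t * cs.simple s ∈ H := by
    have := inv_mem hst
    rwa [mul_inv_rev, cs.inv_simple, cs.inv_simple] at this
  induction w using cs.simple_induction_right with
  | one => exact Or.inl (one_mem _)
  | mul_simple_right w i ih =>
    rcases hI i with rfl | rfl
    · rcases ih with h | h
      · right; rwa [mul_assoc, cs.simple_mul_simple_self, mul_one]
      · left; exact h
    · rcases ih with h | h
      · right; rw [mul_assoc]; exact mul_mem h hts
      · left
        have := mul_mem h hst
        rwa [mul_assoc, ← mul_assoc (cs.simple s), cs.simple_mul_simple_self, one_mul] at this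

lemma zpowers_parity (cs : CoxeterSystem M W) {s t : I} {w : W}
    (h : w ∈ Subgroup.zpowers (cs.simple s * cs.simple t)) : cs.lengthParity w = 1 := by
  obtain ⟨k, rfl⟩ := h
  have : cs.lengthParity (cs.simple s * cs.simple t) = 1 := by
    rw [map_mul, cs.lengthParity_simple, cs.lengthParity_simple]; rfl
  simp only [map_zpow, this, one_zpow]

lemma zpowers_index (cs : CoxeterSystem M W) {s t : I} (hI : ∀ i, i = s ∨ i = t) :
    (Subgroup.zpowers (cs.simple s * cs.simple t)).index = 2 := by
  rw [Subgroup.index_eq_two_iff]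
  refine ⟨cs.simple s, fun w => ?_⟩
  rcases zpowers_iff cs hI w with h | h
  · refine Or.inr ⟨h, fun h2 => ?_⟩
    have h3 := zpowers_parity cs h2
    rw [map_mul, zpowers_parity cs h, one_mul, cs.lengthParity_simple] at h3
    exact absurd h3 (by decide)
  · refine Or.inl ⟨h, fun h2 => ?_⟩
    have h3 := zpowers_parity cs h
    rw [map_mul, zpowers_parity cs h2, one_mul, cs.lengthParity_simple] at h3
    exact absurd h3 (by decide)

lemma card_dihedral (cs : CoxeterSystem M W) {s t : I} (hst : s ≠ t) (hI : ∀ i, i = s ∨ i = t) (h0 : M s t ≠ 0) :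
    Nat.card W = 2 * M s t := by
  rw [← Subgroup.card_mul_index (Subgroup.zpowers (cs.simple s * cs.simple t)), zpowers_index cs hI,
    Nat.card_zpowers, orderOf_mul cs hst h0, mul_comm]

end Dihedral

end BM

/-! ### Orbits for the classical families -/

namespace BM
open CoxeterSystem

section Families

/-- The transposition of `j` and `j + 1`. -/
def sw (j k : ℕ) : ℕ := if k = j then j + 1 else if k = j + 1 then j else k

lemma sw_lt {n j k : ℕ} (hj : j + 1 < n) (hk : k < n) : sw j k < n := by
  unfold sw; split_ifs <;> omega

/-- The value at the `i`-th vertex of a path of the weight of the standard representation numbered `k`. -/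
noncomputable def wtv (k i : ℕ) : ℝ := (if k = i then 1 else 0) - (if k = i + 1 then 1 else 0)

lemma wtv_sw (j k i : ℕ) : wtv (sw j k) i =
    wtv k i - (if j = i then 2 else if j + 1 = i ∨ i + 1 = j then -1 else 0) * wtv k j := by
  unfold wtv sw
  rcases eq_or_ne k j with h1 | h1
  · subst h1
    rcases eq_or_ne k i with h2 | h2
    · subst h2; norm_num
    · rcases eq_or_ne (k + 1) i with h3 | h3
      · subst h3; norm_num [h2]; omega
      · rcases eq_or_ne (i + 1) k with h4 | h4
        · subst h4; norm_num; omega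
        · simp [h2, h3, h4, h4.symm]
  · rcases eq_or_ne k (j + 1) with h5 | h5
    · subst h5
      rcases eq_or_ne j i with h2 | h2
      · subst h2; norm_num
      · rcases eq_or_ne (j + 1) i with h3 | h3
        · subst h3; norm_num; omega
        · rcases eq_or_ne (i + 1) j with h4 | h4
          · subst h4; norm_num; rw [if_neg (by omega)]; norm_num
          · simp [h2, h3, h4, h4.symm]
    · simp [h1, h5]

lemma wtv_zero (i : ℕ) : wtv 0 i = if i = 0 then 1 else 0 := by
  unfold wtv
  rcases eq_or_ne i 0 with h | h
  · simp [h]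
  · simp [h, h.symm]

lemma two_gram_path {I : Type*} {M : CoxeterMatrix I} {n m l : ℕ} {a b : I} {i j : Fin (n + 1)} (hi : i.val < n) (hj : j.val < n)
    (h : M a b = tMat n l m i j) :
    2 * gram M a b = if i.val = j.val then 2 else if i.val + 1 = j.val ∨ j.val + 1 = i.val then -1 else 0 := by
  unfold tMat at h
  simp only [hi, hj, and_self, if_true, Fin.ext_iff] at h
  split_ifs at h ⊢
  · exact gram_one h
  · exact gram_three h
  · exact gram_two h

section A
variable {n : ℕ} {M : CoxeterMatrix (Fin (n + 1))}

/-- The orbit of the first fundamental weight of the symmetric group: the weights of the standard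
representation. -/
noncomputable def aOrb (hM : ∀ i j, M i j = tMat n 1 3 i j) : Orb M 0 where
  X := Fin (n + 2)
  act j k := ⟨sw j k, sw_lt (by omega) k.2⟩
  val k i := wtv k i
  val_act j k i := by
    have h : 2 * gram M j i = if j.val = i.val then 2 else if j.val + 1 = i.val ∨ i.val + 1 = j.val then -1 else 0 := by
      have h := hM j i
      unfold tMat at h
      simp only [Fin.ext_iff] at h
      split_ifs at h ⊢ <;> first | omega | exact gram_one h | exact gram_three h | exact gram_two h
    rw [h]; exact wtv_sw _ _ _
  x0 := 0
  c := 1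
  c_pos := one_pos
  val_x0 i := (wtv_zero i.val).trans (by simp only [Fin.ext_iff, Fin.val_zero])

lemma aOrb_spec (hM : ∀ i j, M i j = tMat n 1 3 i j) : Function.Injective (aOrb hM).val ∧
    (∀ x, (∀ i, 0 ≤ (aOrb hM).val x i) → x = (aOrb hM).x0) ∧ Nat.card (aOrb hM).X = n + 2 := by
  refine ⟨fun a b hab => ?_, fun x hx => ?_, ?_⟩
  · change Fin (n + 2) at a b
    have h : ∀ i : ℕ, i < n + 1 → wtv a i = wtv b i := fun i hi => congrFun hab ⟨i, hi⟩
    have key : ∀ a b : Fin (n + 2), (∀ i : ℕ, i < n + 1 → wtv a i = wtv b i) → ¬ a < b := by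
      intro a b h hlt
      have := h a (by have := b.2; have : a.val < b.val := hlt; omega)
      have hlt' : a.val < b.val := hlt
      unfold wtv at this
      rw [if_pos rfl, if_neg (by omega), if_neg (by omega)] at this
      split_ifs at this <;> norm_num at this
    have hab : (a : Fin (n + 2)) = b :=
      le_antisymm (not_lt.1 (key _ _ fun i hi => (h i hi).symm)) (not_lt.1 (key _ _ h))
    exact hab
  · change Fin (n + 2) at x
    change x = (0 : Fin (n + 2))
    by_contra h0
    have h1 : x.val ≠ 0 := fun h => h0 (Fin.ext h)
    have := hx ⟨x.val - 1, by omega⟩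
    change 0 ≤ wtv x (x.val - 1) at this
    unfold wtv at this
    rw [if_neg (by omega), if_pos (by omega)] at this
    norm_num at this
  · change Nat.card (Fin (n + 2)) = _
    simp

end A

/-- The data of an orbit consisting of covectors `± f k`. -/
structure SOrb {n : ℕ} (M : CoxeterMatrix (Fin (n + 1))) where
  f : ℕ → ℕ → ℝ
  p : Fin (n + 1) → Fin (n + 1) → Fin (n + 1)
  e : Fin (n + 1) → Fin (n + 1) → ℤˣ
  hp : ∀ j k i : Fin (n + 1), ((e j k : ℤ) : ℝ) * f (p j k) i = f k i - 2 * gram M j i * f k j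
  hf0 : ∀ i : Fin (n + 1), f 0 i = if i = 0 then 1 else 0
  pos : ∀ k : Fin (n + 1), 0 < f k k
  neg : ∀ k : Fin (n + 1), k ≠ 0 → ∃ i : Fin (n + 1), f k i < 0
  sep : ∀ k l : Fin (n + 1), k < l → ∀ a : ℤˣ, ∃ i : Fin (n + 1), f k i ≠ ((a : ℤ) : ℝ) * f l i

section S
variable {n : ℕ} {M : CoxeterMatrix (Fin (n + 1))} (D : SOrb M)

/-- The orbit attached to a family of covectors up to sign. -/
noncomputable def SOrb.orb : Orb M 0 where
  X := Fin (n + 1) × ℤˣ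
  act j x := (D.p j x.1, x.2 * D.e j x.1)
  val x i := ((x.2 : ℤ) : ℝ) * D.f x.1 i
  val_act j x i := by
    have := D.hp j x.1 i
    push_cast
    linear_combination ((x.2 : ℤ) : ℝ) * this
  x0 := (0, 1)
  c := 1
  c_pos := one_pos
  val_x0 i := by simpa using D.hf0 i

lemma SOrb.spec : Function.Injective D.orb.val ∧
    (∀ x, (∀ i, 0 ≤ D.orb.val x i) → x = D.orb.x0) ∧ Nat.card D.orb.X = 2 * (n + 1) := by
  refine ⟨?_, ?_, ?_⟩
  · rintro ⟨k, a⟩ ⟨l, b⟩ hab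
    have h : ∀ i : Fin (n + 1), ((a : ℤ) : ℝ) * D.f k i = ((b : ℤ) : ℝ) * D.f l i := fun i => congrFun hab i
    have hsq : ∀ a : ℤˣ, ((a : ℤ) : ℝ) * ((a : ℤ) : ℝ) = 1 := fun a => by
      rcases Int.units_eq_one_or a with rfl | rfl <;> norm_num
    have key : ∀ (a b : ℤˣ) (k l : Fin (n + 1)),
        (∀ i : Fin (n + 1), ((a : ℤ) : ℝ) * D.f k i = ((b : ℤ) : ℝ) * D.f l i) → ¬ k < l := by
      intro a b k l h hkl
      obtain ⟨i, hi⟩ := D.sep k l hkl (a * b)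
      apply hi
      push_cast
      linear_combination ((a : ℤ) : ℝ) * h i - D.f k i * hsq a
    have hkl : k = l := le_antisymm (not_lt.1 (key b a l k fun i => (h i).symm)) (not_lt.1 (key a b k l h))
    subst hkl
    have := mul_right_cancel₀ (D.pos k).ne' (h k)
    rw [Int.cast_inj, Units.val_inj] at this
    rw [this]
  · rintro ⟨k, a⟩ hx
    have hx' : ∀ i : Fin (n + 1), 0 ≤ ((a : ℤ) : ℝ) * D.f k i := hx
    change (k, a) = ((0 : Fin (n + 1)), (1 : ℤˣ))
    rcases Int.units_eq_one_or a with rfl | rfl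
    · by_cases hk : k = 0
      · rw [hk]
      · obtain ⟨i, hi⟩ := D.neg k hk
        have := hx' i
        norm_num at this
        linarith
    · have := hx' k
      have := D.pos k
      norm_num at *
      linarith
  · change Nat.card (Fin (n + 1) × ℤˣ) = _
    rw [Nat.card_prod, Nat.card_eq_fintype_card, Nat.card_eq_fintype_card, Fintype.card_fin, Fintype.card_units_int]
    ring

end S

section C
variable {n : ℕ} {M : CoxeterMatrix (Fin (n + 1))}

/-- The weights of the standard representation of the hyperoctahedral group. -/
noncomputable def cSOrb (hn : 1 ≤ n) (hM : ∀ i j, M i j = tMat n 1 4 i j) : SOrb M where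
  f k i := if i < n then wtv k i else if k = n then √2 else 0
  p j k := if h : j.val < n then ⟨sw j k, sw_lt (by omega) k.2⟩ else k
  e j k := if j.val < n then 1 else if k.val = n then -1 else 1
  hp j k i := by
    by_cases hj : j.val < n
    · simp only [hj, dif_pos, if_true]
      by_cases hi : i.val < n
      · simp only [hi, if_true]
        rw [two_gram_path hj hi (hM j i), Units.val_one, Int.cast_one, one_mul]
        exact wtv_sw _ _ _
      · have hin : i.val = n := by omega
        have h := hM j i
        unfold tMat at h
        simp only [hi, and_false, if_false, Fin.ext_iff, (show j.val ≠ i.val by omega)] at h ⊢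
        by_cases hjn : j.val + 1 = n
        · rw [if_pos (Or.inl hjn)] at h
          rw [gram_four h]
          unfold wtv sw
          split_ifs <;> first | omega | simp
        · rw [if_neg (by omega)] at h
          rw [gram_two h]
          unfold sw
          split_ifs <;> first | omega | simp
    · have hjn : j.val = n := by omega
      simp only [hj, dif_neg, not_false_eq_true, if_false]
      have h := hM j i
      unfold tMat at h
      simp only [hj, false_and, if_false, Fin.ext_iff] at h
      by_cases hi : i.val < n
      · rw [if_neg (by omega)] at h
        by_cases hin : i.val + 1 = n
        · rw [if_pos (by omega)] at h
          rw [gram_four h, if_pos hi]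
          have h2 : √2 * √2 = (2:ℝ) := Real.mul_self_sqrt (by norm_num)
          have h2' : √2 ^ 2 = (2:ℝ) := by rw [sq, h2]
          unfold wtv
          split_ifs <;> first | omega | (norm_num [h2, h2'])
        · rw [if_neg (by omega)] at h
          rw [gram_two h, if_pos hi]
          unfold wtv
          split_ifs <;> first | omega | norm_num
      · rw [if_pos (by omega)] at h
        rw [gram_one h, if_neg hi]
        split_ifs <;> first | omega | (norm_num <;> ring)
  hf0 i := by
    rw [wtv_zero]
    simp only [Fin.ext_iff, Fin.val_zero]
    split_ifs <;> first | omega | rfl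
  pos k := by
    have : (0:ℝ) < √2 := by positivity
    unfold wtv
    split_ifs <;> first | omega | norm_num
  neg k hk := by
    have h0 : k.val ≠ 0 := fun h => hk (Fin.ext h)
    refine ⟨⟨k.val - 1, by omega⟩, ?_⟩
    change (if k.val - 1 < n then wtv k (k.val - 1) else _) < 0
    rw [if_pos (by omega)]
    unfold wtv
    rw [if_neg (by omega), if_pos (by omega)]
    norm_num
  sep k l hkl a := by
    have hkl' : k.val < l.val := hkl
    refine ⟨l, ?_⟩
    have h2 : √2 ≠ (0:ℝ) := by positivity
    have ha : ((a : ℤ) : ℝ) ≠ 0 := by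
      rcases Int.units_eq_one_or a with rfl | rfl <;> norm_num
    unfold wtv
    split_ifs <;> first | omega | simp [ha, h2, ha.symm]

end C

section D
variable {n : ℕ} {M : CoxeterMatrix (Fin (n + 1))}

/-- The weights of the standard representation of the group of even signed permutations. -/
noncomputable def dSOrb (hn : 2 ≤ n) (hM : ∀ i j, M i j = tMat n 2 3 i j) : SOrb M where
  f k i := if i < n then wtv k i else (if k + 1 = n then 1 else 0) + (if k = n then 1 else 0)
  p j k := if h : j.val < n then ⟨sw j k, sw_lt (by omega) k.2⟩ else ⟨sw (n - 1) k, sw_lt (by omega) k.2⟩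
  e j k := if j.val < n then 1 else if k.val + 1 < n then 1 else -1
  hp j k i := by
    by_cases hj : j.val < n
    · simp only [hj, dif_pos, if_true]
      by_cases hi : i.val < n
      · simp only [hi, if_true]
        rw [two_gram_path hj hi (hM j i), Units.val_one, Int.cast_one, one_mul]
        exact wtv_sw _ _ _
      · have hin : i.val = n := by omega
        have h := hM j i
        unfold tMat at h
        simp only [hi, and_false, if_false, Fin.ext_iff, (show j.val ≠ i.val by omega)] at h ⊢
        by_cases hjn : j.val + 2 = n
        · rw [if_pos (Or.inl hjn)] at h
          rw [gram_three h]
          unfold wtv sw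
          split_ifs <;> first | omega | norm_num
        · rw [if_neg (by omega)] at h
          rw [gram_two h]
          unfold sw
          split_ifs <;> first | omega | norm_num
    · have hjn : j.val = n := by omega
      simp only [hj, dif_neg, not_false_eq_true, if_false]
      have h := hM j i
      unfold tMat at h
      simp only [hj, false_and, if_false, Fin.ext_iff] at h
      by_cases hi : i.val < n
      · rw [if_neg (by omega)] at h
        by_cases hin : i.val + 2 = n
        · rw [if_pos (by omega)] at h
          rw [gram_three h, if_pos hi]
          unfold wtv sw
          split_ifs <;> first | omega | norm_num
        · rw [if_neg (by omega)] at h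
          rw [gram_two h, if_pos hi]
          unfold wtv sw
          split_ifs <;> first | omega | norm_num
      · rw [if_pos (by omega)] at h
        rw [gram_one h, if_neg hi]
        unfold sw
        split_ifs <;> first | omega | norm_num
  hf0 i := by
    rw [wtv_zero]
    simp only [Fin.ext_iff, Fin.val_zero]
    split_ifs <;> first | omega | norm_num
  pos k := by
    unfold wtv
    split_ifs <;> first | omega | norm_num
  neg k hk := by
    have h0 : k.val ≠ 0 := fun h => hk (Fin.ext h)
    refine ⟨⟨k.val - 1, by omega⟩, ?_⟩
    change (if k.val - 1 < n then wtv k (k.val - 1) else _) < 0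
    rw [if_pos (by omega)]
    unfold wtv
    rw [if_neg (by omega), if_pos (by omega)]
    norm_num
  sep k l hkl a := by
    have hkl' : k.val < l.val := hkl
    by_cases hl : l.val < n ∨ k.val + 1 < n
    · refine ⟨l, ?_⟩
      rcases Int.units_eq_one_or a with rfl | rfl <;> unfold wtv <;>
        split_ifs <;> first | omega | norm_num
    · rcases Int.units_eq_one_or a with rfl | rfl
      · refine ⟨k, ?_⟩
        unfold wtv
        split_ifs <;> first | omega | norm_num
      · refine ⟨l, ?_⟩
        unfold wtv
        split_ifs <;> first | omega | norm_num

end D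

end Families

end BM

/-! ### The orders of the finite irreducible groups -/

namespace BM
open CoxeterSystem
open Nat (factorial)
open scoped Nat

section Orders

lemma tMat_succ (n j m : ℕ) (a b : Fin (n + 1)) (hj : 1 ≤ j) (hjn : j ≤ n + 1) :
    tMat (n + 1) j m a.succ b.succ = tMat n j m a b := by
  unfold tMat
  simp only [Fin.ext_iff, Fin.val_succ]
  split_ifs <;> omega

lemma ord_A (n : ℕ) : Ord (tMat n 1 3) (n + 2)! := by
  induction n with
  | zero =>
    have := (ord_zero (fun i => i.elim0)).peel (A := tMat 0 1 3) (q := 2) (fun i => i.elim0)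
      fun M hM => ⟨aOrb hM, aOrb_spec hM⟩
    exact this
  | succ n ih =>
    rw [Nat.factorial_succ]
    exact ih.peel (fun i j => tMat_succ _ _ _ _ _ le_rfl (by omega)) fun M hM => ⟨aOrb hM, aOrb_spec hM⟩

lemma ord_C (n : ℕ) (hn : 1 ≤ n) : Ord (tMat n 1 4) (2 ^ (n + 1) * (n + 1)!) := by
  induction n, hn using Nat.le_induction with
  | base =>
    have h := ((ord_A 0).congr (A := tMat 0 1 4) (by decide)).peel (A := tMat 1 1 4) (q := 2 * (1 + 1))
      (by decide) fun M hM => ⟨(cSOrb le_rfl hM).orb, (cSOrb le_rfl hM).spec⟩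
    exact h
  | succ n hn ih =>
    have e : 2 ^ (n + 1 + 1) * (n + 1 + 1)! = 2 * (n + 1 + 1) * (2 ^ (n + 1) * (n + 1)!) := by
      rw [Nat.factorial_succ (n + 1)]; ring
    rw [e]
    exact ih.peel (fun i j => tMat_succ _ _ _ _ _ le_rfl (by omega))
      fun M hM => ⟨(cSOrb (by omega) hM).orb, (cSOrb (by omega) hM).spec⟩

lemma ord_D (n : ℕ) (hn : 2 ≤ n) : Ord (tMat n 2 3) (2 ^ n * (n + 1)!) := by
  induction n, hn using Nat.le_induction with
  | base => exact (ord_A 2).perm (Equiv.swap 0 1) (by decide)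
  | succ n hn ih =>
    have e : 2 ^ (n + 1) * (n + 1 + 1)! = 2 * (n + 1 + 1) * (2 ^ n * (n + 1)!) := by
      rw [Nat.factorial_succ (n + 1)]; ring
    rw [e]
    exact ih.peel (fun i j => tMat_succ _ _ _ _ _ (by omega) (by omega))
      fun M hM => ⟨(dSOrb (by omega) hM).orb, (dSOrb (by omega) hM).spec⟩

/-- The entry `-2 cos (π / m)` of the Cartan matrix, for `m ∈ {1, 2, 3, 5}`. -/
def cartan (m : ℕ) : ℤ × ℤ := if m = 1 then (2, 0) else if m = 2 then (0, 0) else if m = 3 then (-1, 0) else (0, -1)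

lemma gold_cartan {I : Type*} {M : CoxeterMatrix I} {i j : I} (h : M i j = 1 ∨ M i j = 2 ∨ M i j = 3 ∨ M i j = 5) :
    2 * gram M i j = gold (cartan (M i j)) := by
  rcases h with h | h | h | h
  · rw [gram_one h, h]; norm_num [cartan, gold]
  · rw [gram_two h, h]; norm_num [cartan, gold]
  · rw [gram_three h, h]; norm_num [cartan, gold]
  · rw [gram_five h, h]; norm_num [cartan, gold]

lemma Ord.peel_check {n N q : ℕ} {A : Fin (n + 1) → Fin (n + 1) → ℕ} {B : Fin n → Fin n → ℕ} (hB : Ord B N)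
    (hAB : ∀ i j : Fin n, A i.succ j.succ = B i j) (C : List (List (ℤ × ℤ))) (L : List ℕ)
    (h : orbCheck (n + 1) C L = true) (hq : L.length = q)
    (hA : ∀ j i : Fin (n + 1), (A j i = 1 ∨ A j i = 2 ∨ A j i = 3 ∨ A j i = 5) ∧
      (C.getD j []).getD i 0 = cartan (A j i)) : Ord A (q * N) :=
  hB.peel hAB fun M hM => by
    subst hq
    refine orb_of_check (fun _ => 1) (fun _ => one_pos) (fun j i => ?_) h
    rw [mul_one, mul_one, (hA j i).2, ← hM]
    exact gold_cartan (by rw [hM]; exact (hA j i).1)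

lemma ord_E5 : Ord (tMat 4 3 3) 1920 :=
  (ord_D 4 (by omega)).perm ⟨![3, 2, 1, 0, 4], ![3, 2, 1, 0, 4], by decide, by decide⟩ (by decide)

lemma ord_E6 : Ord (tMat 5 3 3) 51840 :=
  ord_E5.peel_check (by decide) _ _ e6_check (q := 27) (by decide +kernel) (by decide)

lemma ord_E7 : Ord (tMat 6 3 3) 2903040 :=
  ord_E6.peel_check (by decide) _ _ e7_check (q := 56) (by decide +kernel) (by decide)

lemma ord_E8 : Ord (tMat 7 3 3) 696729600 :=
  ord_E7.peel_check (by decide) _ _ e8_check (q := 240) (by decide +kernel) (by decide +kernel)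

lemma ord_H2 : Ord (tMat 1 1 5) 10 := fun M hM _ => by
  have h := hM 0 1
  have h5 : M 0 1 = 5 := h
  rw [card_dihedral M.toCoxeterSystem (s := 0) (t := 1) (by decide) (by decide) (by rw [h5]; norm_num), h5]

lemma ord_H3 : Ord (tMat 2 1 5) 120 :=
  ord_H2.peel_check (by decide) _ _ h3_check (q := 12) (by decide +kernel) (by decide)

lemma ord_H4 : Ord (tMat 3 1 5) 14400 :=
  ord_H3.peel_check (by decide) _ _ h4_check (q := 120) (by decide +kernel) (by decide)

lemma ord_F4 : Ord f4Mat 1152 := by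
  have hC : Ord (fun i j : Fin 3 => f4Mat i.succ j.succ) 48 :=
    (ord_C 2 (by omega)).perm Fin.revPerm (by decide)
  refine hC.peel (q := 24) (fun i j => rfl) fun M hM => ?_
  have h2 : √2 * √2 = (2:ℝ) := Real.mul_self_sqrt (by norm_num)
  refine orb_of_check (M := M) (σ := ![1, 1, √2, √2]) (fun i => by fin_cases i <;> simp) (fun j i => ?_) f4_check
  have h := hM j i
  fin_cases j <;> fin_cases i <;>
    first
    | rw [gram_one h]; simp [f4Cartan, gold]
    | rw [gram_two h]; simp [f4Cartan, gold]
    | rw [gram_three h]; simp [f4Cartan, gold]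
    | rw [gram_four h]; simp [f4Cartan, gold, h2]

end Orders

end BM

/-! ### Types and their orders -/

namespace BM
open CoxeterSystem
open scoped Nat

section Arith

lemma fac_pow_aux {a b k l : ℕ} (hk : 1 ≤ k) (h : 2 ^ a * k ! = 2 ^ b * l !) (hkl : k < l) :
    l = k + 1 ∧ 2 ^ a = 2 ^ b * (k + 1) := by
  have hl : l = k + 1 := by
    by_contra hne
    -- one of the consecutive factors `k + 1`, `k + 2` of `l !` is odd
    obtain ⟨c, hc, hc1, hcd⟩ : ∃ c, Odd c ∧ 1 < c ∧ (k ! * c) ∣ l ! := by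
      have h2 : (k + 2)! ∣ l ! := Nat.factorial_dvd_factorial (by omega)
      rw [Nat.factorial_succ, Nat.factorial_succ] at h2
      rcases Nat.even_or_odd k with he | ho
      · exact ⟨k + 1, he.add_one, by omega, (Dvd.intro_left (k + 1 + 1) (by ring)).trans h2⟩
      · exact ⟨k + 2, by rw [Nat.odd_add]; simp [ho], by omega, (Dvd.intro_left (k + 1) (by ring)).trans h2⟩
    have h3 : k ! * c ∣ k ! * 2 ^ a := by
      rw [mul_comm (k !) (2 ^ a), h]; exact hcd.mul_left _
    have h4 : c ∣ 2 ^ a := Nat.dvd_of_mul_dvd_mul_left (Nat.factorial_pos k) h3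
    have h5 : Nat.Coprime c (2 ^ a) := Nat.Coprime.pow_right _ (Nat.coprime_two_right.2 hc)
    have := Nat.Coprime.eq_one_of_dvd h5 h4
    omega
  refine ⟨hl, ?_⟩
  subst hl
  rw [Nat.factorial_succ] at h
  have hp := Nat.factorial_pos k
  apply Nat.eq_of_mul_eq_mul_right hp
  rw [h]; ring

/-- An identity between products of powers of two and factorials. -/
lemma fac_pow {a b k l : ℕ} (hk : 1 ≤ k) (hl : 1 ≤ l) (h : 2 ^ a * k ! = 2 ^ b * l !) :
    (k = l ∧ a = b) ∨ (l = k + 1 ∧ 2 ^ a = 2 ^ b * (k + 1)) ∨ (k = l + 1 ∧ 2 ^ b = 2 ^ a * (l + 1)) := by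
  rcases lt_trichotomy k l with h1 | h1 | h1
  · exact Or.inr (Or.inl (fac_pow_aux hk h h1))
  · subst h1
    exact Or.inl ⟨rfl, Nat.pow_right_injective le_rfl (Nat.eq_of_mul_eq_mul_right (Nat.factorial_pos k) h)⟩
  · exact Or.inr (Or.inr (fac_pow_aux hl h.symm h1))

lemma two_pow_gt {m : ℕ} (h : 2 ≤ m) : m + 2 ≤ 2 ^ m := by
  induction m, h using Nat.le_induction with
  | base => norm_num
  | succ m hm ih => rw [pow_succ]; omega

/-- The pairs `(a, k)` for which `2 ^ a * (k + 1)!` is the order of a group of type `A`, `D` or `C` of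
rank at least three (at least four for type `D`). -/
def Fam (a k : ℕ) : Prop := (a = 0 ∧ 3 ≤ k) ∨ (a = k ∧ 3 ≤ k) ∨ (a = k + 1 ∧ 2 ≤ k)

lemma fam_eq_aux {a k b : ℕ} (h : Fam a k) (h' : Fam b (k + 1)) : 2 ^ a ≠ 2 ^ b * (k + 1 + 1) := by
  intro he
  have hk : 2 ≤ k := by unfold Fam at h; omega
  have g := two_pow_gt hk
  by_cases hb : b = 0
  · subst hb
    rcases h with ⟨rfl, h⟩ | ⟨rfl, h⟩ | ⟨rfl, h⟩
    · simp at he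
    · obtain ⟨j, rfl⟩ : ∃ j, a = j + 1 := ⟨a - 1, by omega⟩
      have g := two_pow_gt (show 2 ≤ j by omega)
      rw [pow_succ] at he
      omega
    · rw [pow_succ] at he; omega
  · have hab : a ≤ b := by unfold Fam at h h'; omega
    have h1 : 2 ^ a ≤ 2 ^ b := Nat.pow_le_pow_right (by norm_num) hab
    have h2 : 0 < 2 ^ b := by positivity
    nlinarith

lemma fam_eq {a k b l : ℕ} (h : Fam a k) (h' : Fam b l) (he : 2 ^ a * (k + 1)! = 2 ^ b * (l + 1)!) :
    a = b ∧ k = l := by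
  rcases fac_pow (by omega) (by omega) he with ⟨h1, h2⟩ | ⟨h1, h2⟩ | ⟨h1, h2⟩
  · omega
  · obtain rfl : l = k + 1 := by omega
    exact absurd h2 (fam_eq_aux h h')
  · obtain rfl : k = l + 1 := by omega
    exact absurd h2 (fam_eq_aux h' h)

lemma fam_dbl {a k b l : ℕ} (h : Fam a k) (h' : Fam b l)
    (he : 2 ^ (a + 1) * (k + 1)! = 2 ^ b * (l + 1)!) :
    (a = 0 ∧ k = 3 ∧ b = 3 ∧ l = 2) ∨ (a = k ∧ 3 ≤ k ∧ b = k + 1 ∧ l = k) := by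
  rcases fac_pow (by omega) (by omega) he with ⟨h1, h2⟩ | ⟨h1, h2⟩ | ⟨h1, h2⟩
  · unfold Fam at h h'; omega
  · obtain rfl : l = k + 1 := by omega
    exfalso
    by_cases hb : b = 0
    · subst hb
      have hk : 2 ≤ k := by unfold Fam at h; omega
      have g := two_pow_gt hk
      rcases h with ⟨rfl, h⟩ | ⟨rfl, h⟩ | ⟨rfl, h⟩
      · simp at h2; omega
      · rw [pow_succ] at h2; omega
      · rw [pow_succ, pow_succ] at h2; omega
    · have hab : a + 1 ≤ b + 1 := by unfold Fam at h h'; omega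
      have h3 : 2 ^ (a + 1) ≤ 2 ^ (b + 1) := Nat.pow_le_pow_right (by norm_num) hab
      rw [pow_succ 2 b] at h3
      have h4 : 0 < 2 ^ b := by positivity
      have hk : 2 ≤ k := by unfold Fam at h; omega
      nlinarith
  · obtain rfl : k = l + 1 := by omega
    by_cases ha : a = 0
    · subst ha
      simp only [zero_add, pow_one] at h2
      rcases h' with ⟨rfl, h'⟩ | ⟨rfl, h'⟩ | ⟨rfl, h'⟩
      · simp at h2; omega
      · exfalso
        by_cases hb : b = 3
        · subst hb; norm_num at h2
        · obtain ⟨j, rfl⟩ : ∃ j, b = j + 2 := ⟨b - 2, by omega⟩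
          have g := two_pow_gt (show 2 ≤ j by omega)
          rw [pow_succ, pow_succ] at h2
          omega
      · left
        by_cases hl : l = 2
        · omega
        · exfalso
          obtain ⟨j, rfl⟩ : ∃ j, l = j + 1 := ⟨l - 1, by omega⟩
          have g := two_pow_gt (show 2 ≤ j by omega)
          rw [pow_succ, pow_succ] at h2
          omega
    · exfalso
      have hab : b ≤ a + 1 := by unfold Fam at h h'; omega
      have h3 : 2 ^ b ≤ 2 ^ (a + 1) := Nat.pow_le_pow_right (by norm_num) hab
      have h4 : 0 < 2 ^ (a + 1) := by positivity
      nlinarith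

lemma le_of_factorial {n : ℕ} (h : n ! ≤ 1393459200) : n ≤ 12 := by
  by_contra hn
  have h1 := Nat.factorial_le (show 13 ≤ n by omega)
  have : (13)! = 6227020800 := by decide
  omega

end Arith

section Ty

/-- The irreducible finite types of rank at least three; `A n`, `C n` and `D n` have rank `n + 1`. -/
inductive Ty : Type
  | A (n : ℕ) | C (n : ℕ) | D (n : ℕ) | E6 | E7 | E8 | F4 | H3 | H4

/-- One less than the rank. -/
def Ty.rk : Ty → ℕ
  | A n => n | C n => n | D n => n | E6 => 5 | E7 => 6 | E8 => 7 | F4 => 3 | H3 => 2 | H4 => 3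

/-- The Coxeter matrix. -/
def Ty.mat : (T : Ty) → Fin (T.rk + 1) → Fin (T.rk + 1) → ℕ
  | A n => tMat n 1 3 | C n => tMat n 1 4 | D n => tMat n 2 3
  | E6 => tMat 5 3 3 | E7 => tMat 6 3 3 | E8 => tMat 7 3 3
  | F4 => f4Mat | H3 => tMat 2 1 5 | H4 => tMat 3 1 5

/-- The bounds on the rank. -/
def Ty.ok : Ty → Prop
  | A n => 2 ≤ n | C n => 2 ≤ n | D n => 3 ≤ n | _ => True

/-- The order of the Coxeter group. -/
def Ty.ord : Ty → ℕ
  | A n => (n + 2)! | C n => 2 ^ (n + 1) * (n + 1)! | D n => 2 ^ n * (n + 1)!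
  | E6 => 51840 | E7 => 2903040 | E8 => 696729600 | F4 => 1152 | H3 => 120 | H4 => 14400

lemma Ty.ord_pos (T : Ty) : 0 < T.ord := by
  cases T <;> simp only [Ty.ord] <;> positivity

lemma Ty.ord_spec (T : Ty) (h : T.ok) : Ord T.mat T.ord := by
  cases T with
  | A n => exact ord_A n
  | C n => exact ord_C n (by have : 2 ≤ n := h; omega)
  | D n => exact ord_D n (by have : 3 ≤ n := h; omega)
  | E6 => exact ord_E6
  | E7 => exact ord_E7
  | E8 => exact ord_E8
  | F4 => exact ord_F4
  | H3 => exact ord_H3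
  | H4 => exact ord_H4

/-- A type is either one of the six exceptional ones, or its order is `2 ^ a * (k + 1)!`. -/
lemma Ty.ord_form (T : Ty) (h : T.ok) :
    (∃ a k, Fam a k ∧ T.ord = 2 ^ a * (k + 1)! ∧ ((a = 0 ∧ ∃ n, k = n + 1 ∧ T = A n) ∨ (a = k + 1 ∧ T = C k) ∨
      (a = k ∧ T = D k))) ∨ (T = E6 ∨ T = E7 ∨ T = E8 ∨ T = F4 ∨ T = H3 ∨ T = H4) := by
  cases T with
  | A n =>
    have : 2 ≤ n := h
    exact Or.inl ⟨0, n + 1, Or.inl ⟨rfl, by omega⟩, by simp [Ty.ord], Or.inl ⟨rfl, n, rfl, rfl⟩⟩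
  | C n => exact Or.inl ⟨n + 1, n, Or.inr (Or.inr ⟨rfl, h⟩), rfl, Or.inr (Or.inl ⟨rfl, rfl⟩)⟩
  | D n => exact Or.inl ⟨n, n, Or.inr (Or.inl ⟨rfl, h⟩), rfl, Or.inr (Or.inr ⟨rfl, rfl⟩)⟩
  | _ => exact Or.inr (by simp)

/-- `120 = 5!` is the only order of an exceptional group, up to a factor of two, which is the order of
a group of one of the three families. -/
lemma Ty.ord_except {T : Ty} (hT : T = E6 ∨ T = E7 ∨ T = E8 ∨ T = F4 ∨ T = H3 ∨ T = H4) {a k N : ℕ}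
    (h' : N = 2 ^ a * (k + 1)!) (hk : Fam a k)
    (h : T.ord = N ∨ 2 * T.ord = N ∨ T.ord = 2 * N) : T = H3 ∧ a = 0 ∧ k = 4 ∧ T.ord = N := by
  have hb : N ≤ 1393459200 := by
    rcases hT with rfl | rfl | rfl | rfl | rfl | rfl <;> simp only [Ty.ord] at h <;> omega
  have hk2 : k + 1 ≤ 12 := by
    apply le_of_factorial
    refine le_trans ?_ hb
    rw [h']
    exact Nat.le_mul_of_pos_left _ (by positivity)
  have hk3 : k ≤ 11 := by omega
  subst h'
  clear hb hk2
  have hk4 : 2 ≤ k := by unfold Fam at hk; omega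
  have key : ∀ k ∈ Finset.Icc 2 11, ∀ a ∈ Finset.range 13, (a = 0 ∧ 3 ≤ k) ∨ (a = k ∧ 3 ≤ k) ∨ (a = k + 1 ∧ 2 ≤ k) →
      ∀ N ∈ [51840, 2903040, 696729600, 1152, 120, 14400],
      (N = 2 ^ a * (k + 1)! ∨ 2 * N = 2 ^ a * (k + 1)! ∨ N = 2 * (2 ^ a * (k + 1)!)) → N = 120 ∧ a = 0 ∧ k = 4 := by
    decide +kernel
  have hN : T.ord ∈ [51840, 2903040, 696729600, 1152, 120, 14400] := by
    rcases hT with rfl | rfl | rfl | rfl | rfl | rfl <;> simp [Ty.ord]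
  obtain ⟨h1, h2, h3⟩ := key k (Finset.mem_Icc.2 ⟨hk4, hk3⟩) a
    (Finset.mem_range.2 (by unfold Fam at hk; omega)) hk _ hN h
  refine ⟨?_, h2, h3, ?_⟩
  · rcases hT with rfl | rfl | rfl | rfl | rfl | rfl <;> simp [Ty.ord] at h1 ⊢
  · rw [h1, h2, h3]; decide

/-- The order determines the type, except for the orders of `A₄` and `H₃`. -/
lemma Ty.eq_of_ord {T T' : Ty} (h : T.ok) (h' : T'.ok) (he : T.ord = T'.ord) :
    T = T' ∨ (T = A 3 ∧ T' = H3) ∨ (T = H3 ∧ T' = A 3) := by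
  rcases T.ord_form h with ⟨a, k, hf, ho, hc⟩ | hT <;>
  rcases T'.ord_form h' with ⟨b, l, hf', ho', hc'⟩ | hT'
  · rw [ho, ho'] at he
    obtain ⟨rfl, rfl⟩ := fam_eq hf hf' he
    left
    unfold Fam at hf
    rcases hc with ⟨h1, n, h2, rfl⟩ | ⟨h1, rfl⟩ | ⟨h1, rfl⟩ <;>
    rcases hc' with ⟨h1', n', h2', rfl⟩ | ⟨h1', rfl⟩ | ⟨h1', rfl⟩ <;>
    first
    | rfl
    | (exfalso; omega)
    | (congr 1; omega)
  · obtain ⟨rfl, rfl, rfl, -⟩ := Ty.ord_except hT' ho hf (Or.inl he.symm)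
    rcases hc with ⟨h1, n, h2, rfl⟩ | ⟨h1, rfl⟩ | ⟨h1, rfl⟩
    · obtain rfl : n = 3 := by omega
      simp
    · omega
    · omega
  · obtain ⟨rfl, rfl, rfl, -⟩ := Ty.ord_except hT ho' hf' (Or.inl he)
    rcases hc' with ⟨h1, n, h2, rfl⟩ | ⟨h1, rfl⟩ | ⟨h1, rfl⟩
    · obtain rfl : n = 3 := by omega
      simp
    · omega
    · omega
  · rcases hT with rfl | rfl | rfl | rfl | rfl | rfl <;> rcases hT' with rfl | rfl | rfl | rfl | rfl | rfl <;>
      first | exact Or.inl rfl | (simp [Ty.ord] at he)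

/-- The pairs of types whose orders differ by a factor of two. -/
lemma Ty.dbl {T T' : Ty} (h : T.ok) (h' : T'.ok) (he : T'.ord = 2 * T.ord) :
    (T = A 2 ∧ T' = C 2) ∨ ∃ n, 3 ≤ n ∧ T = D n ∧ T' = C n := by
  rcases T.ord_form h with ⟨a, k, hf, ho, hc⟩ | hT <;>
  rcases T'.ord_form h' with ⟨b, l, hf', ho', hc'⟩ | hT'
  · rw [ho, ho'] at he
    have := fam_dbl hf hf' (by rw [he, pow_succ]; ring)
    rcases this with ⟨rfl, rfl, rfl, rfl⟩ | ⟨rfl, h3, rfl, rfl⟩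
    · left
      rcases hc with ⟨h1, n, h2, rfl⟩ | ⟨h1, rfl⟩ | ⟨h1, rfl⟩ <;>
      rcases hc' with ⟨h1', n', h2', rfl⟩ | ⟨h1', rfl⟩ | ⟨h1', rfl⟩ <;>
      first
      | (exfalso; omega)
      | (obtain rfl : n = 2 := by omega
         exact ⟨rfl, rfl⟩)
    · right
      rcases hc with ⟨h1, n, h2, rfl⟩ | ⟨h1, rfl⟩ | ⟨h1, rfl⟩ <;>
      rcases hc' with ⟨h1', n', h2', rfl⟩ | ⟨h1', rfl⟩ | ⟨h1', rfl⟩ <;>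
      first
      | (exfalso; omega)
      | exact ⟨_, h3, rfl, rfl⟩
  · have := Ty.ord_except hT' ho hf (Or.inr (Or.inr he))
    have := T.ord_pos
    omega
  · have := Ty.ord_except hT ho' hf' (Or.inr (Or.inl he.symm))
    have := T.ord_pos
    omega
  · rcases hT with rfl | rfl | rfl | rfl | rfl | rfl <;> rcases hT' with rfl | rfl | rfl | rfl | rfl | rfl <;>
      simp [Ty.ord] at he

lemma aMat_eq (n : ℕ) : aMat (n + 1) = tMat n 1 3 := by
  funext u v
  simp only [aMat, tMat, Fin.ext_iff]
  have := u.2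
  have := v.2
  split_ifs <;> first | rfl | omega

variable {I : Type*} [Fintype I] [DecidableEq I] {M : CoxeterMatrix I}

/-- The classification of the irreducible finite Coxeter systems of rank at least two. -/
lemma classify_ty (hpd : ∀ v : I → ℝ, v ≠ 0 → 0 < bil M v v) (hirr : Irr M Set.univ) [Nontrivial I] :
    (∃ m, 3 ≤ m ∧ Typ M (tMat 1 1 m)) ∨ ∃ T : Ty, T.ok ∧ Typ M T.mat := by
  rcases classify hpd hirr with ⟨n, hn, h⟩ | ⟨n, j, m, hs, h⟩ | h
  · obtain ⟨k, rfl⟩ : ∃ k, n = k + 1 := ⟨n - 1, by omega⟩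
    rcases k with _ | _ | k
    · obtain ⟨e, -⟩ := h
      obtain ⟨x, y, hxy⟩ := exists_pair_ne I
      exact absurd (e.injective (Fin.ext (by have := (e x).2; have := (e y).2; omega))) hxy
    · left
      refine ⟨3, le_rfl, ?_⟩
      rw [← aMat_eq]; exact h
    · right
      refine ⟨Ty.A (k + 2), show 2 ≤ k + 2 by omega, ?_⟩
      show Typ M (tMat (k + 2) 1 3)
      rw [← aMat_eq]; exact h
  · rcases hs with ⟨rfl, rfl, hm⟩ | ⟨rfl, rfl, hn⟩ | ⟨rfl, rfl, rfl | rfl⟩ | ⟨rfl, rfl, hn⟩ | ⟨rfl, rfl, rfl | rfl | rfl⟩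
    · exact Or.inl ⟨m, by omega, h⟩
    · exact Or.inr ⟨Ty.C n, hn, h⟩
    · exact Or.inr ⟨Ty.H3, trivial, h⟩
    · exact Or.inr ⟨Ty.H4, trivial, h⟩
    · exact Or.inr ⟨Ty.D n, hn, h⟩
    · exact Or.inr ⟨Ty.E6, trivial, h⟩
    · exact Or.inr ⟨Ty.E7, trivial, h⟩
    · exact Or.inr ⟨Ty.E8, trivial, h⟩
  · exact Or.inr ⟨Ty.F4, trivial, h⟩

end Ty

end BM

/-! ### Commutators and centers -/

namespace BM
open CoxeterSystem
open scoped commutatorElement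

section NotComm
variable {I : Type*} [Fintype I] [DecidableEq I] {M : CoxeterMatrix I} {W : Type*} [Group W]

/-- A vertex `t` with an edge of label `3` to `s` and an edge to a vertex `u` which is not adjacent
to `s`. -/
lemma Ty.triple (T : Ty) (h : T.ok) : ∃ s t u, T.mat s t = 3 ∧ T.mat s u = 2 ∧ 2 < T.mat t u := by
  have key : ∀ n j m : ℕ, 2 ≤ n → 3 ≤ m → (j = 1 ∨ 3 ≤ n) → (j = 1 ∨ (j = 2 ∧ m = 3) ∨ (j = 3 ∧ 5 ≤ n)) →
      ∃ s t u, tMat n j m s t = 3 ∧ tMat n j m s u = 2 ∧ 2 < tMat n j m t u := by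
    intro n j m hn hm hj hj'
    refine ⟨⟨0, by omega⟩, ⟨1, by omega⟩, ⟨2, by omega⟩, ?_, ?_, ?_⟩ <;>
      simp only [tMat, Fin.ext_iff] <;> split_ifs <;> first | rfl | omega | simp_all
  cases T with
  | A n => exact key n 1 3 h (by norm_num) (Or.inl rfl) (Or.inl rfl)
  | C n => exact key n 1 4 h (by norm_num) (Or.inl rfl) (Or.inl rfl)
  | D n => exact key n 2 3 (le_trans (by norm_num) h) (by norm_num) (Or.inr h) (by omega)
  | E6 => exact key 5 3 3 (by norm_num) (by norm_num) (by omega) (by omega)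
  | E7 => exact key 6 3 3 (by norm_num) (by norm_num) (by omega) (by omega)
  | E8 => exact key 7 3 3 (by norm_num) (by norm_num) (by omega) (by omega)
  | F4 => exact ⟨0, 1, 2, by decide, by decide, by decide⟩
  | H3 => exact key 2 1 5 (by norm_num) (by norm_num) (by omega) (by omega)
  | H4 => exact key 3 1 5 (by norm_num) (by norm_num) (by omega) (by omega)

/-- In rank at least three the commutator subgroup is not commutative: for adjacent `s`, `t` with label `3`
and `u` joined to `t` only, the commutator `st` does not commute with its conjugate by `u`. -/
lemma not_comm (cs : CoxeterSystem M W) {s t u : I} (h3 : M s t = 3) (h2 : M s u = 2) (h : 2 < M t u) :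
    ∃ x ∈ commutator W, ∃ y ∈ commutator W, x * y ≠ y * x := by
  have hst : s ≠ t := by rintro rfl; rw [M.diagonal] at h3; omega
  have hsu : s ≠ u := by rintro rfl; rw [M.diagonal] at h2; omega
  have htu : t ≠ u := by rintro rfl; rw [M.diagonal] at h; omega
  have g1 : gram M s t = -1 / 2 := by have := gram_three h3; linarith
  have g1' : gram M t s = -1 / 2 := by rw [gram_symm]; exact g1
  have g2 : gram M u s = 0 := by have := gram_two h2; rw [gram_symm]; linarith
  have g3 : gram M u t ≠ 0 := by rw [gram_symm]; exact gram_ne_zero (Or.inr h)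
  have hx : cs.simple s * cs.simple t ∈ commutator W := by
    have e : cs.simple s * cs.simple t = ⁅cs.simple t, cs.simple s⁆ := by
      have h1 : (cs.simple t * cs.simple s) ^ 3 = 1 := by
        have := cs.simple_mul_simple_pow t s
        rwa [M.symmetric t s, h3] at this
      rw [commutatorElement_def, cs.inv_simple, cs.inv_simple]
      have h4 : cs.simple s * cs.simple t = (cs.simple t * cs.simple s)⁻¹ := by simp
      rw [h4, inv_eq_iff_mul_eq_one, ← h1]
      simp only [pow_succ, pow_zero, one_mul, mul_assoc]
    rw [e]
    exact Subgroup.commutator_mem_commutator (Subgroup.mem_top _) (Subgroup.mem_top _)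
  refine ⟨_, hx, cs.simple u * (cs.simple s * cs.simple t) * (cs.simple u)⁻¹,
    (commutator W).normal_of_characteristic.conj_mem _ hx _, fun hc => ?_⟩
  set x := cs.simple s * cs.simple t with hxdef
  set g := cs.simple u * x * (cs.simple u)⁻¹ with hg
  have hxs : rep cs x (rt s) = rt t := by
    rw [hxdef, rep_mul_apply, rep_simple_apply cs t, bil_rt_rt, g1', map_sub, map_smul, rep_simple_rt_self,
      rep_simple_apply, bil_rt_rt, g1]
    module
  have hxt : rep cs x (rt t) = - rt s - rt t := by
    rw [hxdef, rep_mul_apply, rep_simple_rt_self, map_neg, rep_simple_apply, bil_rt_rt, g1]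
    module
  have hxu : ∀ v, rep cs x v u = v u := fun v => by
    rw [hxdef, rep_mul_apply, rep_simple_coord _ _ hsu.symm, rep_simple_coord _ _ htu.symm]
  -- hence `g` kills the `u`-coordinate of the image of `x - 1`, which contains `rt s`
  have hcv : ∀ v, rep cs g (rep cs x v) u = rep cs g v u := fun v => by
    rw [← rep_mul_apply, ← hc, rep_mul_apply, hxu]
  have h5 : rep cs g (rt s) u = 0 := by
    have e1 := hcv (rt s)
    have e2 := hcv (rt t)
    rw [hxs] at e1
    rw [hxt, map_sub, map_neg] at e2
    simp only [Pi.sub_apply, Pi.neg_apply] at e2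
    linarith
  have h6 : rep cs g (rt s) u = -(2 * gram M u t) := by
    rw [hg, cs.inv_simple, rep_mul_apply, rep_mul_apply, rep_simple_apply cs u (rt s), bil_rt_rt, g2]
    rw [mul_zero, zero_smul, sub_zero, hxs, rep_simple_apply, bil_rt_rt]
    simp [rt_apply, htu.symm]
  rw [h5] at h6
  apply g3
  linarith

/-- In rank two the commutator subgroup consists of rotations. -/
lemma comm_dihedral (cs : CoxeterSystem M W) {s t : I} (hI : ∀ i, i = s ∨ i = t) :
    ∀ x ∈ commutator W, ∀ y ∈ commutator W, x * y = y * x := by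
  have hle : commutator W ≤ Subgroup.zpowers (cs.simple s * cs.simple t) := by
    rw [commutator_def, Subgroup.commutator_le]
    intro a _ b _
    have hm := @Subgroup.mul_mem_iff_of_index_two _ _ _ (zpowers_index cs hI)
    rw [commutatorElement_def, hm, hm, hm]
    simp only [inv_mem_iff]
    tauto
  intro x hx y hy
  obtain ⟨a, rfl⟩ := Subgroup.mem_zpowers_iff.1 (hle hx)
  obtain ⟨b, rfl⟩ := Subgroup.mem_zpowers_iff.1 (hle hy)
  rw [← zpow_add, ← zpow_add, add_comm]

lemma typ_two {N : ℕ} (h : Typ M (tMat 1 1 N)) : ∃ s t : I, s ≠ t ∧ (∀ i, i = s ∨ i = t) ∧ M s t = N := by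
  obtain ⟨e, he⟩ := h
  refine ⟨e.symm 0, e.symm 1, by simp, fun i => ?_, ?_⟩
  · rcases Fin.exists_fin_two.1 ⟨e i, rfl⟩ with h | h
    · exact Or.inl (by rw [← h]; simp)
    · exact Or.inr (by rw [← h]; simp)
  · rw [he]; simp [tMat]

end NotComm

section Center
variable {I : Type*} [Fintype I] [DecidableEq I] {M : CoxeterMatrix I} {W : Type*} [Group W]

/-- The nontrivial central elements act as `-1`. -/
lemma center_neg (cs : CoxeterSystem M W) (hirr : Irr M Set.univ) {z : W}
    (hz : z ∈ Subgroup.center W) (h1 : z ≠ 1) (v : I → ℝ) : rep cs z v = -v := by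
  obtain ⟨ε, hε, h⟩ := scal_of_commute (cs := cs) hirr (g := z) fun c _ => (Subgroup.mem_center_iff.1 hz _).symm
  have he : ∀ v, rep cs z v = ε • v := fun v => by
    have e : v = ∑ i, v i • rt i := by ext j; simp [rt_apply, Finset.sum_apply]
    rw [e, map_sum, Finset.smul_sum]
    refine Finset.sum_congr rfl fun i _ => ?_
    rw [map_smul, h i (Set.mem_univ _), smul_comm]
  rcases hε with rfl | rfl
  · exact absurd (faithful cs fun s => by rw [he, one_smul]) h1
  · rw [he]; module

lemma center_of_neg (cs : CoxeterSystem M W) {z : W} (h : ∀ v, rep cs z v = -v) : z ∈ Subgroup.center W :=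
  Subgroup.mem_center_iff.2 fun g => rep_inj (cs := cs) fun s => by rw [rep_mul_apply, rep_mul_apply, h, h, map_neg]

/-- The symmetric groups have trivial center. -/
lemma center_A {n : ℕ} (hn : 1 ≤ n) {M : CoxeterMatrix (Fin (n + 1))} (cs : CoxeterSystem M W)
    (hM : ∀ i j, M i j = tMat n 1 3 i j) (hirr : Irr M Set.univ) {z : W} (hz : z ∈ Subgroup.center W) : z = 1 := by
  by_contra h1
  have h := center_neg cs hirr hz h1
  obtain ⟨y, hy⟩ := (aOrb hM).word cs z (aOrb hM).x0
  have key : ∀ i : Fin (n + 1), (aOrb hM).val y i = - (aOrb hM).val (aOrb hM).x0 i := by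
    intro i
    have := hy (rt i)
    rw [h, dotProduct_neg] at this
    simpa [rt] using this.symm
  have e0 := key 0
  have e1 := key ⟨1, by omega⟩
  rw [(aOrb hM).val_x0] at e0 e1
  have hc : 0 < (aOrb hM).c := (aOrb hM).c_pos
  change wtv (Fin.val (n := n + 2) y) (0 : ℕ) = _ at e0
  change wtv (Fin.val (n := n + 2) y) (1 : ℕ) = _ at e1
  rw [if_pos rfl] at e0
  rw [if_neg (by simp [Fin.ext_iff])] at e1
  generalize Fin.val (n := n + 2) y = k at e0 e1
  unfold wtv at e0 e1
  split_ifs at e0 e1 <;> first | omega | (norm_num at e0 e1; try linarith)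

/-- The group of type `H₃` contains `-1`, as the fifth power of a Coxeter element. -/
lemma center_H3 {M : CoxeterMatrix (Fin 3)} (cs : CoxeterSystem M W)
    (hM : ∀ i j, M i j = tMat 2 1 5 i j) : ∃ z ∈ Subgroup.center W, z ≠ 1 := by
  have h01 : 2 * gram M 0 1 = -1 := gram_three (by rw [hM]; decide)
  have h02 : 2 * gram M 0 2 = 0 := gram_two (by rw [hM]; decide)
  have h12 : 2 * gram M 1 2 = -Real.goldenRatio := gram_five (by rw [hM]; decide)
  have hp : Real.goldenRatio ^ 2 = Real.goldenRatio + 1 := Real.goldenRatio_sq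
  generalize Real.goldenRatio = p at h12 hp
  have hb : ∀ (j : Fin 3) (x y z : ℝ), 2 * bil M (rt j) ![x, y, z] =
      2 * gram M j 0 * x + 2 * gram M j 1 * y + 2 * gram M j 2 * z := fun j x y z => by
    rw [bil_apply, Finset.sum_eq_single j (fun k _ hk => by simp [rt_apply, hk]) (by simp)]
    simp [Fin.sum_univ_three]; ring
  have ha : ∀ x y z : ℝ, rep cs (cs.simple 0) ![x, y, z] = ![y - x, y, z] := fun x y z => by
    rw [rep_simple_apply, hb, gram_self, h01, h02]
    ext i; fin_cases i <;> (simp [rt_apply]; try ring)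
  have hb' : ∀ x y z : ℝ, rep cs (cs.simple 1) ![x, y, z] = ![x, x + p * z - y, z] := fun x y z => by
    rw [rep_simple_apply, hb, gram_self, gram_symm M 1 0, h01, h12]
    ext i; fin_cases i <;> (simp [rt_apply]; try ring)
  have hc : ∀ x y z : ℝ, rep cs (cs.simple 2) ![x, y, z] = ![x, y, p * y - z] := fun x y z => by
    rw [rep_simple_apply, hb, gram_self, gram_symm M 2 0, gram_symm M 2 1, h02, h12]
    ext i; fin_cases i <;> (simp [rt_apply]; try ring)
  set T := cs.simple 0 * cs.simple 1 * cs.simple 2 with hT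
  have vext : ∀ {x y z x' y' z' : ℝ}, x = x' → y = y' → z = z' → ![x, y, z] = ![x', y', z'] := by
    rintro _ _ _ _ _ _ rfl rfl rfl; rfl
  have t1 : ∀ x y z : ℝ, rep cs T ![x, y, z] = ![p * y - p * z, x + p * y - p * z, p * y - z] := fun x y z => by
    rw [hT, rep_mul_apply, hc, rep_mul_apply, hb', ha]
    refine vext ?_ ?_ ?_
    · linear_combination y * hp
    · linear_combination y * hp
    · ring
  have t2 : ∀ x y z : ℝ, rep cs (T * T) ![x, y, z] = ![p * x - z, p * x + p * y - (p + 1) * z, p * x + y - p * z] :=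
    fun x y z => by
      rw [rep_mul_apply, t1, t1]
      refine vext ?_ ?_ ?_
      · linear_combination (-z) * hp
      · linear_combination (-z) * hp
      · linear_combination (y - z) * hp
  have t5 : ∀ x y z : ℝ, rep cs (T * (T * T * (T * T))) ![x, y, z] = ![-x, -y, -z] := fun x y z => by
    have t4 : rep cs (T * T * (T * T)) ![x, y, z] = ![x - y, x - p * z, p * x - p * z] := by
      rw [rep_mul_apply, t2, t2]
      refine vext ?_ ?_ ?_
      · linear_combination x * hp
      · linear_combination (x + y) * hp
      · linear_combination z * hp
    rw [rep_mul_apply, t4, t1]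
    refine vext ?_ ?_ ?_
    · linear_combination (-x) * hp
    · linear_combination (-x) * hp
    · linear_combination (-z) * hp
  have t5' : ∀ v, rep cs (T * (T * T * (T * T))) v = -v := fun v => by
    have : v = ![v 0, v 1, v 2] := by ext i; fin_cases i <;> rfl
    rw [this, t5]; ext i; fin_cases i <;> simp
  refine ⟨_, center_of_neg cs t5', fun h1 => ?_⟩
  have := congrFun (t5' ![1, 0, 0]) 0
  rw [h1, rep_one_apply] at this
  norm_num at this

end Center

end BM

/-! ### Comparison of types -/

namespace BM
open CoxeterSystem

section SignC
variable {n : ℕ} {M : CoxeterMatrix (Fin (n + 1))} {W : Type*} [Group W]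

/-- The sign change of the coordinate `n - d`, as a conjugate of the last generator. -/
def flip (cs : CoxeterSystem M W) : ℕ → W
  | 0 => cs.simple (Fin.last n)
  | d + 1 => cs.simple (Fin.ofNat (n + 1) (n - (d + 1))) * flip cs d * cs.simple (Fin.ofNat (n + 1) (n - (d + 1)))

/-- The sign change of the last `d` coordinates. -/
def flips (cs : CoxeterSystem M W) : ℕ → W
  | 0 => 1
  | d + 1 => flips cs d * flip cs d

lemma cS_dot (cs : CoxeterSystem M W) (hn : 1 ≤ n) (hM : ∀ i j, M i j = tMat n 1 4 i j) (j x : Fin (n + 1))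
    (v : Fin (n + 1) → ℝ) : (fun i : Fin (n + 1) => (cSOrb hn hM).f x i) ⬝ᵥ rep cs (cs.simple j) v =
      (((cSOrb hn hM).e j x : ℤ) : ℝ) * ((fun i : Fin (n + 1) => (cSOrb hn hM).f ((cSOrb hn hM).p j x) i) ⬝ᵥ v) := by
  have h := (cSOrb hn hM).orb.dot_simple cs j (x, 1) v
  simp only [SOrb.orb, Units.val_one, Int.cast_one, one_mul] at h
  rw [h]
  simp only [dotProduct, Finset.mul_sum, mul_assoc]

lemma flip_dot (cs : CoxeterSystem M W) (hn : 1 ≤ n) (hM : ∀ i j, M i j = tMat n 1 4 i j) (d : ℕ) (hd : d ≤ n) :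
    ∀ (x : Fin (n + 1)) (v : Fin (n + 1) → ℝ), (fun i : Fin (n + 1) => (cSOrb hn hM).f x i) ⬝ᵥ rep cs (flip cs d) v =
      (if x.val + d = n then -1 else 1) * ((fun i : Fin (n + 1) => (cSOrb hn hM).f x i) ⬝ᵥ v) := by
  induction d with
  | zero =>
    intro x v
    rw [flip, cS_dot cs hn hM]
    simp only [cSOrb, Fin.val_last, lt_irrefl, if_false, dif_neg, not_false_eq_true, add_zero]
    split_ifs <;> simp
  | succ d ih =>
    intro x v
    obtain ⟨j, hj⟩ : ∃ j : Fin (n + 1), Fin.ofNat (n + 1) (n - (d + 1)) = j := ⟨_, rfl⟩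
    have hjv : j.val + (d + 1) = n := by
      rw [← hj]; simp only [Fin.val_ofNat]; rw [Nat.mod_eq_of_lt (by omega)]; omega
    have he : ∀ y, (cSOrb hn hM).e j y = 1 := fun y => by simp only [cSOrb]; rw [if_pos (by omega)]
    have hp : ∀ y, ((cSOrb hn hM).p j y).val = sw j y := fun y => by
      simp only [cSOrb]; rw [dif_pos (by omega)]
    have hpp : (cSOrb hn hM).p j ((cSOrb hn hM).p j x) = x := by
      apply Fin.ext
      rw [hp, hp]; unfold sw; split_ifs <;> omega
    rw [flip, hj, rep_mul_apply, rep_mul_apply, cS_dot cs hn hM, he, ih (by omega), cS_dot cs hn hM, he, hpp, hp]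
    have : (sw j x + d = n) ↔ (x.val + (d + 1) = n) := by unfold sw; split_ifs <;> omega
    simp only [this]
    simp

lemma flips_dot (cs : CoxeterSystem M W) (hn : 1 ≤ n) (hM : ∀ i j, M i j = tMat n 1 4 i j) (d : ℕ) (hd : d ≤ n + 1) :
    ∀ (x : Fin (n + 1)) (v : Fin (n + 1) → ℝ), (fun i : Fin (n + 1) => (cSOrb hn hM).f x i) ⬝ᵥ rep cs (flips cs d) v =
      (if n < x.val + d then -1 else 1) * ((fun i : Fin (n + 1) => (cSOrb hn hM).f x i) ⬝ᵥ v) := by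
  induction d with
  | zero =>
    intro x v
    rw [flips, rep_one_apply, if_neg (by omega), one_mul]
  | succ d ih =>
    intro x v
    rw [flips, rep_mul_apply, ih (by omega), flip_dot cs hn hM d (by omega)]
    split_ifs <;> first | omega | ring

lemma flip_mem (cs : CoxeterSystem M W) {K : Subgroup W} (hK : K.index = 2) (d : ℕ) :
    flip cs d ∈ K ↔ flip cs 0 ∈ K := by
  induction d with
  | zero => rfl
  | succ d ih =>
    rw [← ih, flip, Subgroup.mul_mem_iff_of_index_two hK, Subgroup.mul_mem_iff_of_index_two hK]
    tauto

lemma flips_mem (cs : CoxeterSystem M W) {K : Subgroup W} (hK : K.index = 2) (d : ℕ) :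
    flips cs (2 * d) ∈ K := by
  induction d with
  | zero => exact one_mem _
  | succ d ih =>
    have e : flips cs (2 * (d + 1)) = flips cs (2 * d) * flip cs (2 * d) * flip cs (2 * d + 1) := rfl
    rw [e, mul_assoc]
    refine mul_mem ih ?_
    rw [Subgroup.mul_mem_iff_of_index_two hK, flip_mem cs hK, flip_mem cs hK (2 * d + 1)]

/-- In even rank, every subgroup of index two of the hyperoctahedral group contains `-1`, which is the product
of an even number of conjugate sign changes. -/
lemma center_C (cs : CoxeterSystem M W) [Finite W] (hn : 1 ≤ n) (hM : ∀ i j, M i j = tMat n 1 4 i j) (hirr : Irr M Set.univ)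
    (hodd : ¬ Even n) {K : Subgroup W} (hK : K.index = 2) {z : W} (hz : z ∈ Subgroup.center W) : z ∈ K := by
  by_cases h1 : z = 1
  · rw [h1]; exact one_mem _
  obtain ⟨q, hq⟩ := Nat.not_even_iff_odd.1 hodd
  have hz' : z = flips cs (2 * (q + 1)) := rep_inj (cs := cs) fun s => by
    rw [center_neg cs hirr hz h1, eq_comm, ← sub_eq_zero]
    refine (cSOrb hn hM).orb.sep cs hirr fun x => ?_
    have e : (cSOrb hn hM).orb.val x = ((x.2 : ℤ) : ℝ) • fun i : Fin (n + 1) => (cSOrb hn hM).f x.1 i := by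
      funext i; rfl
    rw [e, smul_dotProduct, dotProduct_sub, flips_dot cs hn hM _ (by omega), if_pos (by omega), dotProduct_neg]
    simp
  rw [hz']
  exact flips_mem cs hK _

end SignC

section Types
variable {I : Type*} [Fintype I] [DecidableEq I] {M : CoxeterMatrix I} {G : Type*} [Group G]
  {J : Type*} [Fintype J] [DecidableEq J] {M' : CoxeterMatrix J} {G' : Type*} [Group G']

lemma bMat_eq (n : ℕ) (hn : 2 ≤ n) : bMat (n + 1) = tMat n 2 3 := by
  funext u v
  simp only [bMat, tMat, Fin.ext_iff]
  have := u.2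
  have := v.2
  split_ifs <;> first | rfl | omega

lemma cMat_eq (n : ℕ) : cMat (n + 1) = tMat n 1 4 := by
  funext u v
  simp only [cMat, tMat, Fin.ext_iff]
  have := u.2
  have := v.2
  split_ifs <;> first | rfl | omega

lemma d2Mat_eq (k : ℕ) : d2Mat k = tMat 1 1 k := by
  funext u v
  fin_cases u <;> fin_cases v <;> simp [d2Mat, tMat]

lemma Typ.trans_equiv {k : ℕ} {A : Fin k → Fin k → ℕ} (h : Typ M A) (h' : Typ M' A) :
    ∃ e : I ≃ J, ∀ u v, M' (e u) (e v) = M u v := by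
  obtain ⟨e, he⟩ := h
  obtain ⟨e', he'⟩ := h'
  exact ⟨e.trans e'.symm, fun u v => by rw [he', he]; simp⟩

/-- The Coxeter matrix read on the vertices of the standard diagram. -/
lemma Typ.exists_reindex {k : ℕ} {A : Fin k → Fin k → ℕ} (cs : CoxeterSystem M G) (h : Typ M A) (hirr : Irr M Set.univ) :
    ∃ (N : CoxeterMatrix (Fin k)) (cs' : CoxeterSystem N G), (∀ i j, N i j = A i j) ∧ Irr N Set.univ := by
  obtain ⟨e, he⟩ := h
  have hN : ∀ i j, M.reindex e i j = A i j := fun i j => by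
    rw [CoxeterMatrix.reindex_apply, he]; simp
  refine ⟨M.reindex e, cs.reindex e, hN, ?_, fun u _ v _ => ?_⟩
  · obtain ⟨i, -⟩ := hirr.1
    exact ⟨e i, trivial⟩
  · have := hirr.2 (e.symm u) trivial (e.symm v) trivial
    have := Relation.ReflTransGen.lift e (p := fun x y => x ∈ Set.univ ∧ y ∈ Set.univ ∧ x ≠ y ∧ (M.reindex e x y = 0 ∨ 2 < M.reindex e x y))
      (fun a b hab => ⟨trivial, trivial, fun h => hab.2.2.1 (e.injective h), by rw [CoxeterMatrix.reindex_apply, e.symm_apply_apply, e.symm_apply_apply]; exact hab.2.2.2⟩) _ _ this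
    simpa [Function.onFun] using this

/-- Whether the rank is two can be read off the commutator subgroup. -/
lemma dihedral_or (cs : CoxeterSystem M G) [Finite G] [Nontrivial I] (hirr : Irr M Set.univ) :
    ((∃ m, 3 ≤ m ∧ Typ M (tMat 1 1 m) ∧ Nat.card G = 2 * m) ∧ ∀ x ∈ commutator G, ∀ y ∈ commutator G, x * y = y * x) ∨
    ((∃ T : Ty, T.ok ∧ Typ M T.mat ∧ Nat.card G = T.ord) ∧ ∃ x ∈ commutator G, ∃ y ∈ commutator G, x * y ≠ y * x) := by
  rcases classify_ty (fun v hv => posDef cs hv) hirr with ⟨m, hm, h⟩ | ⟨T, hT, h⟩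
  · left
    obtain ⟨s, t, hst, hI, hM⟩ := typ_two h
    refine ⟨⟨m, hm, h, ?_⟩, comm_dihedral cs hI⟩
    rw [card_dihedral cs hst hI (by omega), hM]
  · right
    refine ⟨⟨T, hT, h, Ord.of_typ cs (T.ord_spec hT) h⟩, ?_⟩
    obtain ⟨e, he⟩ := h
    obtain ⟨s, t, u, h1, h2, h3⟩ := T.triple hT
    exact not_comm cs (s := e.symm s) (t := e.symm t) (u := e.symm u) (by rw [he]; simpa) (by rw [he]; simpa)
      (by rw [he]; simpa)

/-- Isomorphic finite irreducible Coxeter groups with the same behaviour of the commutator subgroups have the same type. -/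
theorem type_eq (cs : CoxeterSystem M G) (cs' : CoxeterSystem M' G') [Finite G] [Finite G'] [Nontrivial I] [Nontrivial J]
    (hirr : Irr M Set.univ) (hirr' : Irr M' Set.univ)
    (hcomm : (∀ x ∈ commutator G, ∀ y ∈ commutator G, x * y = y * x) ↔
      ∀ x ∈ commutator G', ∀ y ∈ commutator G', x * y = y * x) (φ : G ≃* G') :
    ∃ e : I ≃ J, ∀ u v, M' (e u) (e v) = M u v := by
  have hcard : Nat.card G = Nat.card G' := Nat.card_congr φ.toEquiv
  have hcen : ∀ z, z ∈ Subgroup.center G ↔ φ z ∈ Subgroup.center G' := fun z => by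
    rw [Subgroup.mem_center_iff, Subgroup.mem_center_iff, φ.surjective.forall]
    refine forall_congr' fun g => ?_
    rw [← map_mul, ← map_mul, φ.injective.eq_iff]
  rcases dihedral_or cs hirr with ⟨⟨m, hm, h, hc⟩, hd⟩ | ⟨⟨T, hT, h, hc⟩, hd⟩ <;>
  rcases dihedral_or cs' hirr' with ⟨⟨m', hm', h', hc'⟩, hd'⟩ | ⟨⟨T', hT', h', hc'⟩, hd'⟩
  · obtain rfl : m = m' := by omega
    exact h.trans_equiv h'
  · obtain ⟨x, hx, y, hy, hxy⟩ := hd'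
    exact absurd (hcomm.1 hd x hx y hy) hxy
  · obtain ⟨x, hx, y, hy, hxy⟩ := hd
    exact absurd (hcomm.2 hd' x hx y hy) hxy
  · rcases Ty.eq_of_ord hT hT' (by rw [← hc, ← hc', hcard]) with rfl | ⟨rfl, rfl⟩ | ⟨rfl, rfl⟩
    · exact h.trans_equiv h'
    · exfalso
      obtain ⟨N, cN, hN, hiN⟩ := h.exists_reindex cs hirr
      obtain ⟨N', cN', hN', hiN'⟩ := h'.exists_reindex cs' hirr'
      obtain ⟨z, hz, hz1⟩ := center_H3 cN' hN'
      have := center_A (n := 3) (by norm_num) cN hN hiN ((hcen (φ.symm z)).2 (by simpa))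
      exact hz1 (by simpa using this)
    · exfalso
      obtain ⟨N, cN, hN, hiN⟩ := h.exists_reindex cs hirr
      obtain ⟨N', cN', hN', hiN'⟩ := h'.exists_reindex cs' hirr'
      obtain ⟨z, hz, hz1⟩ := center_H3 cN hN
      have := center_A (n := 3) (by norm_num) cN' hN' hiN' ((hcen z).1 hz)
      exact hz1 (by simpa using this)

/-- A central rotation of a dihedral group of order `4 * m` which lies outside a subgroup of index two forces `m` to be odd. -/
lemma dihedral_odd (cs : CoxeterSystem M G) {s t : I} (hst : s ≠ t) (hI : ∀ i, i = s ∨ i = t) {m : ℕ} (hm : 2 ≤ m)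
    (hM : M s t = 2 * m) {K : Subgroup G} (hK : K.index = 2) {z : G} (hz : z ∈ Subgroup.center G) (hzK : z ∉ K) : Odd m := by
  by_contra hodd
  obtain ⟨r, hr⟩ := Nat.not_odd_iff_even.1 hodd
  have hord := orderOf_mul cs hst (by omega)
  rw [Subgroup.mem_center_iff] at hz
  set c := cs.simple s * cs.simple t with hc
  have hsc : cs.simple s * c * (cs.simple s)⁻¹ = c⁻¹ := by simp [hc, mul_assoc]
  rcases zpowers_iff cs hI z with h | h
  · obtain ⟨k, hk⟩ := Subgroup.mem_zpowers_iff.1 h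
    have h1 : c ^ (2 * k) = 1 := by
      have : cs.simple s * c ^ k * (cs.simple s)⁻¹ = c ^ k := by rw [hk, hz, mul_inv_cancel_right]
      rw [← conj_zpow, hsc, inv_zpow, inv_eq_iff_mul_eq_one] at this
      rw [two_mul, zpow_add, this]
    have h2 := orderOf_dvd_iff_zpow_eq_one.2 h1
    rw [hord, hM] at h2
    obtain ⟨l, hl⟩ : (m : ℤ) ∣ k := by
      obtain ⟨l, hl⟩ := h2
      exact ⟨l, by push_cast at hl; linarith⟩
    apply hzK
    have e : z = c ^ (r * l) * c ^ (r * l) := by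
      rw [← zpow_add, ← hk, hl, hr]
      congr 1
      push_cast; ring
    rw [e]
    exact Subgroup.mul_self_mem_of_index_two hK _
  · obtain ⟨k, hk⟩ := Subgroup.mem_zpowers_iff.1 h
    have h1 : z * cs.simple s * c = c * (z * cs.simple s) := by
      rw [← hk, ← zpow_add_one, ← zpow_one_add, add_comm]
    have h2 : cs.simple s * c = c * cs.simple s := by
      rw [mul_assoc, ← mul_assoc c, hz c, mul_assoc] at h1
      exact mul_left_cancel h1
    have h3 : c ^ 2 = 1 := by
      rw [h2, mul_inv_cancel_right, eq_inv_iff_mul_eq_one] at hsc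
      rw [pow_two, hsc]
    have h4 := orderOf_dvd_iff_pow_eq_one.2 h3
    rw [hord, hM] at h4
    have := Nat.le_of_dvd (by norm_num) h4
    omega

/-- The types of a pair of matching finite irreducible Coxeter groups, the first of which is embedded as a subgroup
of index two missing a central element of the second. -/
theorem type_lt (cs : CoxeterSystem M G) (cs' : CoxeterSystem M' G') [Finite G] [Finite G'] [Nontrivial I] [Nontrivial J]
    (hirr : Irr M Set.univ) (hirr' : Irr M' Set.univ)
    (hcomm : (∀ x ∈ commutator G, ∀ y ∈ commutator G, x * y = y * x) ↔
      ∀ x ∈ commutator G', ∀ y ∈ commutator G', x * y = y * x)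
    (hcard : Nat.card G' = 2 * Nat.card G) {K : Subgroup G'} (hK : K.index = 2) {z : G'} (hz : z ∈ Subgroup.center G')
    (hzK : z ∉ K) :
    (∃ q, 1 ≤ q ∧ Typ M (bMat (2 * q + 1)) ∧ Typ M' (cMat (2 * q + 1))) ∨
      ∃ q, 1 ≤ q ∧ Typ M (d2Mat (2 * q + 1)) ∧ Typ M' (d2Mat (4 * q + 2)) := by
  rcases dihedral_or cs hirr with ⟨⟨m, hm, h, hc⟩, hd⟩ | ⟨⟨T, hT, h, hc⟩, hd⟩ <;>
  rcases dihedral_or cs' hirr' with ⟨⟨m', hm', h', hc'⟩, hd'⟩ | ⟨⟨T', hT', h', hc'⟩, hd'⟩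
  · right
    obtain rfl : m' = 2 * m := by omega
    obtain ⟨s, t, hst, hI, hM⟩ := typ_two h'
    obtain ⟨q, rfl⟩ := dihedral_odd cs' hst hI (by omega) hM hK hz hzK
    refine ⟨q, by omega, ?_, ?_⟩
    · rw [d2Mat_eq]; exact h
    · rw [d2Mat_eq, show 4 * q + 2 = 2 * (2 * q + 1) by ring]; exact h'
  · obtain ⟨x, hx, y, hy, hxy⟩ := hd'
    exact absurd (hcomm.1 hd x hx y hy) hxy
  · obtain ⟨x, hx, y, hy, hxy⟩ := hd
    exact absurd (hcomm.2 hd' x hx y hy) hxy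
  · left
    rcases Ty.dbl hT hT' (by rw [← hc, ← hc', hcard]) with ⟨rfl, rfl⟩ | ⟨n, hn, rfl, rfl⟩
    · refine ⟨1, le_rfl, ?_, ?_⟩
      · obtain ⟨e, he⟩ := h
        refine ⟨e.trans (Equiv.swap (0 : Fin 3) 1), fun u v => ?_⟩
        rw [he]
        have key : ∀ a b : Fin 3, tMat 2 1 3 a b = bMat 3 (Equiv.swap (0 : Fin 3) 1 a) (Equiv.swap (0 : Fin 3) 1 b) := by
          decide
        exact key (e u) (e v)
      · show Typ M' (cMat (2 + 1))
        rw [cMat_eq]; exact h'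
    · have hev : Even n := by
        by_contra hodd
        obtain ⟨N', cN', hN', hiN'⟩ := h'.exists_reindex cs' hirr'
        exact hzK (center_C (n := n) cN' (by omega) hN' hiN' hodd hK hz)
      obtain ⟨q, rfl⟩ := hev
      refine ⟨q, by omega, ?_, ?_⟩
      · rw [← two_mul] at h
        rw [bMat_eq _ (by omega)]; exact h
      · rw [← two_mul] at h'
        rw [cMat_eq]; exact h'

end Types

end BM

/-! ### Visual subgroups as closures, and the matching theorem -/

namespace BM
open CoxeterSystem

section Translate
variable {W : Type*} [Group W] {m : W → W → ℕ} {S : Set W} [Fintype S] [DecidableEq S] {cm : CoxeterMatrix S}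

/-- The visual subgroup of a subset `B` of `S`, in terms of a Coxeter system indexed by `S`. -/
lemma closure_eq (cs : CoxeterSystem cm W) (hs : ∀ s : S, cs.simple s = (s : W)) {B : Set W} (hB : B ⊆ S) :
    Subgroup.closure B = par cs (Subtype.val ⁻¹' B) := by
  rw [par]
  congr 1
  ext x
  simp only [Set.mem_image, Set.mem_preimage, hs]
  exact ⟨fun h => ⟨⟨x, hB h⟩, h, rfl⟩, fun ⟨y, hy, e⟩ => e ▸ hy⟩

lemma irr_iff (hm : ∀ s t : S, cm.M s t = m s t) {B : Set W} (hB : B ⊆ S) :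
    IsIrreducibleOn m B ↔ Irr cm (Subtype.val ⁻¹' B) := by
  constructor
  · rintro ⟨⟨b, hb⟩, h⟩
    refine ⟨⟨⟨b, hB hb⟩, hb⟩, fun u hu v hv => ?_⟩
    have key : ∀ y : W, Relation.ReflTransGen (fun x y => x ∈ B ∧ y ∈ B ∧ x ≠ y ∧ (m x y = 0 ∨ 2 < m x y)) u y →
        ∀ hy : y ∈ S, Relation.ReflTransGen (fun x y => x ∈ (Subtype.val ⁻¹' B : Set S) ∧ y ∈ (Subtype.val ⁻¹' B : Set S) ∧
          x ≠ y ∧ (cm x y = 0 ∨ 2 < cm x y)) u ⟨y, hy⟩ := by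
      intro y hy
      induction hy with
      | refl => exact fun _ => .refl
      | tail _ hbc ih =>
        intro hy
        refine (ih (hB hbc.1)).tail ⟨hbc.1, hbc.2.1, fun e => hbc.2.2.1 (congrArg Subtype.val e), ?_⟩
        rw [hm]; exact hbc.2.2.2
    exact key v (h u hu v hv) v.2
  · rintro ⟨⟨b, hb⟩, h⟩
    refine ⟨⟨b, hb⟩, fun u hu v hv => ?_⟩
    have := h ⟨u, hB hu⟩ hu ⟨v, hB hv⟩ hv
    have := Relation.ReflTransGen.lift (Subtype.val : S → W)
      (p := fun x y => x ∈ B ∧ y ∈ B ∧ x ≠ y ∧ (m x y = 0 ∨ 2 < m x y))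
      (fun a b hab => ⟨hab.1, hab.2.1, fun e => hab.2.2.1 (Subtype.ext e), by rw [← hm]; exact hab.2.2.2⟩) _ _ this
    exact this

lemma base_of_isBase (cs : CoxeterSystem cm W) (hs : ∀ s : S, cs.simple s = (s : W)) (hm : ∀ s t : S, cm.M s t = m s t)
    {B : Set W} (hB : IsBase m S B) : Base cs (Subtype.val ⁻¹' B) := by
  obtain ⟨h1, h2, h3, h4, h5⟩ := hB
  refine ⟨(irr_iff hm h1).1 h2, by rw [← closure_eq cs hs h1]; exact h3, ?_, fun C hC hi hf => ?_⟩
  · by_contra hnt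
    rw [Set.not_nontrivial_iff] at hnt
    obtain ⟨b, hb⟩ := h2.1
    have e : B = {b} := by
      refine Set.eq_singleton_iff_unique_mem.2 ⟨hb, fun x hx => ?_⟩
      exact congrArg Subtype.val (hnt (show (⟨x, h1 hx⟩ : S) ∈ _ from hx) (show (⟨b, h1 hb⟩ : S) ∈ _ from hb))
    apply h4
    rw [e, ← Subgroup.zpowers_eq_closure]
    infer_instance
  · have hsub : Subtype.val '' C ⊆ S := by rintro _ ⟨x, -, rfl⟩; exact x.2
    have hpre : (Subtype.val ⁻¹' (Subtype.val '' C) : Set S) = C := Set.preimage_image_eq _ Subtype.val_injective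
    have := h5 (Subtype.val '' C) hsub (fun b hb => ⟨⟨b, h1 hb⟩, hC hb, rfl⟩) ((irr_iff hm hsub).2 (by rwa [hpre]))
      (by rw [closure_eq cs hs hsub, hpre]; exact hf)
    rw [← this, hpre]

lemma isBase_of_base (cs : CoxeterSystem cm W) (hs : ∀ s : S, cs.simple s = (s : W)) (hm : ∀ s t : S, cm.M s t = m s t)
    {C : Set S} (hC : Base cs C) : IsBase m S (Subtype.val '' C) := by
  have hsub : Subtype.val '' C ⊆ S := by rintro _ ⟨x, -, rfl⟩; exact x.2
  have hpre : (Subtype.val ⁻¹' (Subtype.val '' C) : Set S) = C := Set.preimage_image_eq _ Subtype.val_injective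
  refine ⟨hsub, (irr_iff hm hsub).2 (by rw [hpre]; exact hC.irr), by rw [closure_eq cs hs hsub, hpre]; exact hC.fin, ?_,
    fun B' hB' hle hi hf => ?_⟩
  · rw [closure_eq cs hs hsub, hpre]
    intro hcyc
    obtain ⟨b, hb, -⟩ := hC.nt
    obtain ⟨c, hc, hbc, h⟩ := hC.irr.exists_adj hC.nt hb
    have h0 := order_ne_zero cs hC.fin hb hc
    have hcomm := IsCyclic.commGroup (α := par cs C)
    have h1 : cs.simple b * cs.simple c = cs.simple c * cs.simple b := by
      have := IsMulCommutative.is_comm.comm (⟨_, simple_mem_par cs hb⟩ : par cs C) ⟨_, simple_mem_par cs hc⟩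
      exact congrArg Subtype.val this
    have h2 : (cs.simple b * cs.simple c) ^ 2 = 1 := by
      rw [pow_two]
      nth_rewrite 2 [h1]
      simp [mul_assoc]
    have h3 := orderOf_dvd_iff_pow_eq_one.2 h2
    rw [orderOf_mul cs hbc h0] at h3
    have := Nat.le_of_dvd (by norm_num) h3
    omega
  · rw [← hC.max (Subtype.val ⁻¹' B') (fun c hc => hle ⟨c, hc, rfl⟩) ((irr_iff hm hB').1 hi)
      (by rw [← closure_eq cs hs hB']; exact hf)]
    ext x
    simp only [Set.mem_image, Set.mem_preimage]
    exact ⟨fun h => ⟨⟨x, hB' h⟩, h, rfl⟩, fun ⟨y, hy, e⟩ => e ▸ hy⟩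

lemma comm_iff_of_conj {A B : Subgroup W} {w : W}
    (h : (⁅A, A⁆ : Subgroup W).map (MulAut.conj w).toMonoidHom = ⁅B, B⁆) :
    (∀ x ∈ commutator A, ∀ y ∈ commutator A, x * y = y * x) ↔ ∀ x ∈ commutator B, ∀ y ∈ commutator B, x * y = y * x := by
  have key : ∀ H : Subgroup W, (∀ x ∈ commutator H, ∀ y ∈ commutator H, x * y = y * x) ↔
      ∀ x ∈ (⁅H, H⁆ : Subgroup W), ∀ y ∈ (⁅H, H⁆ : Subgroup W), x * y = y * x := by
    intro H
    have hle : (⁅H, H⁆ : Subgroup W) ≤ H := Subgroup.commutator_le.2 fun a ha b hb => by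
      rw [commutatorElement_def]
      exact mul_mem (mul_mem (mul_mem ha hb) (inv_mem ha)) (inv_mem hb)
    constructor
    · intro h x hx y hy
      exact congrArg Subtype.val (h ⟨x, hle hx⟩ ((mem_commutator_iff _).2 hx) ⟨y, hle hy⟩ ((mem_commutator_iff _).2 hy))
    · intro h x hx y hy
      exact Subtype.ext (h x ((mem_commutator_iff _).1 hx) y ((mem_commutator_iff _).1 hy))
  rw [key, key, ← h]
  constructor
  · rintro hc _ ⟨x, hx, rfl⟩ _ ⟨y, hy, rfl⟩
    rw [← map_mul, ← map_mul, hc x hx y hy]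
  · intro hc x hx y hy
    have := hc _ ⟨x, hx, rfl⟩ _ ⟨y, hy, rfl⟩
    rw [← map_mul, ← map_mul] at this
    exact (MulAut.conj w).injective this

/-- The Coxeter system of a visual subgroup, indexed by the generating set itself. -/
lemma exists_system (cs : CoxeterSystem cm W) (hs : ∀ s : S, cs.simple s = (s : W)) (hm : ∀ s t : S, cm.M s t = m s t)
    {B : Set W} (hB : IsBase m S B) :
    ∃ (N : CoxeterMatrix B) (_ : CoxeterSystem N (Subgroup.closure B)), (∀ u v : B, N u v = m u v) ∧ Irr N Set.univ ∧
      Nontrivial B ∧ Finite B ∧ Finite (Subgroup.closure B) := by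
  have hb := base_of_isBase cs hs hm hB
  let e : (Subtype.val ⁻¹' B : Set S) ≃ B :=
    ⟨fun x => ⟨x.1.1, x.2⟩, fun b => ⟨⟨b.1, hB.1 b.2⟩, b.2⟩, fun _ => rfl, fun _ => rfl⟩
  have hN : ∀ u v : B, (restr cm (Subtype.val ⁻¹' B)).reindex e u v = m u v := fun u v => by
    rw [CoxeterMatrix.reindex_apply]
    exact hm _ _
  have hfin : Finite B := Finite.of_injective (fun b : B => (⟨b.1, hB.1 b.2⟩ : S))
    fun a b h => Subtype.ext (congrArg (fun s : S => (s : W)) h)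
  refine ⟨_, (parSystem cs (Subtype.val ⁻¹' B) (closure_eq cs hs hB.1)).reindex e, hN, ⟨?_, fun u _ v _ => ?_⟩, ?_,
    hfin, hB.2.2.1⟩
  · obtain ⟨b, hb⟩ := hB.2.1.1
    exact ⟨⟨b, hb⟩, trivial⟩
  · have key : ∀ y : W, Relation.ReflTransGen (fun x y => x ∈ B ∧ y ∈ B ∧ x ≠ y ∧ (m x y = 0 ∨ 2 < m x y)) u y →
        ∀ hy : y ∈ B, Relation.ReflTransGen (fun x y => x ∈ Set.univ ∧ y ∈ Set.univ ∧ x ≠ y ∧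
          ((restr cm (Subtype.val ⁻¹' B)).reindex e x y = 0 ∨ 2 < (restr cm (Subtype.val ⁻¹' B)).reindex e x y)) u ⟨y, hy⟩ := by
      intro y hy
      induction hy with
      | refl => exact fun _ => .refl
      | tail _ hbc ih =>
        intro hy
        refine (ih hbc.1).tail ⟨trivial, trivial, fun e => hbc.2.2.1 (congrArg Subtype.val e), ?_⟩
        rw [hN]; exact hbc.2.2.2
    exact key v (hB.2.1.2 u u.2 v v.2) v.2
  · obtain ⟨x, hx, y, hy, hne⟩ := hb.nt
    exact ⟨⟨x.1, hx⟩, ⟨y.1, hy⟩, fun h => hne (Subtype.ext (congrArg (fun b : B => (b : W)) h))⟩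

end Translate

end BM

/-- **Basic Matching Theorem.** -/
theorem basic_matching (m m' : W → W → ℕ) (S S' : Set W)
    (hcs : IsCoxeterSystemOn m S) (hfin : S.Finite)
    (hcs' : IsCoxeterSystemOn m' S') (hfin' : S'.Finite)
    (B : Set W) (hB : IsBase m S B) :
    ∃ B' : Set W,
      (B' ⊆ S' ∧ IsIrreducibleOn m' B' ∧ Matches B B') ∧
      (∀ B'' : Set W, B'' ⊆ S' → IsIrreducibleOn m' B'' → Matches B B'' → B'' = B') ∧
      IsBase m' S' B' ∧
      (Nat.card ↥(Subgroup.closure B) = Nat.card ↥(Subgroup.closure B') →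
        (∃ e : ↥B ≃ ↥B', ∀ u v : ↥B, m' (e u : W) (e v : W) = m (u : W) (v : W)) ∧
        ∃ (φ : ↥(Subgroup.closure B) ≃* ↥(Subgroup.closure B')) (w : W),
          ∀ x : ↥(Subgroup.closure B),
            (x : W) ∈ (⁅Subgroup.closure B, Subgroup.closure B⁆ : Subgroup W) →
              (φ x : W) = w * (x : W) * w⁻¹) ∧
      (Nat.card ↥(Subgroup.closure B) < Nat.card ↥(Subgroup.closure B') →
        ((∃ q : ℕ, 1 ≤ q ∧ HasType m B (bMat (2 * q + 1)) ∧
            HasType m' B' (cMat (2 * q + 1))) ∨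
         (∃ q : ℕ, 1 ≤ q ∧ HasType m B (d2Mat (2 * q + 1)) ∧
            HasType m' B' (d2Mat (4 * q + 2)))) ∧
        ∃ (φ : ↥(Subgroup.closure B) →* ↥(Subgroup.closure B')) (w : W),
          Function.Injective φ ∧
          ∀ x : ↥(Subgroup.closure B),
            (x : W) ∈ (⁅Subgroup.closure B, Subgroup.closure B⁆ : Subgroup W) →
              (φ x : W) = w * (x : W) * w⁻¹) := by
  classical
  obtain ⟨cm, cs, hs, hm⟩ := hcs
  obtain ⟨cm', cs', hs', hm'⟩ := hcs'
  have := hfin.fintype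
  have := hfin'.fintype
  have hb := BM.base_of_isBase cs hs hm hB
  obtain ⟨C, w, hC, hmat⟩ := BM.exists_base_matched cs cs' hb
  have hB' := BM.isBase_of_base cs' hs' hm' hC
  have hpre : (Subtype.val ⁻¹' (Subtype.val '' C) : Set S') = C := Set.preimage_image_eq _ Subtype.val_injective
  have hclo : Subgroup.closure (Subtype.val '' C) = BM.par cs' C := by rw [BM.closure_eq cs' hs' hB'.1, hpre]
  rw [← BM.closure_eq cs hs hB.1, ← hclo] at hmat
  generalize hB'' : (Subtype.val '' C : Set W) = B' at *
  obtain ⟨N, cN, hN, hNi, _, _, _⟩ := BM.exists_system cs hs hm hB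
  obtain ⟨N', cN', hN', hNi', _, _, _⟩ := BM.exists_system cs' hs' hm' hB'
  have := Fintype.ofFinite B
  have := Fintype.ofFinite B'
  have hcomm := BM.comm_iff_of_conj hmat.comm
  refine ⟨B', ⟨hB'.1, hB'.2.1, w, hmat.comm⟩, ?_, hB', ?_, ?_⟩
  · rintro D hD hDi ⟨x, hx⟩
    have h1 : (⁅BM.par cs' C, BM.par cs' C⁆ : Subgroup W).map (MulAut.conj (x * w⁻¹)).toMonoidHom =
        ⁅BM.par cs' (Subtype.val ⁻¹' D), BM.par cs' (Subtype.val ⁻¹' D)⁆ := by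
      rw [← hclo, ← BM.closure_eq cs' hs' hD, ← hmat.comm, ← hx, Subgroup.map_map]
      congr 1
      ext g
      simp [mul_assoc]
    have h2 := BM.Base.unique cs' hC ((BM.irr_iff hm' hD).1 hDi) h1
    rw [← hB'', ← h2, Subtype.image_preimage_coe, Set.inter_eq_right.2 hD]
  · intro hcard
    obtain ⟨φ, hφ⟩ := hmat.eq hcard
    obtain ⟨e, he⟩ := BM.type_eq cN cN' hNi hNi' hcomm φ
    exact ⟨⟨e, fun u v => by rw [← hN', he, hN]⟩, φ, w, hφ⟩
  · intro hcard
    obtain ⟨φ, hinj, hφ, h2, hind, ζ, hζ, hζK⟩ := hmat.lt hcard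
    refine ⟨?_, φ, w, hinj, hφ⟩
    rcases BM.type_lt cN cN' hNi hNi' hcomm h2 hind hζ hζK with ⟨q, hq, ⟨e, he⟩, e', he'⟩ | ⟨q, hq, ⟨e, he⟩, e', he'⟩
    · exact Or.inl ⟨q, hq, ⟨e, fun u v => by rw [← he, hN]⟩, e', fun u v => by rw [← he', hN']⟩
    · exact Or.inr ⟨q, hq, ⟨e, fun u v => by rw [← he, hN]⟩, e', fun u v => by rw [← he', hN']⟩
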